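/- arXiv:2506.23970 — 2 statements merged into one kernel-verified Lean document; each statement's English description precedes it below -/
import Mathlib

section
/- Let n → ∞ through odd integers and let d = d(n) be even with 4 ≤ d ≤ (log n)². Let μ_d be the uniform distribution on the set of isomorphism classes of d-regular graphs on n vertices, extended by assigning probability 0 to a null outcome L_∅. Let η_d be the distribution of op(L, S), where L is a uniformly random isomorphism class of d-regular graphs on n-1 vertices (realized by a fixed labelled representative) and S is an independent uniformly random multiset of d/2 edges of L, sampled with repetition, with op(L, S) := L_∅ whenever S is not an induced d-matching of L. Then the total variation distance d_TV(μ_d, η_d) tends to 0 as n → ∞. -/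
/-- The setoid on simple graphs on `V` identifying isomorphic graphs. -/
def isoSetoid (V : Type*) : Setoid (SimpleGraph V) where
  r G H := Nonempty (G ≃g H)
  iseqv := ⟨fun _ => ⟨SimpleGraph.Iso.refl⟩, fun h => ⟨h.some.symm⟩,
    fun h₁ h₂ => ⟨h₁.some.trans h₂.some⟩⟩

/-- Isomorphism classes (unlabelled copies) of simple graphs on `n` vertices. -/
def GraphClass (n : ℕ) : Type := Quotient (isoSetoid (Fin n))

/-- The isomorphism class `q` is a class of `d`-regular graphs. -/
def IsRegClass {n : ℕ} (q : GraphClass n) (d : ℕ) : Prop :=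
  ∃ G : SimpleGraph (Fin n), Quotient.mk (isoSetoid (Fin n)) G = q ∧
    ∀ v, Nat.card (G.neighborSet v) = d

/-- The entries of the tuple `e` of (unordered) pairs form an induced matching of `L`:
they are edges of `L`, they are pairwise vertex-disjoint (in particular pairwise
distinct), and the subgraph of `L` induced by the vertices they span consists exactly of
these edges. -/
def FormsInducedMatching {V : Type*} {t : ℕ} (L : SimpleGraph V)
    (e : Fin t → Sym2 V) : Prop :=
  (∀ i, e i ∈ L.edgeSet) ∧
  (∀ i j, i ≠ j → ∀ x, x ∈ e i → x ∉ e j) ∧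
  (∀ u v : V, (∃ i, u ∈ e i) → (∃ j, v ∈ e j) → L.Adj u v → ∃ i, e i = s(u, v))

/-- The operation `op` on a tuple `e` of edges of a graph `L` on `n-1` vertices
forming an induced matching: delete the entries of `e` from `L`, add the new vertex
`⟨n-1⟩`, and join it to every vertex covered by an entry of `e`.  Vertices of `L` are
embedded into `Fin n` via `Fin.castLE`. -/
noncomputable def opGraphE (n : ℕ) {t : ℕ} (L : SimpleGraph (Fin (n - 1)))
    (e : Fin t → Sym2 (Fin (n - 1))) : SimpleGraph (Fin n) :=
  if h : 1 ≤ n then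
    SimpleGraph.fromEdgeSet
      ((Sym2.map (Fin.castLE (Nat.sub_le n 1))) '' (L.edgeSet \ Set.range e) ∪
       {f : Sym2 (Fin n) | ∃ x : Fin (n - 1), (∃ i, x ∈ e i) ∧
          f = s(Fin.castLE (Nat.sub_le n 1) x, (⟨n - 1, by omega⟩ : Fin n))})
  else ⊥

open Classical in
/-- The outcome of the operation `op` applied to `L` and the sampled tuple of edges `e`:
the isomorphism class of `op(L,e)` if the entries of `e` form an induced matching of
`L`, and the null outcome `none` (denoted `L_∅`) otherwise. -/
noncomputable def opVal (n : ℕ) {t : ℕ} (L : SimpleGraph (Fin (n - 1)))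
    (e : Fin t → Sym2 (Fin (n - 1))) : Option (GraphClass n) :=
  if FormsInducedMatching L e then
    some (Quotient.mk (isoSetoid (Fin n)) (opGraphE n L e))
  else none

open Classical in
/-- The uniform distribution `μ_d` on isomorphism classes of `d`-regular graphs on `n`
vertices, extended by probability `0` on the null outcome `none = L_∅`. -/
noncomputable def muD (n dd : ℕ) : Option (GraphClass n) → ℝ := fun x =>
  match x with
  | none => 0
  | some q =>
      if IsRegClass q dd then (Nat.card {q' : GraphClass n // IsRegClass q' dd} : ℝ)⁻¹
      else 0

/-- The distribution `η_d` of `op(L,S)`, where `L` is a uniformly random isomorphism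
class of `d`-regular graphs on `n-1` vertices (realized by the fixed representative
`rep`) and `S` is an independent uniformly random multiset of `d/2` edges of `L` sampled
with repetition (modelled by a uniformly random ordered `(d/2)`-tuple of edges). -/
noncomputable def etaD (n dd : ℕ)
    (rep : {q : GraphClass (n - 1) // IsRegClass q dd} → SimpleGraph (Fin (n - 1))) :
    Option (GraphClass n) → ℝ := fun x =>
  (Nat.card {q : GraphClass (n - 1) // IsRegClass q dd} : ℝ)⁻¹ *
  ∑ᶠ q : {q : GraphClass (n - 1) // IsRegClass q dd},
    (Nat.card {e : Fin (dd / 2) → Sym2 (Fin (n - 1)) //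
        (∀ i, e i ∈ (rep q).edgeSet) ∧ opVal n (rep q) e = x} : ℝ) /
    (Nat.card (rep q).edgeSet : ℝ) ^ (dd / 2)

/-!
Pass to labelled graphs, where `op` is almost a fixed-ratio correspondence: a `2t`-regular graph
`G` on `m + 1` vertices has the form `op(L, e)` for at most `κ` pairs `(L, e)`, where `κ` is the
number of ordered perfect matchings of `2t` points, and for exactly `κ` pairs when the
neighbourhood of the last vertex is independent. Conversely almost all `t`-tuples of edges of a
sparse regular graph form induced matchings.

Edge switchings show that `H` is contained in a random `d`-regular graph with probability at most
`(36 d / n) ^ |H|`. Applied to triangles, this makes the neighbourhood of the last vertex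
independent with high probability. Applied to the edge sets invariant under a permutation `σ`, with
a weighted union bound, it shows that the expected number of nontrivial automorphisms tends to `0`;
by Burnside's lemma, uniform isomorphism classes and uniform labelled graphs then almost agree.

Together these give a measure of total mass `1 - o(1)` lying below both distributions.
-/

section

open Finset
open scoped Classical

section Switching

variable {V : Type*} [Fintype V] {d : ℕ}

/-- The labelled `d`-regular graphs on the vertex set `V`. -/
noncomputable def regularGraphs (V : Type*) [Fintype V] (d : ℕ) : Finset (SimpleGraph V) :=
  {G | G.IsRegularOfDegree d}

/-- The labelled `d`-regular graphs on `V` that have all pairs in `H` as edges. -/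
noncomputable def regularGraphsContaining (d : ℕ) (H : Finset (Sym2 V)) :
    Finset (SimpleGraph V) :=
  {G ∈ regularGraphs V d | ∀ e ∈ H, e ∈ G.edgeSet}

theorem mem_regularGraphs {G : SimpleGraph V} [G.LocallyFinite] :
    G ∈ regularGraphs V d ↔ G.IsRegularOfDegree d := by
  rw [regularGraphs, mem_filter_univ]
  congr!

theorem mem_regularGraphsContaining {G : SimpleGraph V} {H : Finset (Sym2 V)} :
    G ∈ regularGraphsContaining d H ↔ G ∈ regularGraphs V d ∧ ∀ e ∈ H, e ∈ G.edgeSet := by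
  simp only [regularGraphsContaining, mem_filter]

theorem two_mul_card_edgeSet {G : SimpleGraph V} (hG : G ∈ regularGraphs V d) :
    2 * Nat.card G.edgeSet = Fintype.card V * d := by
  have degree_eq := mem_regularGraphs.1 hG
  rw [Nat.card_eq_fintype_card, ← SimpleGraph.edgeFinset_card,
    ← G.sum_degrees_eq_twice_card_edges, sum_congr rfl fun v _ => degree_eq v]
  simp

theorem card_filter_fst_mem_adj {G : SimpleGraph V} (hG : G ∈ regularGraphs V d)
    (S : Finset V) : #{p : V × V | p.1 ∈ S ∧ G.Adj p.1 p.2} = #S * d := by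
  have fiber : ({p : V × V | p.1 ∈ S ∧ G.Adj p.1 p.2} : Finset (V × V))
      = S.biUnion fun x => {x} ×ˢ G.neighborFinset x := by
    ext ⟨x, y⟩
    simp
  rw [fiber, card_biUnion, sum_congr rfl fun x _ => ?_, sum_const, smul_eq_mul]
  · rw [card_product, card_singleton, one_mul]
    exact mem_regularGraphs.1 hG x
  · intro x _ x' _ hxx'
    exact disjoint_product.2 (Or.inl (disjoint_singleton.2 hxx'))

theorem card_filter_snd_mem_adj {G : SimpleGraph V} (hG : G ∈ regularGraphs V d)
    (S : Finset V) : #{p : V × V | p.2 ∈ S ∧ G.Adj p.1 p.2} = #S * d := by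
  rw [← card_filter_fst_mem_adj hG S]
  refine card_equiv (Equiv.prodComm V V) fun p => ?_
  simp [G.adj_comm]

theorem card_filter_sym2Mk_mem_le (F : Finset (Sym2 V)) :
    #{p : V × V | s(p.1, p.2) ∈ F} ≤ 2 * #F := by
  refine card_le_mul_card_image_of_maps_to (f := fun p : V × V => s(p.1, p.2))
    (fun p hp => (mem_filter.1 hp).2) 2 fun e _ => ?_
  induction e with | _ x y
  refine (card_le_card (t := {(x, y), (y, x)}) fun p hp => ?_).trans card_le_two
  simpa [Prod.ext_iff] using (mem_filter.1 hp).2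

/-- The switching of `G` that replaces the edges `uv` and `xy` by `ux` and `vy`. -/
def switchEdges {V : Type*} (G : SimpleGraph V) (u v x y : V) : SimpleGraph V :=
  SimpleGraph.fromEdgeSet ((G.edgeSet \ {s(u, v), s(x, y)}) ∪ {s(u, x), s(v, y)})

/-- The conditions under which switching `uv, xy` into `ux, vy` preserves all degrees. -/
structure Switchable {V : Type*} (G : SimpleGraph V) (u v x y : V) : Prop where
  adj_uv : G.Adj u v
  adj_xy : G.Adj x y
  ne_ux : u ≠ x
  ne_vy : v ≠ y
  not_adj_ux : ¬ G.Adj u x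
  not_adj_vy : ¬ G.Adj v y

theorem switchEdges_adj {V : Type*} {G : SimpleGraph V} {u v x y a b : V} :
    (switchEdges G u v x y).Adj a b ↔
      ((G.Adj a b ∧ s(a, b) ≠ s(u, v) ∧ s(a, b) ≠ s(x, y)) ∨
        s(a, b) = s(u, x) ∨ s(a, b) = s(v, y)) ∧ a ≠ b := by
  simp only [switchEdges, SimpleGraph.fromEdgeSet_adj, Set.mem_union, Set.mem_sdiff,
    SimpleGraph.mem_edgeSet, Set.mem_insert_iff, Set.mem_singleton_iff, not_or]

theorem switchEdges_swap {V : Type*} (G : SimpleGraph V) (u v x y : V) :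
    switchEdges G u v x y = switchEdges G v u y x := by
  simp only [switchEdges, Sym2.eq_swap (a := u) (b := v), Sym2.eq_swap (a := x) (b := y),
    Set.pair_comm s(u, x)]

theorem switchEdges_comm {V : Type*} (G : SimpleGraph V) (u v x y : V) :
    switchEdges G u v x y = switchEdges G x y u v := by
  simp only [switchEdges, Sym2.eq_swap (a := u) (b := x), Sym2.eq_swap (a := v) (b := y),
    Set.pair_comm s(u, v)]

theorem Switchable.swap {V : Type*} {G : SimpleGraph V} {u v x y : V}
    (h : Switchable G u v x y) : Switchable G v u y x :=
  ⟨h.adj_uv.symm, h.adj_xy.symm, h.ne_vy, h.ne_ux, h.not_adj_vy, h.not_adj_ux⟩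

theorem Switchable.comm {V : Type*} {G : SimpleGraph V} {u v x y : V}
    (h : Switchable G u v x y) : Switchable G x y u v :=
  ⟨h.adj_xy, h.adj_uv, h.ne_ux.symm, h.ne_vy.symm, fun hxu => h.not_adj_ux hxu.symm,
    fun hyv => h.not_adj_vy hyv.symm⟩

theorem degree_switchEdges_left {G : SimpleGraph V} {u v x y : V}
    (h : Switchable G u v x y) : (switchEdges G u v x y).degree u = G.degree u := by
  have neighbors : (switchEdges G u v x y).neighborFinset u
      = insert x ((G.neighborFinset u).erase v) := by
    obtain ⟨adj_uv, -, ne_ux, -, -, not_adj_vy⟩ := h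
    ext b
    simp only [SimpleGraph.mem_neighborFinset, switchEdges_adj, mem_insert, mem_erase,
      Sym2.eq_iff]
    grind [SimpleGraph.Adj.symm, SimpleGraph.Adj.ne]
  rw [← SimpleGraph.card_neighborFinset_eq_degree, neighbors,
    card_insert_of_notMem (by simp [h.not_adj_ux]), card_erase_add_one (by simp [h.adj_uv]),
    SimpleGraph.card_neighborFinset_eq_degree]

theorem degree_switchEdges {G : SimpleGraph V} {u v x y : V} (h : Switchable G u v x y)
    (a : V) : (switchEdges G u v x y).degree a = G.degree a := by
  by_cases hau : a = u
  · rw [hau, degree_switchEdges_left h]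
  by_cases hav : a = v
  · rw [hav, switchEdges_swap, degree_switchEdges_left h.swap]
  by_cases hax : a = x
  · rw [hax, switchEdges_comm, degree_switchEdges_left h.comm]
  by_cases hay : a = y
  · rw [hay, switchEdges_comm, switchEdges_swap, degree_switchEdges_left h.comm.swap]
  rw [← SimpleGraph.card_neighborFinset_eq_degree, ← SimpleGraph.card_neighborFinset_eq_degree]
  congr 1
  ext b
  simp only [SimpleGraph.mem_neighborFinset, switchEdges_adj, Sym2.eq_iff]
  grind [SimpleGraph.Adj.ne]

theorem switchEdges_mem_regularGraphs {G : SimpleGraph V} (hG : G ∈ regularGraphs V d)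
    {u v x y : V} (h : Switchable G u v x y) : switchEdges G u v x y ∈ regularGraphs V d :=
  mem_regularGraphs.2 fun a => (degree_switchEdges h a).trans (mem_regularGraphs.1 hG a)

theorem switchEdges_injOn {V : Type*} (u v x y : V) :
    Set.InjOn (fun G : SimpleGraph V => switchEdges G u v x y) {G | Switchable G u v x y} := by
  rintro G ⟨adj_uv, adj_xy, ne_ux, -, not_adj_ux, not_adj_vy⟩
    G' ⟨adj_uv', adj_xy', -, -, not_adj_ux', not_adj_vy'⟩ heq
  ext a b
  have adj_iff := congrArg (fun K => SimpleGraph.Adj K a b) heq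
  simp only [switchEdges_adj, Sym2.eq_iff, eq_iff_iff] at adj_iff
  have := G.adj_comm
  have := G'.adj_comm
  by_cases hab : a = b
  · simp [hab]
  grind

/-- The oriented edges `xy` of `G` along which `uv` can be switched without destroying any
pair in `F`. -/
noncomputable def switchingPairs (u v : V) (F : Finset (Sym2 V)) (G : SimpleGraph V) :
    Finset (V × V) :=
  {p | Switchable G u v p.1 p.2 ∧ s(p.1, p.2) ∉ F}

theorem le_card_switchingPairs {G : SimpleGraph V} (hG : G ∈ regularGraphs V d) {u v : V}
    (adj_uv : G.Adj u v) (F : Finset (Sym2 V)) :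
    Fintype.card V * d - (2 * #F + 2 * (d * (d + 1))) ≤ #(switchingPairs u v F G) := by
  let closedNbhd (a : V) : Finset V := insert a (G.neighborFinset a)
  have card_closedNbhd (a : V) : #(closedNbhd a) = d + 1 := by
    rw [card_insert_of_notMem (by simp), SimpleGraph.card_neighborFinset_eq_degree]
    exact congrArg (· + 1) (mem_regularGraphs.1 hG a)
  let blocked : Finset (V × V) := ({p | s(p.1, p.2) ∈ F} : Finset (V × V)) ∪
    (({p | p.1 ∈ closedNbhd u ∧ G.Adj p.1 p.2} : Finset (V × V)) ∪
      ({p | p.2 ∈ closedNbhd v ∧ G.Adj p.1 p.2} : Finset (V × V)))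
  have card_blocked : #blocked ≤ 2 * #F + 2 * (d * (d + 1)) := by
    have inF := card_filter_sym2Mk_mem_le F
    have nearU := card_filter_fst_mem_adj hG (closedNbhd u)
    have nearV := card_filter_snd_mem_adj hG (closedNbhd v)
    rw [card_closedNbhd, mul_comm] at nearU nearV
    refine (card_union_le _ _).trans (add_le_add inF ((card_union_le _ _).trans ?_))
    rw [nearU, nearV, two_mul]
  have cover : ({p | p.1 ∈ (univ : Finset V) ∧ G.Adj p.1 p.2} : Finset (V × V))
      ⊆ switchingPairs u v F G ∪ blocked := by
    rintro ⟨x, y⟩ hxy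
    simp only [switchingPairs, blocked, closedNbhd, mem_filter, mem_univ, mem_union, mem_insert,
      SimpleGraph.mem_neighborFinset, true_and] at hxy ⊢
    by_contra! hcon
    obtain ⟨hswitch, hF, hu, hv⟩ := hcon
    refine hF (hswitch ⟨adj_uv, hxy, ?_, ?_, ?_, ?_⟩) <;> grind
  have card_cover := (card_le_card cover).trans (card_union_le _ _)
  rw [card_filter_fst_mem_adj hG, card_univ] at card_cover
  omega

theorem switchEdges_mem_regularGraphsContaining {H : Finset (Sym2 V)} {u v x y : V}
    (huv : s(u, v) ∉ H) {G : SimpleGraph V}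
    (hG : G ∈ regularGraphsContaining d (insert s(u, v) H))
    (hxy : (x, y) ∈ switchingPairs u v (insert s(u, v) H) G) :
    switchEdges G u v x y ∈ regularGraphsContaining d H := by
  obtain ⟨hreg, hcont⟩ := mem_regularGraphsContaining.1 hG
  obtain ⟨hswitch, hxyH⟩ := (mem_filter.1 hxy).2
  refine mem_regularGraphsContaining.2 ⟨switchEdges_mem_regularGraphs hreg hswitch, ?_⟩
  intro e he
  have heG := hcont e (mem_insert_of_mem he)
  induction e with | _ a b
  refine switchEdges_adj.2 ⟨Or.inl ⟨heG, ?_, ?_⟩, heG.ne⟩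
  · exact fun hab => huv (hab ▸ he)
  · exact fun hab => hxyH (mem_insert_of_mem (hab ▸ he))

theorem card_regularGraphsContaining_insert_mul_le (H : Finset (Sym2 V)) (u v : V)
    (huv : s(u, v) ∉ H) :
    #(regularGraphsContaining d (insert s(u, v) H)) *
        (Fintype.card V * d - (2 * (#H + 1) + 2 * (d * (d + 1))))
      ≤ #(regularGraphsContaining d H) * d ^ 2 := by
  let forward := (regularGraphsContaining d (insert s(u, v) H)).sigma
    (switchingPairs u v (insert s(u, v) H))
  let backward := (regularGraphsContaining d H).sigma
    fun G => G.neighborFinset u ×ˢ G.neighborFinset v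
  calc _ ≤ #forward := by
        rw [card_sigma, ← smul_eq_mul]
        refine card_nsmul_le_sum _ _ _ fun G hG => ?_
        obtain ⟨hreg, hcont⟩ := mem_regularGraphsContaining.1 hG
        rw [← card_insert_of_notMem huv]
        exact le_card_switchingPairs hreg (hcont _ (mem_insert_self _ _)) _
    _ ≤ #backward := by
        refine card_le_card_of_injOn (fun z => ⟨switchEdges z.1 u v z.2.1 z.2.2, z.2⟩) ?_ ?_
        · rintro ⟨G, x, y⟩ hz
          obtain ⟨hG, hxy⟩ := mem_sigma.1 hz
          have hswitch := (mem_filter.1 hxy).2.1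
          simp only [backward, coe_sigma, Set.mem_sigma_iff, mem_coe, mem_product,
            SimpleGraph.mem_neighborFinset, switchEdges_adj]
          exact ⟨switchEdges_mem_regularGraphsContaining huv hG hxy,
            ⟨Or.inr (Or.inl trivial), hswitch.ne_ux⟩, ⟨Or.inr (Or.inr trivial), hswitch.ne_vy⟩⟩
        · rintro ⟨G, x, y⟩ hz ⟨G', x', y'⟩ hz' heq
          simp only [Sigma.mk.injEq, heq_eq_eq, Prod.mk.injEq] at heq
          obtain ⟨hswitched, rfl, rfl⟩ := heq
          congr 1
          exact switchEdges_injOn u v x y (mem_filter.1 (mem_sigma.1 hz).2).2.1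
            (mem_filter.1 (mem_sigma.1 hz').2).2.1 hswitched
    _ = #(regularGraphsContaining d H) * d ^ 2 := by
        refine (card_sigma _ _).trans (sum_const_nat fun G hG => ?_)
        have degree_eq := mem_regularGraphs.1 (mem_regularGraphsContaining.1 hG).1
        rw [card_product, sq]
        exact congrArg₂ (· * ·) (degree_eq u) (degree_eq v)

theorem card_regularGraphsContaining_insert_le (d : ℕ) (e : Sym2 V) (H : Finset (Sym2 V)) :
    #(regularGraphsContaining d (insert e H)) ≤ #(regularGraphsContaining d H) := by
  refine card_le_card fun G hG => ?_
  obtain ⟨hreg, hcont⟩ := mem_regularGraphsContaining.1 hG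
  exact mem_regularGraphsContaining.2 ⟨hreg, fun e' he' => hcont e' (mem_insert_of_mem he')⟩

theorem card_regularGraphsContaining_insert_mul_sub_le {M : ℕ}
    (hM : 2 * M = Fintype.card V * d) {e : Sym2 V} {H : Finset (Sym2 V)}
    (he : e ∉ H) :
    #(regularGraphsContaining d (insert e H)) * (M - #H)
      ≤ 6 * d ^ 2 * #(regularGraphsContaining d H) := by
  induction e with | _ u v
  by_cases many : 2 + 2 * (d * (d + 1)) ≤ M - #H
  · calc #(regularGraphsContaining d (insert s(u, v) H)) * (M - #H)
        ≤ #(regularGraphsContaining d (insert s(u, v) H)) *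
            (Fintype.card V * d - (2 * (#H + 1) + 2 * (d * (d + 1)))) :=
          Nat.mul_le_mul_left _ (by omega)
      _ ≤ #(regularGraphsContaining d H) * d ^ 2 :=
          card_regularGraphsContaining_insert_mul_le H u v he
      _ ≤ 6 * d ^ 2 * #(regularGraphsContaining d H) := by nlinarith
  · have few : M - #H ≤ 6 * d ^ 2 := by
      rcases d.eq_zero_or_pos with rfl | hd
      · omega
      · nlinarith
    calc #(regularGraphsContaining d (insert s(u, v) H)) * (M - #H)
        ≤ #(regularGraphsContaining d H) * (6 * d ^ 2) :=
          Nat.mul_le_mul (card_regularGraphsContaining_insert_le d _ H) few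
      _ = 6 * d ^ 2 * #(regularGraphsContaining d H) := mul_comm _ _

theorem card_regularGraphsContaining_mul_descFactorial_le {M : ℕ}
    (hM : 2 * M = Fintype.card V * d) (H : Finset (Sym2 V)) :
    #(regularGraphsContaining d H) * M.descFactorial #H
      ≤ (6 * d ^ 2) ^ #H * #(regularGraphs V d) := by
  induction H using Finset.induction_on with
  | empty => simp [regularGraphsContaining]
  | insert e H he ih =>
    rw [card_insert_of_notMem he, Nat.descFactorial_succ]
    calc #(regularGraphsContaining d (insert e H)) * ((M - #H) * M.descFactorial #H)
        = (#(regularGraphsContaining d (insert e H)) * (M - #H)) * M.descFactorial #H := by ring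
      _ ≤ (6 * d ^ 2 * #(regularGraphsContaining d H)) * M.descFactorial #H := by
          gcongr ?_ * _
          exact card_regularGraphsContaining_insert_mul_sub_le hM he
      _ = 6 * d ^ 2 * (#(regularGraphsContaining d H) * M.descFactorial #H) := by ring
      _ ≤ 6 * d ^ 2 * ((6 * d ^ 2) ^ #H * #(regularGraphs V d)) := by gcongr
      _ = (6 * d ^ 2) ^ (#H + 1) * #(regularGraphs V d) := by ring

theorem succ_pow_le_three_mul_pow {e K : ℕ} (he : e ≤ K) : (K + 1) ^ e ≤ 3 * K ^ e := by
  rcases K.eq_zero_or_pos with rfl | hK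
  · simp [Nat.le_zero.1 he]
  have hK' : (0 : ℝ) < K := by exact_mod_cast hK
  have one_add_inv_pow : (1 + 1 / (K : ℝ)) ^ e ≤ 3 :=
    calc (1 + 1 / (K : ℝ)) ^ e ≤ Real.exp (1 / K) ^ e := by
          gcongr
          linarith [Real.add_one_le_exp (1 / (K : ℝ))]
      _ = Real.exp (e / K) := by rw [← Real.exp_nat_mul, mul_one_div]
      _ ≤ Real.exp 1 := Real.exp_le_exp.2 ((div_le_one hK').2 (by exact_mod_cast he))
      _ ≤ 3 := by linarith [Real.exp_one_lt_d9]
  have real_bound : ((K : ℝ) + 1) ^ e ≤ 3 * (K : ℝ) ^ e :=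
    calc ((K : ℝ) + 1) ^ e = (1 + 1 / (K : ℝ)) ^ e * (K : ℝ) ^ e := by
          rw [← mul_pow]
          field_simp
      _ ≤ 3 * (K : ℝ) ^ e := by gcongr
  exact_mod_cast real_bound

theorem pow_le_three_pow_mul_descFactorial {e M : ℕ} (he : e ≤ M) :
    M ^ e ≤ 3 ^ e * M.descFactorial e := by
  induction e generalizing M with
  | zero => simp
  | succ e ih =>
    obtain ⟨K, rfl⟩ : ∃ K, M = K + 1 := ⟨M - 1, by omega⟩
    have heK : e ≤ K := by omega
    calc (K + 1) ^ (e + 1) = (K + 1) * (K + 1) ^ e := by ring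
      _ ≤ (K + 1) * (3 * (3 ^ e * K.descFactorial e)) := by
          gcongr
          exact (succ_pow_le_three_mul_pow heK).trans (Nat.mul_le_mul_left 3 (ih heK))
      _ = 3 ^ (e + 1) * (K + 1).descFactorial (e + 1) := by
          rw [Nat.succ_descFactorial_succ]
          ring

theorem regularGraphsContaining_eq_empty {M : ℕ} (hM : 2 * M = Fintype.card V * d)
    {H : Finset (Sym2 V)} (hH : M < #H) : regularGraphsContaining d H = ∅ := by
  refine eq_empty_of_forall_notMem fun G hG => ?_
  obtain ⟨hreg, hcont⟩ := mem_regularGraphsContaining.1 hG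
  have card_le : #H ≤ #G.edgeFinset :=
    card_le_card fun e he => SimpleGraph.mem_edgeFinset.2 (hcont e he)
  have := two_mul_card_edgeSet hreg
  rw [Nat.card_eq_fintype_card, ← SimpleGraph.edgeFinset_card] at this
  omega

theorem card_regularGraphsContaining_mul_pow_le {M : ℕ} (hM : 2 * M = Fintype.card V * d)
    (H : Finset (Sym2 V)) :
    #(regularGraphsContaining d H) * M ^ #H ≤ (18 * d ^ 2) ^ #H * #(regularGraphs V d) := by
  rcases lt_or_ge M #H with hH | hH
  · simp [regularGraphsContaining_eq_empty hM hH]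
  calc #(regularGraphsContaining d H) * M ^ #H
      ≤ #(regularGraphsContaining d H) * (3 ^ #H * M.descFactorial #H) := by
        gcongr
        exact pow_le_three_pow_mul_descFactorial hH
    _ = 3 ^ #H * (#(regularGraphsContaining d H) * M.descFactorial #H) := by ring
    _ ≤ 3 ^ #H * ((6 * d ^ 2) ^ #H * #(regularGraphs V d)) :=
        Nat.mul_le_mul_left _ (card_regularGraphsContaining_mul_descFactorial_le hM H)
    _ = (18 * d ^ 2) ^ #H * #(regularGraphs V d) := by
        rw [← mul_assoc, ← mul_pow]
        ring

theorem card_regularGraphsContaining_le (d : ℕ) (H : Finset (Sym2 V)) :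
    (#(regularGraphsContaining d H) : ℝ)
      ≤ #(regularGraphs V d) * (36 * d / Fintype.card V) ^ #H := by
  rcases (regularGraphsContaining d H).eq_empty_or_nonempty with hempty | ⟨G, hG⟩
  · rw [hempty, card_empty, Nat.cast_zero]
    positivity
  rcases H.eq_empty_or_nonempty with rfl | hH
  · simp [regularGraphsContaining]
  set M := Nat.card G.edgeSet
  have hM : 2 * M = Fintype.card V * d :=
    two_mul_card_edgeSet (mem_regularGraphsContaining.1 hG).1
  have M_pos : 0 < M := by
    by_contra! hM0
    exact notMem_empty G
      (regularGraphsContaining_eq_empty hM (hM0.trans_lt (card_pos.2 hH)) ▸ hG)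
  have ratio_eq : 36 * (d : ℝ) / Fintype.card V = 18 * (d : ℝ) ^ 2 / M := by
    have hM' : 2 * (M : ℝ) = Fintype.card V * d := by exact_mod_cast hM
    have hV : (Fintype.card V : ℝ) ≠ 0 := fun h0 => by
      rw [h0, zero_mul] at hM'
      exact M_pos.ne' (by exact_mod_cast (by linarith : (M : ℝ) = 0))
    rw [div_eq_div_iff hV (by exact_mod_cast M_pos.ne')]
    linear_combination 18 * (d : ℝ) * hM'
  rw [ratio_eq, div_pow, ← mul_div_assoc, le_div_iff₀ (by positivity),
    mul_comm (#(regularGraphs V d) : ℝ)]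
  exact_mod_cast card_regularGraphsContaining_mul_pow_le hM H

end Switching

section InvariantSubsets

variable {Ω : Type*} [Fintype Ω] {τ : Equiv.Perm Ω} {F : Finset Ω} {a : Ω → ℝ} {e : Ω}

/-- The subset `H` is a union of orbits of the permutation `τ`. -/
def IsInvariantUnder {Ω : Type*} (τ : Equiv.Perm Ω) (H : Finset Ω) : Prop :=
  ∀ e, τ e ∈ H ↔ e ∈ H

/-- The subsets of `F` that are unions of orbits of `τ`. -/
noncomputable def invariantSubsets {Ω : Type*} (τ : Equiv.Perm Ω) (F : Finset Ω) :
    Finset (Finset Ω) :=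
  {H ∈ F.powerset | IsInvariantUnder τ H}

/-- The orbit of `e` under the permutation `τ`. -/
noncomputable def cycleThrough (τ : Equiv.Perm Ω) (e : Ω) : Finset Ω :=
  {z | τ.SameCycle e z}

/-- An upper bound for the product of the `τ`-invariant weights `a ≤ 1` over the orbit of `e`:
the weight `a e` to the power `min 3 ℓ`, where `ℓ` is the length of the orbit. -/
noncomputable def orbitWeight {Ω : Type*} (τ : Equiv.Perm Ω) (a : Ω → ℝ) (e : Ω) : ℝ :=
  if τ e = e then a e else if τ (τ e) = e then a e ^ 2 else a e ^ 3

theorem mem_invariantSubsets {Ω : Type*} {τ : Equiv.Perm Ω} {F H : Finset Ω} :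
    H ∈ invariantSubsets τ F ↔ H ⊆ F ∧ IsInvariantUnder τ H := by
  rw [invariantSubsets, mem_filter, mem_powerset]

theorem mem_cycleThrough {z : Ω} : z ∈ cycleThrough τ e ↔ τ.SameCycle e z := by
  simp [cycleThrough]

theorem iff_of_sameCycle {α : Type*} {π : Equiv.Perm α} {p : α → Prop}
    (hp : ∀ e, p (π e) ↔ p e) {x y : α} (hxy : π.SameCycle x y) : p x ↔ p y := by
  obtain ⟨n, rfl⟩ := hxy
  induction n with
  | zero => simp
  | succ n ih => rw [ih, add_comm, zpow_one_add, Equiv.Perm.mul_apply, hp]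
  | pred n ih => rw [ih, ← hp ((π ^ (-(n : ℤ) - 1)) x), ← Equiv.Perm.mul_apply, ← zpow_one_add,
      add_sub_cancel]

theorem self_mem_cycleThrough (τ : Equiv.Perm Ω) (e : Ω) : e ∈ cycleThrough τ e :=
  mem_cycleThrough.2 (Equiv.Perm.SameCycle.refl τ e)

theorem isInvariantUnder_cycleThrough (τ : Equiv.Perm Ω) (e : Ω) :
    IsInvariantUnder τ (cycleThrough τ e) := fun z => by
  rw [mem_cycleThrough, mem_cycleThrough, Equiv.Perm.sameCycle_apply_right]

theorem cycleThrough_subset {H : Finset Ω} (hH : IsInvariantUnder τ H) (he : e ∈ H) :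
    cycleThrough τ e ⊆ H := fun _ hz => (iff_of_sameCycle hH (mem_cycleThrough.1 hz)).1 he

theorem disjoint_cycleThrough {H : Finset Ω} (hH : IsInvariantUnder τ H) (he : e ∉ H) :
    Disjoint H (cycleThrough τ e) :=
  disjoint_right.2 fun _ hz hzH => he ((iff_of_sameCycle hH (mem_cycleThrough.1 hz)).2 hzH)

theorem IsInvariantUnder.sdiff {Ω : Type*} {τ : Equiv.Perm Ω} {H K : Finset Ω}
    (hH : IsInvariantUnder τ H) (hK : IsInvariantUnder τ K) :
    IsInvariantUnder τ (H \ K) := fun e => by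
  rw [mem_sdiff, mem_sdiff, hH e, hK e]

theorem orbitWeight_nonneg {Ω : Type*} {τ : Equiv.Perm Ω} {a : Ω → ℝ} {e : Ω}
    (ha : 0 ≤ a e) : 0 ≤ orbitWeight τ a e := by
  unfold orbitWeight
  split_ifs <;> positivity

theorem prod_cycleThrough_le_orbitWeight (a_nonneg : 0 ≤ a e) (a_le_one : a e ≤ 1)
    (a_inv : ∀ e, a (τ e) = a e) : ∏ z ∈ cycleThrough τ e, a z ≤ orbitWeight τ a e := by
  have prod_eq : ∏ z ∈ cycleThrough τ e, a z = a e ^ #(cycleThrough τ e) := by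
    refine prod_eq_pow_card fun z hz => ?_
    exact (iff_of_sameCycle (p := fun y => a y = a e) (fun y => by rw [a_inv])
      (mem_cycleThrough.1 hz)).1 rfl
  have pow_le {T : Finset Ω} (hT : T ⊆ cycleThrough τ e) :
      a e ^ #(cycleThrough τ e) ≤ a e ^ #T :=
    pow_le_pow_of_le_one a_nonneg a_le_one (card_le_card hT)
  have mem₀ := self_mem_cycleThrough τ e
  have mem₁ := (isInvariantUnder_cycleThrough τ e e).2 mem₀
  have mem₂ := (isInvariantUnder_cycleThrough τ e (τ e)).2 mem₁
  rw [prod_eq, orbitWeight]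
  split_ifs with fixed double
  · simpa using pow_le (singleton_subset_iff.2 mem₀)
  · simpa [card_pair (Ne.symm fixed)] using
      pow_le (T := {e, τ e}) (by simp [insert_subset_iff, mem₀, mem₁])
  · have card_eq : #({e, τ e, τ (τ e)} : Finset Ω) = 3 :=
      card_eq_three.2 ⟨e, τ e, τ (τ e), Ne.symm fixed, Ne.symm double,
        fun h => fixed (τ.injective h).symm, rfl⟩
    exact card_eq ▸ pow_le (by simp [insert_subset_iff, mem₀, mem₁, mem₂])

theorem sum_invariantSubsets_mem_le (a_nonneg : ∀ e, 0 ≤ a e) :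
    ∑ H ∈ invariantSubsets τ F with e ∈ H, ∏ z ∈ H, a z
      ≤ (∏ z ∈ cycleThrough τ e, a z) *
        ∑ H ∈ invariantSubsets τ (F \ cycleThrough τ e), ∏ z ∈ H, a z := by
  have contains {H : Finset Ω} (hH : H ∈ {H ∈ invariantSubsets τ F | e ∈ H}) :
      cycleThrough τ e ⊆ H :=
    cycleThrough_subset (mem_invariantSubsets.1 (mem_filter.1 hH).1).2 (mem_filter.1 hH).2
  have factor : ∑ H ∈ invariantSubsets τ F with e ∈ H, ∏ z ∈ H, a z
      = (∏ z ∈ cycleThrough τ e, a z) *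
        ∑ H ∈ invariantSubsets τ F with e ∈ H, ∏ z ∈ H \ cycleThrough τ e, a z := by
    rw [mul_sum]
    refine sum_congr rfl fun H hH => ?_
    rw [mul_comm, prod_sdiff (contains hH)]
  rw [factor, ← sum_image (f := fun K => ∏ z ∈ K, a z) (g := fun H => H \ cycleThrough τ e)]
  · gcongr ?_ * ?_
    · exact prod_nonneg fun z _ => a_nonneg z
    refine sum_le_sum_of_subset_of_nonneg (fun K hK => ?_)
      fun K _ _ => prod_nonneg fun z _ => a_nonneg z
    obtain ⟨H, hH, rfl⟩ := mem_image.1 hK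
    obtain ⟨hHF, hHinv⟩ := mem_invariantSubsets.1 (mem_filter.1 hH).1
    exact mem_invariantSubsets.2
      ⟨sdiff_subset_sdiff hHF le_rfl, hHinv.sdiff (isInvariantUnder_cycleThrough τ e)⟩
  · intro H hH H' hH' heq
    rw [← sdiff_union_of_subset (contains hH), ← sdiff_union_of_subset (contains hH')]
    exact congrArg (· ∪ cycleThrough τ e) heq

theorem sum_invariantSubsets_notMem_le (a_nonneg : ∀ e, 0 ≤ a e) :
    ∑ H ∈ invariantSubsets τ F with e ∉ H, ∏ z ∈ H, a z
      ≤ ∑ H ∈ invariantSubsets τ (F \ cycleThrough τ e), ∏ z ∈ H, a z := by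
  refine sum_le_sum_of_subset_of_nonneg (fun H hH => ?_)
    fun H _ _ => prod_nonneg fun z _ => a_nonneg z
  obtain ⟨hH, heH⟩ := mem_filter.1 hH
  obtain ⟨hHF, hHinv⟩ := mem_invariantSubsets.1 hH
  exact mem_invariantSubsets.2 ⟨subset_sdiff.2 ⟨hHF, disjoint_cycleThrough hHinv heH⟩, hHinv⟩

theorem sum_invariantSubsets_le_orbitWeight_add_one_mul (a_nonneg : ∀ e, 0 ≤ a e)
    (a_inv : ∀ e, a (τ e) = a e) (a_le_one : a e ≤ 1) :
    ∑ H ∈ invariantSubsets τ F, ∏ z ∈ H, a z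
      ≤ (orbitWeight τ a e + 1) *
        ∑ H ∈ invariantSubsets τ (F \ cycleThrough τ e), ∏ z ∈ H, a z := by
  rw [← sum_filter_add_sum_filter_not (invariantSubsets τ F) (e ∈ ·), add_one_mul]
  refine add_le_add ((sum_invariantSubsets_mem_le a_nonneg).trans ?_)
    (sum_invariantSubsets_notMem_le a_nonneg)
  exact mul_le_mul_of_nonneg_right
    (prod_cycleThrough_le_orbitWeight (a_nonneg e) a_le_one a_inv)
    (sum_nonneg fun H _ => prod_nonneg fun z _ => a_nonneg z)

theorem orbitWeight_add_sum_sdiff_cycleThrough_le (a_nonneg : ∀ e, 0 ≤ a e) (he : e ∈ F) :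
    orbitWeight τ a e + ∑ z ∈ F \ cycleThrough τ e, orbitWeight τ a z
      ≤ ∑ z ∈ F, orbitWeight τ a z := by
  have notMem : e ∉ F \ cycleThrough τ e :=
    fun h => (mem_sdiff.1 h).2 (self_mem_cycleThrough τ e)
  rw [← sum_insert notMem]
  exact sum_le_sum_of_subset_of_nonneg (insert_subset he sdiff_subset)
    fun z _ _ => orbitWeight_nonneg (a_nonneg z)

theorem sum_invariantSubsets_prod_le_exp {Ω : Type*} [Finite Ω] {τ : Equiv.Perm Ω} {a : Ω → ℝ}
    {F : Finset Ω} (a_nonneg : ∀ e, 0 ≤ a e)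
    (a_inv : ∀ e, a (τ e) = a e) (a_le_one : ∀ e ∈ F, a e ≤ 1) (hF : IsInvariantUnder τ F) :
    ∑ H ∈ invariantSubsets τ F, ∏ e ∈ H, a e ≤ Real.exp (∑ e ∈ F, orbitWeight τ a e) := by
  have := Fintype.ofFinite Ω
  induction F using Finset.strongInduction with | _ F ih
  rcases F.eq_empty_or_nonempty with rfl | ⟨e, he⟩
  · have only_empty : invariantSubsets τ ∅ = {∅} := by
      ext H
      simp +contextual [mem_invariantSubsets, IsInvariantUnder]
    simp [only_empty]
  set rest := F \ cycleThrough τ e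
  have rest_ssubset : rest ⊂ F :=
    sdiff_ssubset (cycleThrough_subset hF he) ⟨e, self_mem_cycleThrough τ e⟩
  have rest_le := ih rest rest_ssubset (fun z hz => a_le_one z (rest_ssubset.1 hz))
    (hF.sdiff (isInvariantUnder_cycleThrough τ e))
  calc ∑ H ∈ invariantSubsets τ F, ∏ z ∈ H, a z
      ≤ (orbitWeight τ a e + 1) * ∑ H ∈ invariantSubsets τ rest, ∏ z ∈ H, a z :=
        sum_invariantSubsets_le_orbitWeight_add_one_mul a_nonneg a_inv (a_le_one e he)
    _ ≤ Real.exp (orbitWeight τ a e) * Real.exp (∑ z ∈ rest, orbitWeight τ a z) :=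
        mul_le_mul (Real.add_one_le_exp _) rest_le
          (sum_nonneg fun H _ => prod_nonneg fun z _ => a_nonneg z) (Real.exp_nonneg _)
    _ ≤ Real.exp (∑ z ∈ F, orbitWeight τ a z) := by
        rw [← Real.exp_add]
        exact Real.exp_le_exp.2 (orbitWeight_add_sum_sdiff_cycleThrough_le a_nonneg he)

end InvariantSubsets

section FixedGraphs

variable {V : Type*} [Fintype V] {d : ℕ} {σ : Equiv.Perm V} {w : V → ℝ}

/-- The permutation of unordered pairs of vertices induced by a permutation of the vertices. -/
def sym2Perm {V : Type*} (σ : Equiv.Perm V) : Equiv.Perm (Sym2 V) where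
  toFun := Sym2.map σ
  invFun := Sym2.map σ.symm
  left_inv e := by induction e with | _ a b; simp
  right_inv e := by induction e with | _ a b; simp

theorem sym2Perm_mk {V : Type*} (σ : Equiv.Perm V) (a b : V) :
    sym2Perm σ s(a, b) = s(σ a, σ b) := rfl

/-- The labelled `d`-regular graphs that have `σ` as an automorphism. -/
noncomputable def fixedRegularGraphs (d : ℕ) (σ : Equiv.Perm V) : Finset (SimpleGraph V) :=
  {G ∈ regularGraphs V d | G.comap σ = G}

/-- The bound `36 d / |V|` on the probability that a given pair is an edge of a random
`d`-regular graph, multiplied by the weights of the endpoints of the pair. -/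
noncomputable def edgeWeight (d : ℕ) (w : V → ℝ) (e : Sym2 V) : ℝ :=
  36 * d / Fintype.card V * ∏ v ∈ e.toFinset, w v

/-- The pairs of distinct vertices at least one of which is moved by `σ`. -/
noncomputable def movedPairs (σ : Equiv.Perm V) : Finset (Sym2 V) :=
  {e | ¬ e.IsDiag ∧ ∃ u ∈ e, σ u ≠ u}

theorem mem_movedPairs {e : Sym2 V} :
    e ∈ movedPairs σ ↔ ¬ e.IsDiag ∧ ∃ u ∈ e, σ u ≠ u := by
  simp [movedPairs]

theorem adj_apply_iff_of_mem_fixedRegularGraphs {G : SimpleGraph V}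
    (hG : G ∈ fixedRegularGraphs d σ) (a b : V) : G.Adj (σ a) (σ b) ↔ G.Adj a b := by
  conv_rhs => rw [← (mem_filter.1 hG).2]
  rfl

theorem edgeWeight_mk {u v : V} (huv : u ≠ v) :
    edgeWeight d w s(u, v) = 36 * d / Fintype.card V * (w u * w v) := by
  rw [edgeWeight, Sym2.toFinset_mk_eq, prod_pair huv]

theorem edgeWeight_nonneg (w_pos : ∀ v, 0 < w v) (e : Sym2 V) : 0 ≤ edgeWeight d w e :=
  mul_nonneg (by positivity) (prod_nonneg fun v _ => (w_pos v).le)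

theorem edgeWeight_sym2Perm (w_inv : ∀ v, w (σ v) = w v) (e : Sym2 V) :
    edgeWeight d w (sym2Perm σ e) = edgeWeight d w e := by
  have image_eq : (sym2Perm σ e).toFinset = e.toFinset.image σ := by
    induction e with | _ a b
    simp [sym2Perm_mk, Sym2.toFinset_mk_eq, image_insert]
  rw [edgeWeight, edgeWeight, image_eq, prod_image σ.injective.injOn,
    prod_congr rfl fun v _ => w_inv v]

theorem isInvariantUnder_movedPairs (σ : Equiv.Perm V) :
    IsInvariantUnder (sym2Perm σ) (movedPairs σ) := fun e => by
  induction e with | _ a b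
  simp [mem_movedPairs, sym2Perm_mk]

theorem prod_edgeFinset_prod_toFinset {G : SimpleGraph V} (hG : G ∈ regularGraphs V d)
    (w : V → ℝ) : ∏ e ∈ G.edgeFinset, ∏ v ∈ e.toFinset, w v = (∏ v, w v) ^ d := by
  rw [prod_comm' (t' := univ) (s' := fun v => G.incidenceFinset v), ← prod_pow]
  · refine prod_congr rfl fun v _ => ?_
    rw [prod_const, SimpleGraph.card_incidenceFinset_eq_degree, mem_regularGraphs.1 hG v]
  · intro e v
    simp [SimpleGraph.incidenceSet]

theorem prod_movedPairs_prod_toFinset {G : SimpleGraph V} (hG : G ∈ regularGraphs V d)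
    (w_fixed : ∀ v, σ v = v → w v = 1) :
    ∏ e ∈ movedPairs σ with e ∈ G.edgeSet, ∏ v ∈ e.toFinset, w v = (∏ v, w v) ^ d := by
  rw [← prod_edgeFinset_prod_toFinset hG]
  refine prod_subset (fun e he => SimpleGraph.mem_edgeFinset.2 (mem_filter.1 he).2) ?_
  intro e he hmoved
  have heG := SimpleGraph.mem_edgeFinset.1 he
  refine prod_eq_one fun v hv => w_fixed v ?_
  by_contra hσv
  exact hmoved (mem_filter.2 ⟨mem_movedPairs.2
    ⟨G.not_isDiag_of_mem_edgeSet heG, v, Sym2.mem_toFinset.1 hv, hσv⟩, heG⟩)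

theorem filter_movedPairs_mem_invariantSubsets {G : SimpleGraph V}
    (hG : G ∈ fixedRegularGraphs d σ) :
    {e ∈ movedPairs σ | e ∈ G.edgeSet} ∈ invariantSubsets (sym2Perm σ) (movedPairs σ) := by
  refine mem_invariantSubsets.2 ⟨filter_subset _ _, fun e => ?_⟩
  rw [mem_filter, mem_filter, isInvariantUnder_movedPairs σ e]
  induction e with | _ a b
  rw [sym2Perm_mk, SimpleGraph.mem_edgeSet, SimpleGraph.mem_edgeSet,
    adj_apply_iff_of_mem_fixedRegularGraphs hG]

/-- A graph fixed by `σ` is charged to the `σ`-invariant set of its edges that meet the support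
of `σ`, whose total vertex weight is the same for all regular graphs. -/
theorem card_fixedRegularGraphs_mul_prod_pow_le_sum (w_pos : ∀ v, 0 < w v)
    (w_fixed : ∀ v, σ v = v → w v = 1) :
    (#(fixedRegularGraphs d σ) : ℝ) * (∏ v, w v) ^ d ≤ #(regularGraphs V d) *
      ∑ H ∈ invariantSubsets (sym2Perm σ) (movedPairs σ), ∏ e ∈ H, edgeWeight d w e := by
  let movedEdges (G : SimpleGraph V) : Finset (Sym2 V) := {e ∈ movedPairs σ | e ∈ G.edgeSet}
  let traces := (fixedRegularGraphs d σ).image movedEdges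
  have prod_pos : 0 < (∏ v, w v) ^ d := pow_pos (prod_pos fun v _ => w_pos v) d
  have cover : fixedRegularGraphs d σ ⊆ traces.biUnion (regularGraphsContaining d) :=
    fun G hG => mem_biUnion.2 ⟨movedEdges G, mem_image_of_mem _ hG, mem_regularGraphsContaining.2
      ⟨(mem_filter.1 hG).1, fun e he => (mem_filter.1 he).2⟩⟩
  have card_le : (#(fixedRegularGraphs d σ) : ℝ)
      ≤ ∑ H ∈ traces, (#(regularGraphsContaining d H) : ℝ) := by
    exact_mod_cast (card_le_card cover).trans card_biUnion_le
  have term_le (H : Finset (Sym2 V)) (hH : H ∈ traces) :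
      #(regularGraphsContaining d H) * (∏ v, w v) ^ d
        ≤ #(regularGraphs V d) * ∏ e ∈ H, edgeWeight d w e := by
    obtain ⟨G, hG, rfl⟩ := mem_image.1 hH
    simp only [edgeWeight, prod_mul_distrib, prod_const, movedEdges]
    rw [prod_movedPairs_prod_toFinset (mem_filter.1 hG).1 w_fixed, ← mul_assoc]
    gcongr
    exact card_regularGraphsContaining_le d _
  have traces_subset : traces ⊆ invariantSubsets (sym2Perm σ) (movedPairs σ) :=
    image_subset_iff.2 fun G hG => filter_movedPairs_mem_invariantSubsets hG
  calc (#(fixedRegularGraphs d σ) : ℝ) * (∏ v, w v) ^ d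
      ≤ (∑ H ∈ traces, (#(regularGraphsContaining d H) : ℝ)) * (∏ v, w v) ^ d := by gcongr
    _ ≤ ∑ H ∈ traces, #(regularGraphs V d) * ∏ e ∈ H, edgeWeight d w e := by
        rw [sum_mul]
        exact sum_le_sum term_le
    _ ≤ _ := by
        rw [← mul_sum]
        gcongr
        exact fun H _ _ => prod_nonneg fun e _ => edgeWeight_nonneg w_pos e

variable [DecidableEq V]

theorem sum_movedPairs_le {b : Sym2 V → ℝ} (b_nonneg : ∀ e, 0 ≤ b e) {K : ℝ}
    (sum_le : ∀ u, σ u ≠ u → ∑ v ∈ univ.erase u, b s(u, v) ≤ K) :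
    ∑ e ∈ movedPairs σ, b e ≤ K * #σ.support := by
  have star_sum_le (u : V) : ∑ e ∈ movedPairs σ with u ∈ e, b e
      ≤ ∑ v ∈ univ.erase u, b s(u, v) := by
    rw [← sum_image fun v _ v' _ h => Sym2.congr_right.1 h]
    refine sum_le_sum_of_subset_of_nonneg (fun e he => ?_) fun e _ _ => b_nonneg e
    obtain ⟨hmoved, v, rfl⟩ := mem_filter.1 he
    refine mem_image_of_mem _ (mem_erase.2 ⟨fun hvu => ?_, mem_univ v⟩)
    exact (mem_movedPairs.1 hmoved).1 (by simp [hvu])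
  calc ∑ e ∈ movedPairs σ, b e
      ≤ ∑ e ∈ movedPairs σ, ∑ u ∈ σ.support with u ∈ e, b e := by
        refine sum_le_sum fun e he => ?_
        obtain ⟨-, u, hue, hu⟩ := mem_movedPairs.1 he
        exact single_le_sum (f := fun _ => b e) (fun _ _ => b_nonneg e)
          (mem_filter.2 ⟨Equiv.Perm.mem_support.2 hu, hue⟩)
    _ = ∑ u ∈ σ.support, ∑ e ∈ movedPairs σ with u ∈ e, b e :=
        sum_comm' (by simp only [mem_filter]; tauto)
    _ ≤ ∑ _u ∈ σ.support, K := sum_le_sum fun u hu =>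
        (star_sum_le u).trans (sum_le u (Equiv.Perm.mem_support.1 hu))
    _ = K * #σ.support := by rw [sum_const, nsmul_eq_mul, mul_comm]

theorem card_fixedRegularGraphs_mul_prod_pow_le_exp (w_pos : ∀ v, 0 < w v)
    (w_inv : ∀ v, w (σ v) = w v) (w_fixed : ∀ v, σ v = v → w v = 1)
    (weight_le_one : ∀ u v, u ≠ v → edgeWeight d w s(u, v) ≤ 1) {K : ℝ}
    (sum_le : ∀ u, σ u ≠ u →
      ∑ v ∈ univ.erase u, orbitWeight (sym2Perm σ) (edgeWeight d w) s(u, v) ≤ K) :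
    (#(fixedRegularGraphs d σ) : ℝ) * (∏ v, w v) ^ d
      ≤ #(regularGraphs V d) * Real.exp (K * #σ.support) := by
  refine (card_fixedRegularGraphs_mul_prod_pow_le_sum w_pos w_fixed).trans ?_
  gcongr
  refine (sum_invariantSubsets_prod_le_exp (edgeWeight_nonneg w_pos)
    (edgeWeight_sym2Perm w_inv) (fun e he => ?_) (isInvariantUnder_movedPairs σ)).trans ?_
  · have hdiag := (mem_movedPairs.1 he).1
    induction e with | _ u v
    exact weight_le_one u v (by simpa using hdiag)
  · exact Real.exp_le_exp.2 (sum_movedPairs_le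
      (fun e => orbitWeight_nonneg (edgeWeight_nonneg w_pos e)) sum_le)

end FixedGraphs

section PowerWeights

variable {V : Type*} [Fintype V] {d : ℕ} {σ : Equiv.Perm V} {α : V → ℝ} {u v : V}

/-- The vertex weights `|V| ^ α v`. -/
noncomputable def powerWeight (α : V → ℝ) (v : V) : ℝ := (Fintype.card V : ℝ) ^ α v

theorem one_le_card_of_vertex (u : V) : (1 : ℝ) ≤ Fintype.card V :=
  Nat.one_le_cast.2 (Fintype.card_pos_iff.2 ⟨u⟩)

theorem powerWeight_pos (α : V → ℝ) (v : V) : 0 < powerWeight α v :=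
  Real.rpow_pos_of_pos (one_pos.trans_le (one_le_card_of_vertex v)) _

theorem edgeWeight_powerWeight_le
    (sparse : 36 * d / Fintype.card V ≤ (Fintype.card V : ℝ) ^ (-(99 / 100) : ℝ))
    {r : ℝ} (hr : α u + α v ≤ r) (huv : u ≠ v) :
    edgeWeight d (powerWeight α) s(u, v) ≤ (Fintype.card V : ℝ) ^ (r - 99 / 100) := by
  have one_le := one_le_card_of_vertex u
  have card_pos : (0 : ℝ) < Fintype.card V := one_pos.trans_le one_le
  calc edgeWeight d (powerWeight α) s(u, v)
      = 36 * d / Fintype.card V * (Fintype.card V : ℝ) ^ (α u + α v) := by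
        rw [edgeWeight_mk huv, powerWeight, powerWeight, ← Real.rpow_add card_pos]
    _ ≤ (Fintype.card V : ℝ) ^ (-(99 / 100) : ℝ) * (Fintype.card V : ℝ) ^ r := by gcongr
    _ = (Fintype.card V : ℝ) ^ (r - 99 / 100) := by
        rw [← Real.rpow_add card_pos, neg_add_eq_sub]

theorem pow_le_rpow_of_le_rpow {N x r s : ℝ} {k : ℕ} (hN : 1 ≤ N) (hx : 0 ≤ x) (hxr : x ≤ N ^ r)
    (hs : r * k ≤ s) : x ^ k ≤ N ^ s := by
  calc x ^ k ≤ (N ^ r) ^ k := by gcongr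
    _ = N ^ (r * k) := (Real.rpow_mul_natCast (by linarith) r k).symm
    _ ≤ N ^ s := Real.rpow_le_rpow_of_exponent_le hN hs

theorem orbitWeight_le_one {Ω : Type*} {τ : Equiv.Perm Ω} {a : Ω → ℝ} {e : Ω}
    (a_nonneg : 0 ≤ a e) (a_le_one : a e ≤ 1) : orbitWeight τ a e ≤ 1 := by
  unfold orbitWeight
  split_ifs
  exacts [a_le_one, pow_le_one₀ a_nonneg a_le_one, pow_le_one₀ a_nonneg a_le_one]

theorem orbitWeight_le_sq {Ω : Type*} {τ : Equiv.Perm Ω} {a : Ω → ℝ} {e : Ω}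
    (a_nonneg : 0 ≤ a e) (a_le_one : a e ≤ 1) (he : τ e ≠ e) : orbitWeight τ a e ≤ a e ^ 2 := by
  rw [orbitWeight, if_neg he]
  split_ifs
  exacts [le_rfl, pow_le_pow_of_le_one a_nonneg a_le_one (by norm_num)]

theorem eq_apply_of_sym2Perm_eq {V : Type*} {σ : Equiv.Perm V} {u v : V} (hu : σ u ≠ u)
    (h : sym2Perm σ s(u, v) = s(u, v)) : v = σ u := by
  rw [sym2Perm_mk, Sym2.eq_iff] at h
  rcases h with ⟨hfix, -⟩ | ⟨hswap, -⟩
  exacts [absurd hfix hu, hswap.symm]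

theorem edgeWeight_powerWeight_le_one
    (sparse : 36 * d / Fintype.card V ≤ (Fintype.card V : ℝ) ^ (-(99 / 100) : ℝ))
    (α_le : ∀ v, α v ≤ 3 / 10) (huv : u ≠ v) : edgeWeight d (powerWeight α) s(u, v) ≤ 1 := by
  have sum_le : α u + α v ≤ 6 / 10 := by linarith [α_le u, α_le v]
  exact (edgeWeight_powerWeight_le sparse sum_le huv).trans
    (Real.rpow_le_one_of_one_le_of_nonpos (one_le_card_of_vertex u) (by norm_num))

variable [DecidableEq V]

theorem sum_ite_apply_eq_self (τ : V → V) (x : ℝ) :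
    ∑ v, (if τ v = v then 0 else x) = #{v | τ v ≠ v} * x := by
  rw [sum_ite, sum_const_zero, zero_add, sum_const, nsmul_eq_mul]

theorem card_fixedRegularGraphs_le_of_powerWeight [Nonempty V] (hd : 4 ≤ d)
    (sparse : 36 * d / Fintype.card V ≤ (Fintype.card V : ℝ) ^ (-(99 / 100) : ℝ))
    (α_nonneg : ∀ v, 0 ≤ α v) (α_le : ∀ v, α v ≤ 3 / 10) (α_inv : ∀ v, α (σ v) = α v)
    (α_fixed : ∀ v, σ v = v → α v = 0) {c : V → V → ℝ}
    (weight_le : ∀ u v, σ u ≠ u → u ≠ v →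
      orbitWeight (sym2Perm σ) (edgeWeight d (powerWeight α)) s(u, v) ≤ c u v)
    (c_nonneg : ∀ u v, 0 ≤ c u v) (sum_le : ∀ u, ∑ v, c u v ≤ 3) :
    (#(fixedRegularGraphs d σ) : ℝ) ≤ #(regularGraphs V d) *
      (Real.exp (3 * #σ.support) * (Fintype.card V : ℝ) ^ (-(4 * ∑ v, α v))) := by
  have one_le := one_le_card_of_vertex (Classical.arbitrary V)
  have card_pos : (0 : ℝ) < Fintype.card V := one_pos.trans_le one_le
  have fixed_le := card_fixedRegularGraphs_mul_prod_pow_le_exp (d := d) (K := 3)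
    (powerWeight_pos α) (fun v => by rw [powerWeight, α_inv, powerWeight])
    (fun v hv => by rw [powerWeight, α_fixed v hv, Real.rpow_zero])
    (fun u v => edgeWeight_powerWeight_le_one sparse α_le)
    (fun u hu => (sum_le_sum fun v hv => weight_le u v hu (ne_of_mem_erase hv).symm).trans
      ((sum_le_sum_of_subset_of_nonneg (subset_univ _) fun v _ _ => c_nonneg u v).trans
        (sum_le u)))
  have pow_four_le : (Fintype.card V : ℝ) ^ (4 * ∑ v, α v) ≤ (∏ v, powerWeight α v) ^ d := by
    rw [show ∏ v, powerWeight α v = (Fintype.card V : ℝ) ^ ∑ v, α v from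
      (Real.rpow_sum_of_pos card_pos α univ).symm, ← Real.rpow_mul_natCast card_pos.le, mul_comm]
    exact Real.rpow_le_rpow_of_exponent_le one_le
      (mul_le_mul_of_nonneg_left (by exact_mod_cast hd) (sum_nonneg fun v _ => α_nonneg v))
  rw [Real.rpow_neg card_pos.le, ← mul_assoc, ← div_eq_mul_inv, le_div_iff₀ (by positivity)]
  exact (mul_le_mul_of_nonneg_left pow_four_le (Nat.cast_nonneg _)).trans fixed_le

theorem orbitWeight_le_of_card_support_small
    (sparse : 36 * d / Fintype.card V ≤ (Fintype.card V : ℝ) ^ (-(99 / 100) : ℝ))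
    (hu : σ u ≠ u) (huv : u ≠ v) :
    orbitWeight (sym2Perm σ)
        (edgeWeight d (powerWeight fun v => if σ v = v then 0 else 27 / 100)) s(u, v)
      ≤ (if v = σ u then 1 else 0)
        + (if σ v = v then 0 else (Fintype.card V : ℝ) ^ (-(9 / 10) : ℝ))
        + (Fintype.card V : ℝ) ^ (-1 : ℝ) := by
  set α : V → ℝ := fun v => if σ v = v then 0 else 27 / 100 with hα
  have one_le := one_le_card_of_vertex u
  have inv_nonneg : 0 ≤ (Fintype.card V : ℝ) ^ (-1 : ℝ) := by positivity
  have nonneg : 0 ≤ edgeWeight d (powerWeight α) s(u, v) :=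
    edgeWeight_nonneg (powerWeight_pos α) _
  have le_one : edgeWeight d (powerWeight α) s(u, v) ≤ 1 :=
    edgeWeight_powerWeight_le_one sparse (fun v => by simp only [hα]; split_ifs <;> norm_num) huv
  by_cases hfix : sym2Perm σ s(u, v) = s(u, v)
  · have := orbitWeight_le_one (τ := sym2Perm σ) nonneg le_one
    rw [if_pos (eq_apply_of_sym2Perm_eq hu hfix)]
    split_ifs <;> [linarith; linarith [(by positivity :
      0 ≤ (Fintype.card V : ℝ) ^ (-(9 / 10) : ℝ))]]
  have le_sq := orbitWeight_le_sq nonneg le_one hfix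
  have le_term : edgeWeight d (powerWeight α) s(u, v) ^ 2
      ≤ (if σ v = v then 0 else (Fintype.card V : ℝ) ^ (-(9 / 10) : ℝ))
        + (Fintype.card V : ℝ) ^ (-1 : ℝ) := by
    split_ifs with hv
    · have := pow_le_rpow_of_le_rpow (s := -1) (k := 2) one_le nonneg
        (edgeWeight_powerWeight_le sparse (r := 27 / 100) (by simp [hα, hu, hv]) huv)
        (by norm_num)
      linarith
    · have := pow_le_rpow_of_le_rpow (s := -(9 / 10)) (k := 2) one_le nonneg
        (edgeWeight_powerWeight_le sparse (r := 54 / 100) (by norm_num [hα, hu, hv]) huv)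
        (by norm_num)
      linarith
  have indicator_nonneg : (0 : ℝ) ≤ if v = σ u then 1 else 0 := by positivity
  linarith

theorem card_fixedRegularGraphs_le_of_card_support_small [Nonempty V] (hd : 4 ≤ d)
    (sparse : 36 * d / Fintype.card V ≤ (Fintype.card V : ℝ) ^ (-(99 / 100) : ℝ))
    (support_le : (#σ.support : ℝ) ≤ (Fintype.card V : ℝ) ^ (9 / 10 : ℝ)) :
    (#(fixedRegularGraphs d σ) : ℝ) ≤ #(regularGraphs V d) *
      (Real.exp 3 * (Fintype.card V : ℝ) ^ (-(108 / 100) : ℝ)) ^ #σ.support := by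
  have card_pos : (0 : ℝ) < Fintype.card V := Nat.cast_pos.2 Fintype.card_pos
  have sum_moved (x : ℝ) : ∑ v, (if σ v = v then 0 else x) = #σ.support * x :=
    sum_ite_apply_eq_self σ x
  have sum_le (u : V) : ∑ v, ((if v = σ u then 1 else 0)
        + (if σ v = v then 0 else (Fintype.card V : ℝ) ^ (-(9 / 10) : ℝ))
        + (Fintype.card V : ℝ) ^ (-1 : ℝ)) ≤ 3 := by
    have moved_le : #σ.support * (Fintype.card V : ℝ) ^ (-(9 / 10) : ℝ) ≤ 1 := by
      rwa [Real.rpow_neg card_pos.le, ← div_eq_mul_inv, div_le_one (by positivity)]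
    rw [sum_add_distrib, sum_add_distrib, sum_ite_eq' univ, if_pos (mem_univ _), sum_moved,
      sum_const, card_univ, nsmul_eq_mul, Real.rpow_neg_one, mul_inv_cancel₀ card_pos.ne']
    linarith
  refine (card_fixedRegularGraphs_le_of_powerWeight hd sparse
    (α := fun v => if σ v = v then 0 else 27 / 100) (fun v => by positivity)
    (fun v => by split_ifs <;> norm_num) (fun v => by simp) (fun v hv => by simp [hv])
    (fun u v => orbitWeight_le_of_card_support_small sparse) (fun u v => by positivity)
    sum_le).trans_eq ?_
  rw [sum_moved, mul_pow, ← Real.exp_nat_mul, ← Real.rpow_mul_natCast card_pos.le]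
  ring_nf

theorem orbitWeight_le_of_cycle_lengths
    (sparse : 36 * d / Fintype.card V ≤ (Fintype.card V : ℝ) ^ (-(99 / 100) : ℝ))
    (hu : σ u ≠ u) (huv : u ≠ v) :
    orbitWeight (sym2Perm σ) (edgeWeight d (powerWeight fun v =>
        (if σ v = v then 0 else 15 / 100) + (if σ (σ v) = v then 0 else 15 / 100))) s(u, v)
      ≤ (if v = σ u then 1 else 0) + (if v = σ (σ u) then 1 else 0)
        + (Fintype.card V : ℝ) ^ (-1 : ℝ) := by
  set α : V → ℝ := fun v =>
    (if σ v = v then 0 else 15 / 100) + (if σ (σ v) = v then 0 else 15 / 100) with hα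
  have one_le := one_le_card_of_vertex u
  have inv_nonneg : 0 ≤ (Fintype.card V : ℝ) ^ (-1 : ℝ) := by positivity
  have indicator₁_nonneg : (0 : ℝ) ≤ if v = σ u then 1 else 0 := by positivity
  have indicator₂_nonneg : (0 : ℝ) ≤ if v = σ (σ u) then 1 else 0 := by positivity
  have nonneg : 0 ≤ edgeWeight d (powerWeight α) s(u, v) :=
    edgeWeight_nonneg (powerWeight_pos α) _
  have α_le (v : V) : α v ≤ 3 / 10 := by simp only [hα]; split_ifs <;> norm_num
  have le_one := edgeWeight_powerWeight_le_one sparse α_le huv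
  have orbit_le_one := orbitWeight_le_one (τ := sym2Perm σ) nonneg le_one
  by_cases hfix : sym2Perm σ s(u, v) = s(u, v)
  · rw [if_pos (eq_apply_of_sym2Perm_eq hu hfix)]
    linarith
  by_cases hfix₂ : sym2Perm σ (sym2Perm σ s(u, v)) = s(u, v)
  · rw [sym2Perm_mk, sym2Perm_mk, Sym2.eq_iff] at hfix₂
    rcases hfix₂ with ⟨hu₂, hv₂⟩ | ⟨hswap, -⟩
    · have α_add_le : α u + α v ≤ 30 / 100 := by
        simp only [hα, hu₂, hv₂, if_true]
        split_ifs <;> norm_num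
      have := pow_le_rpow_of_le_rpow (s := -1) (k := 2) one_le nonneg
        (edgeWeight_powerWeight_le sparse α_add_le huv) (by norm_num)
      linarith [orbitWeight_le_sq nonneg le_one hfix]
    · rw [if_pos hswap.symm]
      linarith
  · have α_add_le : α u + α v ≤ 60 / 100 := by linarith [α_le u, α_le v]
    have := pow_le_rpow_of_le_rpow (s := -1) (k := 3) one_le nonneg
      (edgeWeight_powerWeight_le sparse α_add_le huv) (by norm_num)
    rw [orbitWeight, if_neg hfix, if_neg hfix₂]
    linarith

theorem card_fixedRegularGraphs_le_of_cycle_lengths [Nonempty V] (hd : 4 ≤ d)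
    (sparse : 36 * d / Fintype.card V ≤ (Fintype.card V : ℝ) ^ (-(99 / 100) : ℝ)) :
    (#(fixedRegularGraphs d σ) : ℝ) ≤ #(regularGraphs V d) * (Real.exp (3 * #σ.support) *
      (Fintype.card V : ℝ) ^ (-(6 / 10 * (#σ.support + #{v | σ (σ v) ≠ v})) : ℝ)) := by
  have card_pos : (0 : ℝ) < Fintype.card V := Nat.cast_pos.2 Fintype.card_pos
  have sum_le (u : V) : ∑ v, ((if v = σ u then 1 else 0) + (if v = σ (σ u) then 1 else 0)
        + (Fintype.card V : ℝ) ^ (-1 : ℝ)) ≤ 3 := by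
    rw [sum_add_distrib, sum_add_distrib, sum_ite_eq' univ, sum_ite_eq' univ,
      if_pos (mem_univ _), if_pos (mem_univ _), sum_const, card_univ, nsmul_eq_mul,
      Real.rpow_neg_one, mul_inv_cancel₀ card_pos.ne']
    norm_num
  refine (card_fixedRegularGraphs_le_of_powerWeight hd sparse (α := fun v =>
      (if σ v = v then 0 else 15 / 100) + (if σ (σ v) = v then 0 else 15 / 100))
    (fun v => by positivity) (fun v => by split_ifs <;> norm_num) (fun v => by simp)
    (fun v hv => by simp [hv]) (fun u v => orbitWeight_le_of_cycle_lengths sparse)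
    (fun u v => by positivity) sum_le).trans_eq ?_
  rw [sum_add_distrib, sum_ite_apply_eq_self σ, sum_ite_apply_eq_self fun v => σ (σ v)]
  simp only [Equiv.Perm.support]
  ring_nf

end PowerWeights

section PermutationSums

variable {V : Type*} [Fintype V]

theorem card_filter_support_eq_le [DecidableEq V] (S : Finset V) :
    #{σ : Equiv.Perm V | σ.support = S} ≤ (#S).factorial := by
  calc #{σ : Equiv.Perm V | σ.support = S}
      ≤ #{σ : Equiv.Perm V | ∀ a, a ∉ S → σ a = a} := card_le_card fun σ hσ => by
        rw [mem_filter] at hσ ⊢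
        exact ⟨hσ.1, fun a ha => Equiv.Perm.notMem_support.1 (hσ.2 ▸ ha)⟩
    _ = Fintype.card (Equiv.Perm S) := by
        rw [← Fintype.card_subtype,
          Fintype.card_congr (Equiv.Perm.subtypeEquivSubtypePerm (· ∈ S))]
    _ = (#S).factorial := by rw [Fintype.card_perm, Fintype.card_coe]

theorem sum_pow_card_support_le_sum_pow [DecidableEq V] {q : ℝ} (hq : 0 ≤ q) :
    ∑ σ : Equiv.Perm V, q ^ #σ.support
      ≤ ∑ m ∈ range (Fintype.card V + 1), (Fintype.card V * q) ^ m := by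
  calc ∑ σ : Equiv.Perm V, q ^ #σ.support
      = ∑ S : Finset V, ∑ σ : Equiv.Perm V with σ.support = S, q ^ #S := by
        rw [← sum_fiberwise univ (fun σ : Equiv.Perm V => σ.support)]
        refine sum_congr rfl fun S _ => sum_congr rfl fun σ hσ => ?_
        rw [(mem_filter.1 hσ).2]
    _ ≤ ∑ S : Finset V, (#S).factorial * q ^ #S := by
        refine sum_le_sum fun S _ => ?_
        rw [sum_const, nsmul_eq_mul]
        gcongr
        exact card_filter_support_eq_le S
    _ = ∑ m ∈ range (Fintype.card V + 1), (Fintype.card V).choose m • (m.factorial * q ^ m) := by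
        rw [← powerset_univ, sum_powerset_apply_card fun m => (m.factorial * q ^ m : ℝ), card_univ]
    _ ≤ ∑ m ∈ range (Fintype.card V + 1), (Fintype.card V * q) ^ m := by
        refine sum_le_sum fun m _ => ?_
        rw [nsmul_eq_mul, ← mul_assoc, mul_pow]
        gcongr
        rw [mul_comm]
        exact_mod_cast (Nat.descFactorial_eq_factorial_mul_choose _ m).symm.trans_le
          (Nat.descFactorial_le_pow _ m)

theorem sum_pow_card_support_le [DecidableEq V] {q : ℝ} (hq : 0 ≤ q)
    (small : Fintype.card V * q ≤ 1 / 2) :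
    ∑ σ : Equiv.Perm V, q ^ #σ.support ≤ 1 + 2 * (Fintype.card V * q) := by
  set x : ℝ := Fintype.card V * q
  have x_nonneg : 0 ≤ x := by positivity
  refine (sum_pow_card_support_le_sum_pow hq).trans ?_
  calc ∑ m ∈ range (Fintype.card V + 1), x ^ m
      ≤ ∑' m, x ^ m := (summable_geometric_of_lt_one x_nonneg (by linarith)).sum_le_tsum _
        fun m _ => by positivity
    _ = (1 - x)⁻¹ := tsum_geometric_of_lt_one x_nonneg (by linarith)
    _ ≤ 1 + 2 * x := by
        rw [inv_le_iff_one_le_mul₀ (by linarith)]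
        nlinarith

variable [LinearOrder V]

/-- The points whose images determine `σ`: those on cycles of length at least three, and the
smaller point of each transposition. -/
def codeDomain (σ : Equiv.Perm V) : Finset V := {v | σ (σ v) ≠ v ∨ v < σ v}

/-- The restriction of `σ` to its code domain, from which `σ` can be recovered. -/
def permCode (σ : Equiv.Perm V) (v : V) : Option V := if v ∈ codeDomain σ then some (σ v) else none

theorem mem_codeDomain {σ : Equiv.Perm V} {v : V} :
    v ∈ codeDomain σ ↔ σ (σ v) ≠ v ∨ v < σ v := by
  simp [codeDomain]

theorem apply_eq_of_permCode_eq {σ τ : Equiv.Perm V} (h : permCode σ = permCode τ) {v : V}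
    (hv : v ∈ codeDomain σ) : v ∈ codeDomain τ ∧ σ v = τ v := by
  have code_eq := congrFun h v
  rw [permCode, permCode, if_pos hv] at code_eq
  split_ifs at code_eq with hτ
  exact ⟨hτ, Option.some.inj code_eq⟩

theorem apply_eq_of_permCode_eq_of_ne {σ τ : Equiv.Perm V} (h : permCode σ = permCode τ) {v : V}
    (hv : σ v ≠ v) : σ v = τ v := by
  by_cases hσ : v ∈ codeDomain σ
  · exact (apply_eq_of_permCode_eq h hσ).2
  have hτ : v ∉ codeDomain τ := fun hτ => hσ (apply_eq_of_permCode_eq h.symm hτ).1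
  simp only [mem_codeDomain, not_or, not_not, not_lt] at hσ hτ
  have image_mem : σ v ∈ codeDomain σ :=
    mem_codeDomain.2 (Or.inr (by rw [hσ.1]; exact lt_of_le_of_ne hσ.2 hv))
  have image_eq := (apply_eq_of_permCode_eq h image_mem).2
  rw [hσ.1] at image_eq
  exact τ.injective (by rw [hτ.1, ← image_eq])

theorem permCode_injective : Function.Injective (permCode : Equiv.Perm V → V → Option V) := by
  intro σ τ h
  ext v
  by_cases hσ : σ v = v
  · by_cases hτ : τ v = v
    · rw [hσ, hτ]
    · exact (apply_eq_of_permCode_eq_of_ne h.symm hτ).symm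
  · exact apply_eq_of_permCode_eq_of_ne h hσ

theorem two_mul_card_codeDomain (σ : Equiv.Perm V) :
    2 * #(codeDomain σ) = #σ.support + #{v | σ (σ v) ≠ v} := by
  have code_split : #(codeDomain σ) = #{v | σ (σ v) ≠ v} + #{v | σ (σ v) = v ∧ v < σ v} := by
    rw [← card_union_of_disjoint (disjoint_filter.2 fun v _ h h' => h h'.1), ← filter_or]
    congr 1
    ext v
    simp only [mem_codeDomain, mem_filter_univ]
    tauto
  have support_split : #σ.support = #{v | σ (σ v) ≠ v}
      + (#{v | σ (σ v) = v ∧ v < σ v} + #{v | σ (σ v) = v ∧ σ v < v}) := by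
    rw [← card_union_of_disjoint (disjoint_filter.2 fun v _ h h' => lt_asymm h.2 h'.2),
      ← filter_or, ← card_union_of_disjoint (disjoint_filter.2 fun v _ h h' => by tauto),
      ← filter_or]
    congr 1
    ext v
    rw [Equiv.Perm.mem_support, mem_filter_univ, ← and_or_left, lt_or_lt_iff_ne]
    have : σ v = v → σ (σ v) = v := fun h => by rw [h, h]
    tauto
  have halves_eq : #{v | σ (σ v) = v ∧ v < σ v} = #{v | σ (σ v) = v ∧ σ v < v} :=
    card_equiv σ fun v => by
      simp only [mem_filter_univ, EmbeddingLike.apply_eq_iff_eq]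
      exact and_congr_right fun h => by rw [h]
  omega

theorem sum_pow_card_codeDomain_le {q : ℝ} (hq : 0 ≤ q) :
    ∑ σ : Equiv.Perm V, q ^ #(codeDomain σ) ≤ (1 + Fintype.card V * q) ^ Fintype.card V := by
  let letterWeight (o : Option V) : ℝ := o.elim 1 fun _ => q
  have letterWeight_nonneg (o : Option V) : 0 ≤ letterWeight o := by
    cases o <;> simp [letterWeight, hq]
  have pow_eq (σ : Equiv.Perm V) : q ^ #(codeDomain σ) = ∏ v, letterWeight (permCode σ v) := by
    rw [← prod_const, ← Fintype.prod_ite_mem]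
    refine prod_congr rfl fun v _ => ?_
    by_cases hv : v ∈ codeDomain σ <;> simp [permCode, letterWeight, hv]
  calc ∑ σ : Equiv.Perm V, q ^ #(codeDomain σ)
      = ∑ f ∈ univ.image (permCode (V := V)), ∏ v, letterWeight (f v) := by
        rw [sum_image permCode_injective.injOn, sum_congr rfl fun σ _ => pow_eq σ]
    _ ≤ ∑ f : V → Option V, ∏ v, letterWeight (f v) :=
        sum_le_sum_of_subset_of_nonneg (subset_univ _)
          fun f _ _ => prod_nonneg fun v _ => letterWeight_nonneg _
    _ = ∏ _v : V, ∑ o, letterWeight o := by rw [prod_univ_sum, Fintype.piFinset_univ]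
    _ = (1 + Fintype.card V * q) ^ Fintype.card V := by
        simp [Fintype.sum_option, letterWeight]

/-- The error term `δ` in `∑ σ, #(fixedRegularGraphs d σ) ≤ (1 + δ) * #(regularGraphs V d)`, for
`N` vertices. The summands come from the permutations with few and with many moved points. -/
noncomputable def automorphismError (N : ℝ) : ℝ :=
  2 * (Real.exp 3 * N ^ (-(8 / 100) : ℝ)) +
    Real.exp (Real.exp 6 * N ^ (9 / 10 : ℝ) - 1 / 20 * N ^ (9 / 10 : ℝ) * Real.log N)

variable [Nonempty V] {d : ℕ}

theorem card_fixedRegularGraphs_le_pow_card_codeDomain (hd : 4 ≤ d)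
    (sparse : 36 * d / Fintype.card V ≤ (Fintype.card V : ℝ) ^ (-(99 / 100) : ℝ))
    (σ : Equiv.Perm V) : (#(fixedRegularGraphs d σ) : ℝ) ≤ #(regularGraphs V d) *
      (Real.exp 6 * (Fintype.card V : ℝ) ^ (-(12 / 10) : ℝ)) ^ #(codeDomain σ) := by
  have card_code : (2 * #(codeDomain σ) : ℝ) = #σ.support + #{v | σ (σ v) ≠ v} := by
    exact_mod_cast two_mul_card_codeDomain σ
  refine (card_fixedRegularGraphs_le_of_cycle_lengths hd sparse).trans ?_
  rw [← card_code, mul_pow, ← Real.exp_nat_mul, ← Real.rpow_mul_natCast (Nat.cast_nonneg _)]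
  gcongr ?_ * (?_ * ?_)
  · exact Real.exp_le_exp.2 (by linarith [(Nat.cast_nonneg _ : (0 : ℝ) ≤ #{v | σ (σ v) ≠ v})])
  · exact le_of_eq (by ring_nf)

/-- For a permutation with many moved points, the factor `N ^ ((k - N ^ (9 / 10) / 2) / 10)` with
`k` the size of the code domain is at least `1`. -/
theorem card_fixedRegularGraphs_le_add (hd : 4 ≤ d)
    (sparse : 36 * d / Fintype.card V ≤ (Fintype.card V : ℝ) ^ (-(99 / 100) : ℝ))
    (σ : Equiv.Perm V) : (#(fixedRegularGraphs d σ) : ℝ) ≤ #(regularGraphs V d) *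
      ((Real.exp 3 * (Fintype.card V : ℝ) ^ (-(108 / 100) : ℝ)) ^ #σ.support +
        (Fintype.card V : ℝ) ^ (-(1 / 20 * (Fintype.card V : ℝ) ^ (9 / 10 : ℝ))) *
        (Real.exp 6 * (Fintype.card V : ℝ) ^ (-(11 / 10) : ℝ)) ^ #(codeDomain σ)) := by
  have one_le : (1 : ℝ) ≤ Fintype.card V := Nat.one_le_cast.2 Fintype.card_pos
  set N := (Fintype.card V : ℝ)
  have N_pos : 0 < N := by linarith
  rcases le_or_gt (#σ.support : ℝ) (N ^ (9 / 10 : ℝ)) with few | many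
  · refine (card_fixedRegularGraphs_le_of_card_support_small hd sparse few).trans ?_
    gcongr
    exact le_add_of_nonneg_right (by positivity)
  · have support_le : (#σ.support : ℝ) ≤ 2 * #(codeDomain σ) := by
      exact_mod_cast (Nat.le_add_right _ _).trans_eq (two_mul_card_codeDomain σ).symm
    refine (card_fixedRegularGraphs_le_pow_card_codeDomain hd sparse σ).trans ?_
    gcongr
    refine le_add_of_nonneg_of_le (by positivity) ?_
    rw [mul_pow, mul_pow, mul_left_comm, ← Real.rpow_mul_natCast N_pos.le,
      ← Real.rpow_mul_natCast N_pos.le, ← Real.rpow_add N_pos]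
    gcongr
    linarith

theorem sum_card_fixedRegularGraphs_le (hd : 4 ≤ d)
    (sparse : 36 * d / Fintype.card V ≤ (Fintype.card V : ℝ) ^ (-(99 / 100) : ℝ))
    (large : Real.exp 3 * (Fintype.card V : ℝ) ^ (-(8 / 100) : ℝ) ≤ 1 / 2) :
    ∑ σ : Equiv.Perm V, (#(fixedRegularGraphs d σ) : ℝ)
      ≤ #(regularGraphs V d) * (1 + automorphismError (Fintype.card V)) := by
  refine (sum_le_sum fun σ _ => card_fixedRegularGraphs_le_add hd sparse σ).trans ?_
  have N_pos : (0 : ℝ) < Fintype.card V := Nat.cast_pos.2 Fintype.card_pos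
  rw [← mul_sum, sum_add_distrib, ← mul_sum, automorphismError, ← add_assoc]
  have mul_card (r s : ℝ) (x : ℝ) (hrs : r + 1 = s) :
      Fintype.card V * (x * (Fintype.card V : ℝ) ^ r) = x * (Fintype.card V : ℝ) ^ s := by
    rw [← hrs, Real.rpow_add_one N_pos.ne']
    ring
  gcongr
  · have card_mul := mul_card (-(108 / 100)) (-(8 / 100)) (Real.exp 3) (by norm_num)
    rw [← card_mul] at large ⊢
    exact sum_pow_card_support_le (by positivity) large
  · refine (mul_le_mul_of_nonneg_left (sum_pow_card_codeDomain_le (by positivity))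
      (by positivity)).trans ?_
    rw [mul_card _ (-(1 / 10)) _ (by norm_num), sub_eq_add_neg, Real.exp_add, mul_comm]
    gcongr
    · calc (1 + Real.exp 6 * (Fintype.card V : ℝ) ^ (-(1 / 10) : ℝ)) ^ Fintype.card V
          ≤ Real.exp (Real.exp 6 * (Fintype.card V : ℝ) ^ (-(1 / 10) : ℝ)) ^ Fintype.card V := by
            gcongr
            exact (add_comm _ _).trans_le (Real.add_one_le_exp _)
        _ = Real.exp (Real.exp 6 * (Fintype.card V : ℝ) ^ (9 / 10 : ℝ)) := by
            rw [← Real.exp_nat_mul, mul_card _ (9 / 10) _ (by norm_num)]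
    · rw [Real.rpow_def_of_pos N_pos]
      exact le_of_eq (by ring_nf)

end PermutationSums

section IsomorphismClasses

variable {V : Type*} [Fintype V] {n d : ℕ}

theorem mem_regularGraphs_iff_card_neighborSet {G : SimpleGraph V} :
    G ∈ regularGraphs V d ↔ ∀ v, Nat.card (G.neighborSet v) = d := by
  rw [mem_regularGraphs]
  refine forall_congr' fun v => ?_
  rw [Nat.card_eq_fintype_card, SimpleGraph.card_neighborSet_eq_degree]

theorem comap_mem_regularGraphs {G : SimpleGraph V} (hG : G ∈ regularGraphs V d)
    (σ : Equiv.Perm V) : G.comap σ ∈ regularGraphs V d := by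
  rw [mem_regularGraphs_iff_card_neighborSet] at hG ⊢
  intro v
  rw [← hG (σ v)]
  exact Nat.card_congr ((SimpleGraph.Iso.comap σ G).mapNeighborSet v)

theorem mk_isoSetoid_eq_iff {V : Type*} {G H : SimpleGraph V} :
    Quotient.mk (isoSetoid V) G = Quotient.mk (isoSetoid V) H ↔
      ∃ σ : Equiv.Perm V, H.comap σ = G := by
  rw [Quotient.eq]
  constructor
  · rintro ⟨f⟩
    exact ⟨f.toEquiv, SimpleGraph.ext (funext₂ fun a b => propext f.map_rel_iff)⟩
  · rintro ⟨σ, rfl⟩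
    exact ⟨SimpleGraph.Iso.comap σ H⟩

theorem isRegClass_mk_iff {G : SimpleGraph (Fin n)} :
    IsRegClass (Quotient.mk (isoSetoid (Fin n)) G) d ↔ G ∈ regularGraphs (Fin n) d := by
  constructor
  · rintro ⟨H, hH, hd⟩
    obtain ⟨σ, rfl⟩ := mk_isoSetoid_eq_iff.1 hH.symm
    exact comap_mem_regularGraphs (mem_regularGraphs_iff_card_neighborSet.2 hd) σ
  · intro hG
    exact ⟨G, rfl, mem_regularGraphs_iff_card_neighborSet.1 hG⟩

instance (n : ℕ) : Finite (GraphClass n) := Quotient.finite _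

noncomputable instance (n : ℕ) : Fintype (GraphClass n) := Fintype.ofFinite _

instance : MulAction (Equiv.Perm V) (regularGraphs V d) where
  smul σ G := ⟨G.1.comap ⇑σ⁻¹, comap_mem_regularGraphs G.2 σ⁻¹⟩
  one_smul _ := rfl
  mul_smul _ _ _ := rfl

theorem card_fixedBy_eq (σ : Equiv.Perm V) :
    Fintype.card (MulAction.fixedBy (regularGraphs V d) σ) = #(fixedRegularGraphs d σ⁻¹) := by
  rw [← Fintype.card_coe]
  exact Fintype.card_congr {
    toFun G := ⟨G.1.1, mem_filter.2 ⟨G.1.2, congrArg Subtype.val G.2⟩⟩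
    invFun G := ⟨⟨G.1, (mem_filter.1 G.2).1⟩, Subtype.ext (mem_filter.1 G.2).2⟩
    left_inv _ := rfl
    right_inv _ := rfl }

theorem card_isRegClass_mul_factorial_le (n d : ℕ) :
    Nat.card {q : GraphClass n // IsRegClass q d} * n.factorial
      ≤ ∑ σ : Equiv.Perm (Fin n), #(fixedRegularGraphs d σ) := by
  let toClass : MulAction.orbitRel.Quotient (Equiv.Perm (Fin n)) (regularGraphs (Fin n) d) →
      {q : GraphClass n // IsRegClass q d} :=
    Quotient.lift (fun G => ⟨Quotient.mk _ G.1, isRegClass_mk_iff.2 G.2⟩) fun G H hGH => by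
      obtain ⟨σ, rfl⟩ := MulAction.orbitRel_apply.1 hGH
      exact Subtype.ext (mk_isoSetoid_eq_iff.2 ⟨σ⁻¹, rfl⟩)
  have toClass_surjective : Function.Surjective toClass := by
    rintro ⟨q, hq⟩
    induction q using Quotient.inductionOn with | _ G
    exact ⟨Quotient.mk _ ⟨G, isRegClass_mk_iff.1 hq⟩, rfl⟩
  calc Nat.card {q : GraphClass n // IsRegClass q d} * n.factorial
      ≤ Nat.card (MulAction.orbitRel.Quotient (Equiv.Perm (Fin n)) (regularGraphs (Fin n) d))
          * n.factorial := by
        gcongr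
        exact Nat.card_le_card_of_surjective toClass toClass_surjective
    _ = ∑ σ : Equiv.Perm (Fin n), Fintype.card (MulAction.fixedBy (regularGraphs (Fin n) d) σ) := by
        rw [MulAction.sum_card_fixedBy_eq_card_orbits_mul_card_group, Fintype.card_perm,
          Fintype.card_fin, Nat.card_eq_fintype_card]
    _ = ∑ σ : Equiv.Perm (Fin n), #(fixedRegularGraphs d σ) := by
        rw [sum_congr rfl fun σ _ => card_fixedBy_eq σ]
        exact Equiv.sum_comp (Equiv.inv _) fun σ => #(fixedRegularGraphs d σ)

theorem card_filter_mk_eq_le (q : GraphClass n) :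
    #{G : SimpleGraph (Fin n) | Quotient.mk (isoSetoid (Fin n)) G = q} ≤ n.factorial := by
  calc #{G : SimpleGraph (Fin n) | Quotient.mk (isoSetoid (Fin n)) G = q}
      ≤ #(univ.image fun σ : Equiv.Perm (Fin n) => q.out.comap σ) := card_le_card fun G hG => by
        obtain ⟨σ, hσ⟩ := mk_isoSetoid_eq_iff.1
          ((mem_filter.1 hG).2.trans (Quotient.out_eq q).symm)
        exact mem_image.2 ⟨σ, mem_univ σ, hσ⟩
    _ ≤ #(univ : Finset (Equiv.Perm (Fin n))) := card_image_le
    _ = n.factorial := by rw [card_univ, Fintype.card_perm, Fintype.card_fin]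

end IsomorphismClasses

section InverseOperation

variable {m t : ℕ} {L : SimpleGraph (Fin m)} {e : Fin t → Sym2 (Fin m)}
  {G : SimpleGraph (Fin (m + 1))}

theorem opGraphE_adj_castSucc_castSucc (L : SimpleGraph (Fin m)) (e : Fin t → Sym2 (Fin m))
    (x y : Fin m) :
    (opGraphE (m + 1) L e).Adj x.castSucc y.castSucc ↔ L.Adj x y ∧ s(x, y) ∉ Set.range e := by
  have castSucc_injective : Function.Injective (Sym2.map (Fin.castSucc : Fin m → Fin (m + 1))) :=
    Sym2.map.injective (Fin.castSucc_injective m)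
  rw [opGraphE, dif_pos (Nat.le_add_left 1 m), SimpleGraph.fromEdgeSet_adj]
  constructor
  · rintro ⟨⟨f, hf, hfxy⟩ | ⟨z, -, hz⟩, -⟩
    · obtain rfl : f = s(x, y) := castSucc_injective hfxy
      exact hf
    · have last_mem : Fin.last m ∈ s(x.castSucc, y.castSucc) := hz ▸ Sym2.mem_mk_right _ _
      rcases Sym2.mem_iff.1 last_mem with h | h <;> exact absurd h.symm (Fin.castSucc_ne_last _)
  · rintro ⟨hxy, he⟩
    exact ⟨Or.inl ⟨s(x, y), ⟨hxy, he⟩, rfl⟩, fun h => hxy.ne (Fin.castSucc_injective m h)⟩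

theorem opGraphE_adj_castSucc_last (L : SimpleGraph (Fin m)) (e : Fin t → Sym2 (Fin m))
    (x : Fin m) :
    (opGraphE (m + 1) L e).Adj x.castSucc (Fin.last m) ↔ ∃ i, x ∈ e i := by
  rw [opGraphE, dif_pos (Nat.le_add_left 1 m), SimpleGraph.fromEdgeSet_adj]
  constructor
  · rintro ⟨⟨f, -, hf⟩ | ⟨z, hze, hz⟩, -⟩
    · have last_mem : Fin.last m ∈ Sym2.map (Fin.castSucc : Fin m → Fin (m + 1)) f :=
        hf.symm ▸ Sym2.mem_mk_right _ _
      obtain ⟨a, -, ha⟩ := Sym2.mem_map.1 last_mem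
      exact absurd ha (Fin.castSucc_ne_last a)
    · obtain rfl : x = z := Fin.castSucc_injective m (Sym2.congr_left.1 hz)
      exact hze
  · exact fun h => ⟨Or.inr ⟨x, h, rfl⟩, Fin.castSucc_ne_last x⟩

theorem graph_eq_of_adj_castSucc {G H : SimpleGraph (Fin (m + 1))}
    (castSucc : ∀ x y : Fin m, G.Adj x.castSucc y.castSucc ↔ H.Adj x.castSucc y.castSucc)
    (last : ∀ x : Fin m, G.Adj x.castSucc (Fin.last m) ↔ H.Adj x.castSucc (Fin.last m)) :
    G = H := by
  ext a b
  induction a using Fin.lastCases with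
  | last =>
    induction b using Fin.lastCases with
    | last => simp
    | cast y => rw [G.adj_comm, H.adj_comm]; exact last y
  | cast x =>
    induction b using Fin.lastCases with
    | last => exact last x
    | cast y => exact castSucc x y

theorem degree_opGraphE_castSucc (h : FormsInducedMatching L e) (x : Fin m) :
    (opGraphE (m + 1) L e).degree x.castSucc = L.degree x := by
  obtain ⟨edges, disjoint, -⟩ := h
  symm
  refine card_bij (fun z _ => if s(x, z) ∈ Set.range e then Fin.last m else z.castSucc) ?_ ?_ ?_
  · intro z hz
    rw [SimpleGraph.mem_neighborFinset] at hz ⊢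
    split_ifs with hr
    · obtain ⟨i, hi⟩ := hr
      exact (opGraphE_adj_castSucc_last L e x).2 ⟨i, hi ▸ Sym2.mem_mk_left _ _⟩
    · exact (opGraphE_adj_castSucc_castSucc L e x z).2 ⟨hz, hr⟩
  · intro z _ z' _ heq
    split_ifs at heq with hz hz' hz'
    · obtain ⟨⟨i, hi⟩, ⟨j, hj⟩⟩ := And.intro hz hz'
      obtain rfl : i = j := by
        by_contra hij
        exact disjoint i j hij x (hi ▸ Sym2.mem_mk_left _ _) (hj ▸ Sym2.mem_mk_left _ _)
      exact Sym2.congr_right.1 (hi.symm.trans hj)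
    · exact absurd heq.symm (Fin.castSucc_ne_last _)
    · exact absurd heq (Fin.castSucc_ne_last _)
    · exact Fin.castSucc_injective m heq
  · intro b hb
    rw [SimpleGraph.mem_neighborFinset] at hb
    induction b using Fin.lastCases with
    | last =>
      obtain ⟨i, y, hy⟩ := (opGraphE_adj_castSucc_last L e x).1 hb
      have hxy : s(x, y) ∈ L.edgeSet := hy ▸ edges i
      exact ⟨y, by simpa using hxy, if_pos ⟨i, hy⟩⟩
    | cast y =>
      obtain ⟨hxy, he⟩ := (opGraphE_adj_castSucc_castSucc L e x y).1 hb
      exact ⟨y, by simpa using hxy, if_neg he⟩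

/-- The entries of `e` are pairwise disjoint two-element sets of vertices. -/
def IsDisjointTuple (e : Fin t → Sym2 (Fin m)) : Prop :=
  (∀ i, ¬(e i).IsDiag) ∧ ∀ i j, i ≠ j → ∀ x, x ∈ e i → x ∉ e j

/-- The set of vertices covered by the entries of `e`. -/
noncomputable def coveredVertices (e : Fin t → Sym2 (Fin m)) : Finset (Fin m) :=
  {x | ∃ i, x ∈ e i}

/-- The neighbourhood of the last vertex of a graph on `Fin (m + 1)`, as a set of vertices of
`Fin m`. -/
noncomputable def lastNeighbors (G : SimpleGraph (Fin (m + 1))) : Finset (Fin m) :=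
  {x | G.Adj x.castSucc (Fin.last m)}

theorem mem_coveredVertices {x : Fin m} : x ∈ coveredVertices e ↔ ∃ i, x ∈ e i := by
  simp [coveredVertices]

theorem mem_lastNeighbors {x : Fin m} : x ∈ lastNeighbors G ↔ G.Adj x.castSucc (Fin.last m) := by
  simp [lastNeighbors]

theorem FormsInducedMatching.isDisjointTuple (h : FormsInducedMatching L e) :
    IsDisjointTuple e :=
  ⟨fun i => L.not_isDiag_of_mem_edgeSet (h.1 i), h.2.1⟩

theorem card_coveredVertices (h : IsDisjointTuple e) : #(coveredVertices e) = 2 * t := by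
  have biUnion_eq : coveredVertices e = univ.biUnion fun i => (e i).toFinset := by
    ext x
    simp [coveredVertices]
  rw [biUnion_eq, card_biUnion, sum_congr rfl fun i _ =>
    Sym2.card_toFinset_of_not_isDiag _ (h.1 i)]
  · simp [mul_comm]
  · intro i _ j _ hij
    rw [Function.onFun, Finset.disjoint_left]
    intro x hx
    rw [Sym2.mem_toFinset] at hx ⊢
    exact h.2 i j hij x hx

theorem card_lastNeighbors (G : SimpleGraph (Fin (m + 1))) :
    #(lastNeighbors G) = G.degree (Fin.last m) := by
  refine card_bij (fun z _ => z.castSucc) ?_ (fun _ _ _ _ h => Fin.castSucc_injective m h) ?_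
  · intro z hz
    simpa [G.adj_comm] using mem_lastNeighbors.1 hz
  · intro b hb
    rw [SimpleGraph.mem_neighborFinset] at hb
    induction b using Fin.lastCases with
    | last => exact absurd rfl hb.ne
    | cast y => exact ⟨y, mem_lastNeighbors.2 hb.symm, rfl⟩

theorem lastNeighbors_opGraphE (L : SimpleGraph (Fin m)) (e : Fin t → Sym2 (Fin m)) :
    lastNeighbors (opGraphE (m + 1) L e) = coveredVertices e := by
  ext x
  rw [mem_lastNeighbors, mem_coveredVertices]
  exact opGraphE_adj_castSucc_last L e x

theorem opGraphE_mem_regularGraphs_iff (h : FormsInducedMatching L e) :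
    opGraphE (m + 1) L e ∈ regularGraphs (Fin (m + 1)) (2 * t) ↔
      L ∈ regularGraphs (Fin m) (2 * t) := by
  rw [mem_regularGraphs, mem_regularGraphs]
  constructor
  · intro hG v
    rw [← degree_opGraphE_castSucc h]
    exact hG _
  · intro hL v
    induction v using Fin.lastCases with
    | last =>
      rw [← card_lastNeighbors, lastNeighbors_opGraphE, card_coveredVertices h.isDisjointTuple]
    | cast y =>
      rw [degree_opGraphE_castSucc h]
      exact hL _

/-- The ordered perfect matchings of the vertex set `S` into `t` pairs. -/
noncomputable def orderedMatchings (t : ℕ) (S : Finset (Fin m)) :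
    Finset (Fin t → Sym2 (Fin m)) :=
  {e | IsDisjointTuple e ∧ coveredVertices e = S}

theorem mem_orderedMatchings {S : Finset (Fin m)} :
    e ∈ orderedMatchings t S ↔ IsDisjointTuple e ∧ coveredVertices e = S := by
  simp [orderedMatchings]

theorem exists_perm_mem_iff_of_card_eq {α : Type*} [Finite α] {S T : Finset α}
    (h : #S = #T) : ∃ σ : Equiv.Perm α, ∀ x, σ x ∈ T ↔ x ∈ S := by
  have f : {x // x ∈ S} ≃ {x // x ∈ T} := Finset.equivOfCardEq h
  refine ⟨f.extendSubtype, fun x => ?_⟩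
  by_cases hx : x ∈ S
  · simp only [f.extendSubtype_mem x hx, hx]
  · simp only [f.extendSubtype_not_mem x hx, hx]

theorem mem_sym2_map_perm {α : Type*} (σ : Equiv.Perm α) (z : Sym2 α) (x : α) :
    x ∈ Sym2.map σ z ↔ σ.symm x ∈ z := by
  rw [Sym2.mem_map]
  constructor
  · rintro ⟨a, ha, rfl⟩
    rwa [Equiv.symm_apply_apply]
  · exact fun h => ⟨_, h, σ.apply_symm_apply x⟩

theorem card_orderedMatchings_le {S T : Finset (Fin m)} (h : #S = #T) :
    #(orderedMatchings t S) ≤ #(orderedMatchings t T) := by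
  obtain ⟨σ, hσ⟩ := exists_perm_mem_iff_of_card_eq h
  refine card_le_card_of_injOn (fun e i => Sym2.map σ (e i)) ?_ ?_
  · intro e he
    rw [mem_coe, mem_orderedMatchings] at he ⊢
    obtain ⟨⟨not_isDiag, disjoint⟩, covered⟩ := he
    refine ⟨⟨fun i => ?_, fun i j hij x => ?_⟩, ?_⟩
    · rw [Sym2.isDiag_map σ.injective]
      exact not_isDiag i
    · rw [mem_sym2_map_perm, mem_sym2_map_perm]
      exact disjoint i j hij _
    · ext x
      simp only [mem_coveredVertices, mem_sym2_map_perm]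
      rw [← mem_coveredVertices, covered, ← hσ, Equiv.apply_symm_apply]
  · intro e _ e' _ hee
    funext i
    exact Sym2.map.injective σ.injective (congrFun hee i)

theorem card_orderedMatchings_eq {S T : Finset (Fin m)} (h : #S = #T) :
    #(orderedMatchings t S) = #(orderedMatchings t T) :=
  le_antisymm (card_orderedMatchings_le h) (card_orderedMatchings_le h.symm)

/-- The pairs `(L, e)` of a `2t`-regular labelled graph and an induced matching of `L` in `t`
ordered edges on which `op` takes the labelled value `G`. -/
noncomputable def opFiber (t : ℕ) (G : SimpleGraph (Fin (m + 1))) :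
    Finset (SimpleGraph (Fin m) × (Fin t → Sym2 (Fin m))) :=
  {p | p.1 ∈ regularGraphs (Fin m) (2 * t) ∧ FormsInducedMatching p.1 p.2 ∧
    opGraphE (m + 1) p.1 p.2 = G}

theorem mem_opFiber {p : SimpleGraph (Fin m) × (Fin t → Sym2 (Fin m))} :
    p ∈ opFiber t G ↔ p.1 ∈ regularGraphs (Fin m) (2 * t) ∧ FormsInducedMatching p.1 p.2 ∧
      opGraphE (m + 1) p.1 p.2 = G := by
  simp [opFiber]

/-- The inverse of `op`: delete the last vertex of `G` and add the entries of `e` as edges. -/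
def unop (G : SimpleGraph (Fin (m + 1))) (e : Fin t → Sym2 (Fin m)) : SimpleGraph (Fin m) :=
  G.comap Fin.castSucc ⊔ SimpleGraph.fromEdgeSet (Set.range e)

theorem unop_adj (he : IsDisjointTuple e) (x y : Fin m) :
    (unop G e).Adj x y ↔ G.Adj x.castSucc y.castSucc ∨ s(x, y) ∈ Set.range e := by
  have ne_of_mem : s(x, y) ∈ Set.range e → x ≠ y := by
    rintro ⟨i, hi⟩ hxy
    exact he.1 i (hi ▸ Sym2.mk_isDiag_iff.2 hxy)
  rw [unop, SimpleGraph.sup_adj, SimpleGraph.comap_adj, SimpleGraph.fromEdgeSet_adj,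
    and_iff_left_of_imp ne_of_mem]

theorem unop_opGraphE (h : FormsInducedMatching L e) : unop (opGraphE (m + 1) L e) e = L := by
  ext x y
  have adj_of_mem : s(x, y) ∈ Set.range e → L.Adj x y := by
    rintro ⟨i, hi⟩
    have hxy := h.1 i
    rwa [hi] at hxy
  rw [unop_adj h.isDisjointTuple, opGraphE_adj_castSucc_castSucc]
  tauto

theorem card_opFiber_le (t : ℕ) (G : SimpleGraph (Fin (m + 1))) :
    #(opFiber t G) ≤ #(orderedMatchings t (lastNeighbors G)) := by
  refine card_le_card_of_injOn (fun p => p.2) ?_ ?_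
  · intro p hp
    obtain ⟨-, matching, hop⟩ := mem_opFiber.1 hp
    exact mem_orderedMatchings.2 ⟨matching.isDisjointTuple, by rw [← hop, lastNeighbors_opGraphE]⟩
  · rintro ⟨L, e⟩ hp ⟨L', e'⟩ hp' (rfl : e = e')
    obtain ⟨-, matching, hop⟩ := mem_opFiber.1 hp
    obtain ⟨-, matching', hop'⟩ := mem_opFiber.1 hp'
    refine congrArg (·, e) ?_
    calc L = unop G e := by rw [← hop, unop_opGraphE matching]
      _ = L' := by rw [← hop', unop_opGraphE matching']

/-- The neighbourhood of the last vertex is an independent set. -/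
def IsLastNeighborhoodIndep (G : SimpleGraph (Fin (m + 1))) : Prop :=
  ∀ x ∈ lastNeighbors G, ∀ y ∈ lastNeighbors G, ¬G.Adj x.castSucc y.castSucc

theorem formsInducedMatching_unop (indep : IsLastNeighborhoodIndep G)
    (he : e ∈ orderedMatchings t (lastNeighbors G)) : FormsInducedMatching (unop G e) e := by
  obtain ⟨disjoint, covered⟩ := mem_orderedMatchings.1 he
  refine ⟨fun i => ?_, disjoint.2, fun u v hu hv huv => ?_⟩
  · induction hz : e i with
    | _ x y => exact (unop_adj disjoint x y).2 (Or.inr ⟨i, hz⟩)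
  · rw [← mem_coveredVertices, covered] at hu hv
    exact ((unop_adj disjoint u v).1 huv).resolve_left (indep u hu v hv)

theorem opGraphE_unop (indep : IsLastNeighborhoodIndep G)
    (he : e ∈ orderedMatchings t (lastNeighbors G)) : opGraphE (m + 1) (unop G e) e = G := by
  obtain ⟨disjoint, covered⟩ := mem_orderedMatchings.1 he
  have mem_lastNeighbors_of_mem {x i} (hx : x ∈ e i) : x ∈ lastNeighbors G :=
    covered ▸ mem_coveredVertices.2 ⟨i, hx⟩
  refine graph_eq_of_adj_castSucc (fun x y => ?_) fun x => ?_
  · have not_adj : s(x, y) ∈ Set.range e → ¬G.Adj x.castSucc y.castSucc := by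
      rintro ⟨i, hi⟩
      exact indep x (mem_lastNeighbors_of_mem (hi ▸ Sym2.mem_mk_left x y)) y
        (mem_lastNeighbors_of_mem (hi ▸ Sym2.mem_mk_right x y))
    rw [opGraphE_adj_castSucc_castSucc, unop_adj disjoint]
    tauto
  · rw [opGraphE_adj_castSucc_last, ← mem_coveredVertices, covered, mem_lastNeighbors]

theorem card_orderedMatchings_le_card_opFiber (hG : G ∈ regularGraphs (Fin (m + 1)) (2 * t))
    (indep : IsLastNeighborhoodIndep G) :
    #(orderedMatchings t (lastNeighbors G)) ≤ #(opFiber t G) := by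
  refine card_le_card_of_injOn (fun e => (unop G e, e)) ?_ fun e _ e' _ h => (Prod.mk.inj h).2
  intro e he
  have matching := formsInducedMatching_unop indep he
  have hop := opGraphE_unop indep he
  refine mem_opFiber.2 ⟨?_, matching, hop⟩
  rwa [← opGraphE_mem_regularGraphs_iff matching, hop]

end InverseOperation

section InducedMatchings

theorem card_filter_apply_mem_mul_card_le {ι α : Type*} [Fintype ι] [DecidableEq ι]
    [Fintype α] [DecidableEq α] {i j : ι} (hij : i ≠ j) {B : α → Finset α} {b : ℕ}
    (hB : ∀ a, #(B a) ≤ b) :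
    #{f : ι → α | f j ∈ B (f i)} * Fintype.card α ≤ b * Fintype.card α ^ Fintype.card ι := by
  have exchange : #(({f | f j ∈ B (f i)} : Finset (ι → α)) ×ˢ (univ : Finset α)) ≤
      #((univ : Finset (ι → α)).sigma fun g => B (g i)) := by
    refine card_le_card_of_injOn (fun p => ⟨Function.update p.1 j p.2, p.1 j⟩) ?_ ?_
    · rintro ⟨f, a⟩ hf
      have hf : f j ∈ B (f i) := by simpa using hf
      simpa [Function.update_of_ne hij] using hf
    · rintro ⟨f, a⟩ _ ⟨f', a'⟩ _ h
      obtain ⟨hupdate, hj⟩ : Function.update f j a = Function.update f' j a' ∧ f j = f' j := by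
        simpa using h
      refine Prod.ext (funext fun k => ?_) (by simpa using congrFun hupdate j)
      by_cases hk : k = j
      · exact hk ▸ hj
      · simpa [Function.update_of_ne hk] using congrFun hupdate k
  calc #{f : ι → α | f j ∈ B (f i)} * Fintype.card α
      = #(({f | f j ∈ B (f i)} : Finset (ι → α)) ×ˢ (univ : Finset α)) := by
        rw [card_product, card_univ]
    _ ≤ ∑ g : ι → α, #(B (g i)) := by rwa [card_sigma] at exchange
    _ ≤ ∑ _g : ι → α, b := sum_le_sum fun g _ => hB (g i)
    _ = b * Fintype.card α ^ Fintype.card ι := by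
      rw [sum_const, card_univ, Fintype.card_fun, smul_eq_mul, mul_comm]

variable {V : Type*} [Fintype V] {t d : ℕ} {L : SimpleGraph V}

/-- The edges of `L` that meet `a` or are joined to `a` by an edge of `L`: two edges form an
induced matching exactly if neither is near the other. -/
noncomputable def edgesNear (a : L.edgeSet) : Finset L.edgeSet :=
  {b | ∃ u ∈ a.1, ∃ v ∈ b.1, v = u ∨ L.Adj u v}

theorem card_edges_containing_le (hL : L ∈ regularGraphs V d) (v : V) :
    #{b : L.edgeSet | v ∈ b.1} ≤ d := by
  calc #{b : L.edgeSet | v ∈ b.1} ≤ #(L.incidenceFinset v) := by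
        refine card_le_card_of_injOn Subtype.val (fun b hb => ?_) fun b _ b' _ h => Subtype.ext h
        rw [mem_coe, SimpleGraph.mem_incidenceFinset]
        exact ⟨b.2, by simpa using hb⟩
    _ = d := by rw [SimpleGraph.card_incidenceFinset_eq_degree, mem_regularGraphs.1 hL v]

theorem card_edgesNear_le (hL : L ∈ regularGraphs V d) (a : L.edgeSet) :
    #(edgesNear a) ≤ 2 * ((d + 1) * d) := by
  have near_eq : edgesNear a = a.1.toFinset.biUnion fun u =>
      (insert u (L.neighborFinset u)).biUnion fun v => {b : L.edgeSet | v ∈ b.1} := by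
    ext b
    simp only [edgesNear, mem_filter, mem_univ, true_and, mem_biUnion, Sym2.mem_toFinset,
      mem_insert, SimpleGraph.mem_neighborFinset, and_comm]
  have card_closedNeighborhood (u : V) : #(insert u (L.neighborFinset u)) ≤ d + 1 :=
    (card_insert_le _ _).trans_eq
      (by rw [L.card_neighborFinset_eq_degree, mem_regularGraphs.1 hL u])
  rw [near_eq]
  refine (card_biUnion_le_card_mul _ _ ((d + 1) * d) fun u _ => ?_).trans ?_
  · exact (card_biUnion_le_card_mul _ _ d fun v _ => card_edges_containing_le hL v).trans
      (Nat.mul_le_mul_right d (card_closedNeighborhood u))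
  · rw [Sym2.card_toFinset_of_not_isDiag _ (L.not_isDiag_of_mem_edgeSet a.2)]

theorem exists_mem_edgesNear_of_not_formsInducedMatching {f : Fin t → L.edgeSet}
    (h : ¬FormsInducedMatching L fun i => (f i).1) : ∃ i j, i ≠ j ∧ f j ∈ edgesNear (f i) := by
  by_contra! not_near
  have not_near {i j} (hij : i ≠ j) {u v} (hu : u ∈ (f i).1) (hv : v ∈ (f j).1) :
      ¬(v = u ∨ L.Adj u v) := fun huv =>
    not_near i j hij (mem_filter.2 ⟨mem_univ _, u, hu, v, hv, huv⟩)
  refine h ⟨fun i => (f i).2, fun i j hij x hx hx' => not_near hij hx hx' (Or.inl rfl), ?_⟩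
  rintro u v ⟨i, hi⟩ ⟨j, hj⟩ huv
  obtain rfl | hij := eq_or_ne i j
  · exact ⟨i, (Sym2.mem_and_mem_iff huv.ne).1 ⟨hi, hj⟩⟩
  · exact absurd (Or.inr huv) (not_near hij hi hj)

theorem card_not_formsInducedMatching_mul_card_edgeSet_le (t : ℕ) (hL : L ∈ regularGraphs V d) :
    #{f : Fin t → L.edgeSet | ¬FormsInducedMatching L fun i => (f i).1} * Nat.card L.edgeSet ≤
      t ^ 2 * (2 * ((d + 1) * d)) * Nat.card L.edgeSet ^ t := by
  have subset_near :
      ({f | ¬FormsInducedMatching L fun i => (f i).1} : Finset (Fin t → L.edgeSet)) ⊆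
        ({p | p.1 ≠ p.2} : Finset (Fin t × Fin t)).biUnion fun p =>
          {f : Fin t → L.edgeSet | f p.2 ∈ edgesNear (f p.1)} := by
    intro f hf
    obtain ⟨i, j, hij, hnear⟩ :=
      exists_mem_edgesNear_of_not_formsInducedMatching (mem_filter.1 hf).2
    simp only [mem_biUnion, mem_filter, mem_univ, true_and]
    exact ⟨(i, j), hij, hnear⟩
  have card_near (p : Fin t × Fin t) (hp : p ∈ ({p | p.1 ≠ p.2} : Finset (Fin t × Fin t))) :
      #{f : Fin t → L.edgeSet | f p.2 ∈ edgesNear (f p.1)} * Nat.card L.edgeSet ≤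
        2 * ((d + 1) * d) * Nat.card L.edgeSet ^ t := by
    simpa only [Fintype.card_fin, Nat.card_eq_fintype_card] using
      card_filter_apply_mem_mul_card_le (mem_filter.1 hp).2 (card_edgesNear_le hL)
  have card_pairs : #({p | p.1 ≠ p.2} : Finset (Fin t × Fin t)) ≤ t ^ 2 :=
    (card_le_univ _).trans_eq (by rw [Fintype.card_prod, Fintype.card_fin, sq])
  refine (Nat.mul_le_mul_right _ ((card_le_card subset_near).trans card_biUnion_le)).trans ?_
  rw [sum_mul]
  refine (sum_le_card_nsmul _ _ _ card_near).trans ?_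
  rw [smul_eq_mul, mul_assoc (t ^ 2)]
  exact Nat.mul_le_mul_right _ card_pairs

/-- The ordered `t`-tuples of edges of `L` that form an induced matching. -/
noncomputable def inducedMatchings (t : ℕ) (L : SimpleGraph V) : Finset (Fin t → Sym2 V) :=
  {e | FormsInducedMatching L e}

theorem mem_inducedMatchings {e : Fin t → Sym2 V} :
    e ∈ inducedMatchings t L ↔ FormsInducedMatching L e := by
  simp [inducedMatchings]

theorem card_inducedMatchings_add_card_not_formsInducedMatching (t : ℕ) (L : SimpleGraph V) :
    #(inducedMatchings t L) +
      #{f : Fin t → L.edgeSet | ¬FormsInducedMatching L fun i => (f i).1} =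
      Nat.card L.edgeSet ^ t := by
  have card_eq : #(inducedMatchings t L) =
      #{f : Fin t → L.edgeSet | FormsInducedMatching L fun i => (f i).1} := by
    refine card_bij' (fun e he i => ⟨e i, (mem_inducedMatchings.1 he).1 i⟩) (fun f _ i => (f i).1)
      ?_ ?_ (fun _ _ => rfl) (fun _ _ => rfl)
    · exact fun e he => mem_filter.2 ⟨mem_univ _, mem_inducedMatchings.1 he⟩
    · exact fun f hf => mem_inducedMatchings.2 (mem_filter.1 hf).2
  rw [card_eq, card_filter_add_card_filter_not, card_univ, Fintype.card_fun, Fintype.card_fin,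
    Nat.card_eq_fintype_card]

theorem le_card_inducedMatchings (t : ℕ) (hL : L ∈ regularGraphs V d)
    (nonempty : L.edgeSet.Nonempty) :
    (1 - t ^ 2 * (2 * ((d + 1) * d)) / Nat.card L.edgeSet) * (Nat.card L.edgeSet : ℝ) ^ t ≤
      #(inducedMatchings t L) := by
  have edges_pos : (0 : ℝ) < Nat.card L.edgeSet :=
    Nat.cast_pos.2 (Nat.card_pos_iff.2 ⟨nonempty.to_subtype, inferInstance⟩)
  have bad : (#{f : Fin t → L.edgeSet | ¬FormsInducedMatching L fun i => (f i).1} : ℝ) ≤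
      t ^ 2 * (2 * ((d + 1) * d)) / Nat.card L.edgeSet * (Nat.card L.edgeSet : ℝ) ^ t := by
    rw [div_mul_eq_mul_div, le_div_iff₀ edges_pos]
    exact_mod_cast card_not_formsInducedMatching_mul_card_edgeSet_le t hL
  have total : (#(inducedMatchings t L) : ℝ) +
      #{f : Fin t → L.edgeSet | ¬FormsInducedMatching L fun i => (f i).1} =
      (Nat.card L.edgeSet : ℝ) ^ t := by
    exact_mod_cast card_inducedMatchings_add_card_not_formsInducedMatching t L
  linarith

end InducedMatchings

section LastNeighborhood

variable {m d : ℕ}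

/-- The three edges of the triangle spanned by `x`, `y` and the last vertex. -/
noncomputable def lastTriangle (x y : Fin m) : Finset (Sym2 (Fin (m + 1))) :=
  {s(x.castSucc, Fin.last m), s(y.castSucc, Fin.last m), s(x.castSucc, y.castSucc)}

theorem card_lastTriangle {x y : Fin m} (hxy : x ≠ y) : #(lastTriangle x y) = 3 := by
  have ne_last (z : Fin m) : z.castSucc ≠ Fin.last m := Fin.castSucc_ne_last z
  exact card_eq_three.2 ⟨_, _, _, by simp [hxy, ne_last], by simp [(ne_last _).symm],
    by simp [(ne_last _).symm], rfl⟩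

theorem filter_not_isLastNeighborhoodIndep_subset (m d : ℕ) :
    {G ∈ regularGraphs (Fin (m + 1)) d | ¬IsLastNeighborhoodIndep G} ⊆
      ({q | q.1 ≠ q.2} : Finset (Fin m × Fin m)).biUnion fun q =>
        regularGraphsContaining d (lastTriangle q.1 q.2) := by
  intro G hG
  obtain ⟨hG, not_indep⟩ := mem_filter.1 hG
  simp only [IsLastNeighborhoodIndep, mem_lastNeighbors] at not_indep
  push Not at not_indep
  obtain ⟨x, hx, y, hy, hxy⟩ := not_indep
  have hne : x ≠ y := fun h => hxy.ne (congrArg Fin.castSucc h)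
  refine mem_biUnion.2 ⟨(x, y), mem_filter.2 ⟨mem_univ _, hne⟩,
    mem_regularGraphsContaining.2 ⟨hG, fun e he => ?_⟩⟩
  simp only [lastTriangle, mem_insert, mem_singleton] at he
  rcases he with rfl | rfl | rfl <;> assumption

theorem card_not_isLastNeighborhoodIndep_le (m d : ℕ) :
    (#{G ∈ regularGraphs (Fin (m + 1)) d | ¬IsLastNeighborhoodIndep G} : ℝ) ≤
      #(regularGraphs (Fin (m + 1)) d) * (m ^ 2 * (36 * d / (m + 1 : ℕ)) ^ 3) := by
  have card_pairs : #({q | q.1 ≠ q.2} : Finset (Fin m × Fin m)) ≤ m ^ 2 :=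
    (card_le_univ _).trans_eq (by rw [Fintype.card_prod, Fintype.card_fin, sq])
  calc (#{G ∈ regularGraphs (Fin (m + 1)) d | ¬IsLastNeighborhoodIndep G} : ℝ)
      ≤ ∑ q : Fin m × Fin m with q.1 ≠ q.2,
          (#(regularGraphsContaining d (lastTriangle q.1 q.2)) : ℝ) := by
        exact_mod_cast (card_le_card (filter_not_isLastNeighborhoodIndep_subset m d)).trans
          card_biUnion_le
    _ ≤ ∑ q : Fin m × Fin m with q.1 ≠ q.2,
          #(regularGraphs (Fin (m + 1)) d) * (36 * d / (m + 1 : ℕ) : ℝ) ^ 3 := by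
        refine sum_le_sum fun q hq => ?_
        have hcard := card_regularGraphsContaining_le d (lastTriangle q.1 q.2)
        rwa [card_lastTriangle (mem_filter.1 hq).2, Fintype.card_fin] at hcard
    _ = #({q | q.1 ≠ q.2} : Finset (Fin m × Fin m)) *
          (#(regularGraphs (Fin (m + 1)) d) * (36 * d / (m + 1 : ℕ) : ℝ) ^ 3) := by
        rw [sum_const, nsmul_eq_mul]
    _ ≤ (m : ℝ) ^ 2 * (#(regularGraphs (Fin (m + 1)) d) * (36 * d / (m + 1 : ℕ) : ℝ) ^ 3) := by
        gcongr
        exact_mod_cast card_pairs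
    _ = _ := by ring

end LastNeighborhood

section Existence

theorem circulantGraph_mem_regularGraphs {A : Type*} [AddCommGroup A] [Fintype A] {s : Finset A}
    (add_ne_zero : ∀ a ∈ s, ∀ b ∈ s, a + b ≠ 0) :
    SimpleGraph.circulantGraph (s : Set A) ∈ regularGraphs A (2 * #s) := by
  refine mem_regularGraphs.2 fun v => ?_
  have neighbors : (SimpleGraph.circulantGraph (s : Set A)).neighborFinset v =
      s.image (v - ·) ∪ s.image (v + ·) := by
    ext w
    have ne_of_mem (a : A) (ha : a ∈ s) : a ≠ 0 := fun h => add_ne_zero a ha a ha (by simp [h])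
    simp only [SimpleGraph.mem_neighborFinset, SimpleGraph.circulantGraph_adj, mem_union,
      mem_image, mem_coe]
    constructor
    · rintro ⟨-, h | h⟩
      · exact Or.inl ⟨_, h, sub_sub_cancel v w⟩
      · exact Or.inr ⟨_, h, add_sub_cancel v w⟩
    · rintro (⟨a, ha, rfl⟩ | ⟨a, ha, rfl⟩)
      · rw [sub_sub_cancel]
        exact ⟨fun h => ne_of_mem a ha (sub_eq_self.1 h.symm), Or.inl ha⟩
      · rw [add_sub_cancel_left]
        exact ⟨fun h => ne_of_mem a ha (add_eq_left.1 h.symm), Or.inr ha⟩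
  have disjoint : Disjoint (s.image (v - ·)) (s.image (v + ·)) := by
    simp only [Finset.disjoint_left, mem_image]
    rintro _ ⟨a, ha, rfl⟩ ⟨b, hb, hab⟩
    exact add_ne_zero a ha b hb (add_eq_zero_iff_eq_neg'.2 (add_left_cancel
      (hab.trans (sub_eq_add_neg v a))))
  rw [← SimpleGraph.card_neighborFinset_eq_degree, neighbors, card_union_of_disjoint disjoint,
    card_image_of_injective _ sub_right_injective,
    card_image_of_injective _ (add_right_injective v), two_mul]

theorem regularGraphs_nonempty {m t : ℕ} (h : 2 * t < m) :
    (regularGraphs (Fin m) (2 * t)).Nonempty := by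
  have : NeZero m := ⟨by omega⟩
  have val_ofNat {a : ℕ} (ha : a ∈ Icc 1 t) : (Fin.ofNat m a).val = a :=
    Nat.mod_eq_of_lt (by have := mem_Icc.1 ha; omega)
  have card_image : #((Icc 1 t).image (Fin.ofNat m)) = t := by
    rw [card_image_of_injOn, Nat.card_Icc, Nat.add_sub_cancel]
    intro a ha b hb hab
    rw [← val_ofNat ha, ← val_ofNat hb]
    exact congrArg Fin.val hab
  rw [← card_image]
  refine ⟨_, circulantGraph_mem_regularGraphs ?_⟩
  simp only [mem_image]
  rintro _ ⟨a, ha, rfl⟩ _ ⟨b, hb, rfl⟩ hab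
  have hval : (a + b) % m = 0 := by
    simpa only [Fin.val_add, val_ofNat ha, val_ofNat hb, Fin.val_zero] using congrArg Fin.val hab
  rw [mem_Icc] at ha hb
  rw [Nat.mod_eq_of_lt (by omega)] at hval
  omega

end Existence

section Outcomes

variable {m t : ℕ}

theorem mem_edgeSet_comap_iff {V W : Type*} (f : V → W) (G : SimpleGraph W) (z : Sym2 V) :
    z ∈ (G.comap f).edgeSet ↔ Sym2.map f z ∈ G.edgeSet := by
  induction z with | _ x y => rfl

theorem exists_perm_extending (σ : Equiv.Perm (Fin m)) : ∃ τ : Equiv.Perm (Fin (m + 1)),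
    (∀ x : Fin m, τ x.castSucc = (σ x).castSucc) ∧ τ (Fin.last m) = Fin.last m :=
  ⟨(finSuccEquivLast.trans (Equiv.optionCongr σ)).trans finSuccEquivLast.symm,
    fun x => by simp, by simp⟩

theorem formsInducedMatching_comap_iff {V : Type*} (σ : Equiv.Perm V) (L : SimpleGraph V)
    (e : Fin t → Sym2 V) :
    FormsInducedMatching (L.comap σ) e ↔
      FormsInducedMatching L fun i => Sym2.map σ (e i) := by
  simp only [FormsInducedMatching, mem_edgeSet_comap_iff, mem_sym2_map_perm]
  refine and_congr Iff.rfl (and_congr ⟨fun h i j hij x => h i j hij _, fun h i j hij x => ?_⟩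
    ⟨fun h u v hu hv huv => ?_, fun h u v hu hv huv => ?_⟩)
  · simpa using h i j hij (σ x)
  · obtain ⟨i, hi⟩ := h (σ.symm u) (σ.symm v) hu hv (by simpa using huv)
    exact ⟨i, by simp [hi]⟩
  · obtain ⟨i, hi⟩ := h (σ u) (σ v) (by simpa using hu) (by simpa using hv) huv
    exact ⟨i, Sym2.map.injective σ.injective hi⟩

theorem mk_opGraphE_comap (σ : Equiv.Perm (Fin m)) (L : SimpleGraph (Fin m))
    (e : Fin t → Sym2 (Fin m)) :
    Quotient.mk (isoSetoid (Fin (m + 1))) (opGraphE (m + 1) (L.comap σ) e) =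
      Quotient.mk (isoSetoid (Fin (m + 1)))
        (opGraphE (m + 1) L fun i => Sym2.map σ (e i)) := by
  obtain ⟨τ, τ_castSucc, τ_last⟩ := exists_perm_extending σ
  refine mk_isoSetoid_eq_iff.2 ⟨τ, graph_eq_of_adj_castSucc (fun x y => ?_) fun x => ?_⟩
  · have mem_range_iff :
        s(σ x, σ y) ∈ Set.range (fun i => Sym2.map σ (e i)) ↔ s(x, y) ∈ Set.range e :=
      exists_congr fun i => (Sym2.map.injective σ.injective).eq_iff (b := s(x, y))
    rw [opGraphE_adj_castSucc_castSucc, SimpleGraph.comap_adj, τ_castSucc, τ_castSucc,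
      opGraphE_adj_castSucc_castSucc, mem_range_iff, SimpleGraph.comap_adj]
  · rw [opGraphE_adj_castSucc_last, SimpleGraph.comap_adj, τ_castSucc, τ_last,
      opGraphE_adj_castSucc_last]
    simp

theorem opVal_comap (σ : Equiv.Perm (Fin m)) (L : SimpleGraph (Fin m))
    (e : Fin t → Sym2 (Fin m)) :
    opVal (m + 1) (L.comap σ) e = opVal (m + 1) L fun i => Sym2.map σ (e i) :=
  if_congr (formsInducedMatching_comap_iff σ L e) (congrArg some (mk_opGraphE_comap σ L e)) rfl

/-- The number of `t`-tuples of edges of the labelled graph `L` on which `op` has outcome `x`. -/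
noncomputable def outcomeCount (t : ℕ) (L : SimpleGraph (Fin m))
    (x : Option (GraphClass (m + 1))) : ℕ :=
  Nat.card {e : Fin t → Sym2 (Fin m) // (∀ i, e i ∈ L.edgeSet) ∧ opVal (m + 1) L e = x}

theorem outcomeCount_comap (σ : Equiv.Perm (Fin m)) (L : SimpleGraph (Fin m))
    (x : Option (GraphClass (m + 1))) :
    outcomeCount t (L.comap σ) x = outcomeCount t L x := by
  refine Nat.card_congr (Equiv.subtypeEquiv (Equiv.arrowCongr (Equiv.refl _) (sym2Perm σ)) ?_)
  intro e
  rw [opVal_comap]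
  simp only [mem_edgeSet_comap_iff]
  rfl

theorem outcomeCount_eq_of_mk_eq {L L' : SimpleGraph (Fin m)}
    (h : Quotient.mk (isoSetoid (Fin m)) L = Quotient.mk (isoSetoid (Fin m)) L')
    (x : Option (GraphClass (m + 1))) : outcomeCount t L x = outcomeCount t L' x := by
  obtain ⟨σ, rfl⟩ := mk_isoSetoid_eq_iff.1 h
  exact outcomeCount_comap σ L' x

theorem sum_outcomeCount (t : ℕ) (L : SimpleGraph (Fin m)) :
    ∑ x, outcomeCount t L x = Nat.card L.edgeSet ^ t := by
  have card_tuples : Nat.card {e : Fin t → Sym2 (Fin m) // ∀ i, e i ∈ L.edgeSet} =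
      Nat.card L.edgeSet ^ t := by
    rw [Nat.card_congr (Equiv.subtypePiEquivPi (p := fun _ z => z ∈ L.edgeSet)), Nat.card_fun,
      Nat.card_fin]
  simp only [outcomeCount]
  rw [← card_tuples, ← Nat.card_sigma]
  refine Nat.card_congr ⟨fun p => ⟨p.2.1, p.2.2.1⟩,
    fun e => ⟨opVal (m + 1) L e.1, ⟨e.1, e.2, rfl⟩⟩, ?_, fun _ => rfl⟩
  rintro ⟨_, e, he, rfl⟩
  rfl

theorem outcomeCount_some (t : ℕ) (L : SimpleGraph (Fin m)) (q : GraphClass (m + 1)) :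
    outcomeCount t L (some q) =
      #{e ∈ inducedMatchings t L |
        Quotient.mk (isoSetoid (Fin (m + 1))) (opGraphE (m + 1) L e) = q} := by
  rw [outcomeCount, Nat.card_eq_fintype_card, Fintype.card_subtype]
  congr 1
  ext e
  simp only [mem_filter, mem_univ, true_and, mem_inducedMatchings]
  unfold opVal
  by_cases h : FormsInducedMatching L e
  · rw [if_pos h]
    exact ⟨fun hq => ⟨h, Option.some.inj hq.2⟩, fun hq => ⟨h.1, congrArg some hq.2⟩⟩
  · rw [if_neg h]
    simp [h]

theorem exists_card_orderedMatchings_eq (m t : ℕ) :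
    ∃ κ, ∀ S : Finset (Fin m), #S = 2 * t → #(orderedMatchings t S) = κ := by
  by_cases h : ∃ S : Finset (Fin m), #S = 2 * t
  · obtain ⟨S, hS⟩ := h
    exact ⟨_, fun T hT => card_orderedMatchings_eq (hT.trans hS.symm)⟩
  · exact ⟨0, fun S hS => absurd ⟨S, hS⟩ h⟩

theorem card_lastNeighbors_of_mem_regularGraphs {d : ℕ} {G : SimpleGraph (Fin (m + 1))}
    (hG : G ∈ regularGraphs (Fin (m + 1)) d) : #(lastNeighbors G) = d := by
  rw [card_lastNeighbors, mem_regularGraphs.1 hG]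

theorem sum_card_inducedMatchings_le {κ : ℕ}
    (hκ : ∀ S : Finset (Fin m), #S = 2 * t → #(orderedMatchings t S) = κ) :
    ∑ L ∈ regularGraphs (Fin m) (2 * t), #(inducedMatchings t L) ≤
      κ * #(regularGraphs (Fin (m + 1)) (2 * t)) := by
  calc ∑ L ∈ regularGraphs (Fin m) (2 * t), #(inducedMatchings t L)
      = #((regularGraphs (Fin m) (2 * t)).sigma fun L => inducedMatchings t L) := by
        rw [card_sigma]
    _ ≤ #((regularGraphs (Fin (m + 1)) (2 * t)).sigma (opFiber t)) := by
        refine card_le_card_of_injOn (fun p => ⟨opGraphE (m + 1) p.1 p.2, (p.1, p.2)⟩) ?_ ?_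
        · rintro ⟨L, e⟩ hp
          obtain ⟨hL, he⟩ := mem_sigma.1 hp
          have he := mem_inducedMatchings.1 he
          exact mem_sigma.2
            ⟨(opGraphE_mem_regularGraphs_iff he).2 hL, mem_opFiber.2 ⟨hL, he, rfl⟩⟩
        · rintro ⟨L, e⟩ _ ⟨L', e'⟩ _ h
          simp only [Sigma.mk.injEq, heq_eq_eq, Prod.mk.injEq] at h
          obtain ⟨-, rfl, rfl⟩ := h
          rfl
    _ = ∑ G ∈ regularGraphs (Fin (m + 1)) (2 * t), #(opFiber t G) := card_sigma _ _
    _ ≤ #(regularGraphs (Fin (m + 1)) (2 * t)) • κ := by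
        refine sum_le_card_nsmul _ _ _ fun G hG => ?_
        rw [← hκ _ (card_lastNeighbors_of_mem_regularGraphs hG)]
        exact card_opFiber_le t G
    _ = κ * #(regularGraphs (Fin (m + 1)) (2 * t)) := by rw [smul_eq_mul, mul_comm]

/-- The labelled `2t`-regular graphs in the isomorphism class `q` whose last vertex has an
independent neighbourhood. -/
noncomputable def indepRepresentatives (t : ℕ) (q : GraphClass (m + 1)) :
    Finset (SimpleGraph (Fin (m + 1))) :=
  {G ∈ regularGraphs (Fin (m + 1)) (2 * t) |
    IsLastNeighborhoodIndep G ∧ Quotient.mk (isoSetoid (Fin (m + 1))) G = q}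

theorem mem_indepRepresentatives {q : GraphClass (m + 1)} {G : SimpleGraph (Fin (m + 1))} :
    G ∈ indepRepresentatives t q ↔ G ∈ regularGraphs (Fin (m + 1)) (2 * t) ∧
      IsLastNeighborhoodIndep G ∧ Quotient.mk (isoSetoid (Fin (m + 1))) G = q :=
  mem_filter

theorem mul_card_indepRepresentatives_le {κ : ℕ}
    (hκ : ∀ S : Finset (Fin m), #S = 2 * t → #(orderedMatchings t S) = κ)
    (q : GraphClass (m + 1)) :
    κ * #(indepRepresentatives t q) ≤
      ∑ L ∈ regularGraphs (Fin m) (2 * t), outcomeCount t L (some q) := by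
  calc κ * #(indepRepresentatives t q) = #(indepRepresentatives t q) • κ := by
        rw [smul_eq_mul, mul_comm]
    _ ≤ ∑ G ∈ indepRepresentatives t q, #(opFiber t G) := by
        refine card_nsmul_le_sum _ _ _ fun G hG => ?_
        obtain ⟨hG, indep, -⟩ := mem_indepRepresentatives.1 hG
        rw [← hκ _ (card_lastNeighbors_of_mem_regularGraphs hG)]
        exact card_orderedMatchings_le_card_opFiber hG indep
    _ = #((indepRepresentatives t q).sigma (opFiber t)) := (card_sigma _ _).symm
    _ ≤ #((regularGraphs (Fin m) (2 * t)).sigma fun L => {e ∈ inducedMatchings t L |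
          Quotient.mk (isoSetoid (Fin (m + 1))) (opGraphE (m + 1) L e) = q}) := by
        refine card_le_card_of_injOn (fun p => ⟨p.2.1, p.2.2⟩) ?_ ?_
        · rintro ⟨G, L, e⟩ hp
          obtain ⟨hG, hp⟩ := mem_sigma.1 hp
          obtain ⟨hL, he, op_eq⟩ := mem_opFiber.1 hp
          exact mem_sigma.2 ⟨hL, mem_filter.2 ⟨mem_inducedMatchings.2 he,
            (congrArg _ op_eq).trans (mem_indepRepresentatives.1 hG).2.2⟩⟩
        · rintro ⟨G, L, e⟩ hp ⟨G', L', e'⟩ hp' h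
          simp only [Sigma.mk.injEq, heq_eq_eq] at h
          obtain ⟨rfl, rfl⟩ := h
          obtain rfl : G = G' := (mem_opFiber.1 (mem_sigma.1 hp).2).2.2.symm.trans
            (mem_opFiber.1 (mem_sigma.1 hp').2).2.2
          rfl
    _ = ∑ L ∈ regularGraphs (Fin m) (2 * t), outcomeCount t L (some q) := by
        rw [card_sigma]
        exact sum_congr rfl fun L _ => (outcomeCount_some t L q).symm

theorem card_indepRepresentatives_mul_sum_inducedMatchings_le (t : ℕ) (q : GraphClass (m + 1)) :
    #(indepRepresentatives t q) *
        ∑ L ∈ regularGraphs (Fin m) (2 * t), #(inducedMatchings t L) ≤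
      #(regularGraphs (Fin (m + 1)) (2 * t)) *
        ∑ L ∈ regularGraphs (Fin m) (2 * t), outcomeCount t L (some q) := by
  obtain ⟨κ, hκ⟩ := exists_card_orderedMatchings_eq m t
  calc #(indepRepresentatives t q) *
        ∑ L ∈ regularGraphs (Fin m) (2 * t), #(inducedMatchings t L)
      ≤ #(indepRepresentatives t q) * (κ * #(regularGraphs (Fin (m + 1)) (2 * t))) :=
        Nat.mul_le_mul_left _ (sum_card_inducedMatchings_le hκ)
    _ = #(regularGraphs (Fin (m + 1)) (2 * t)) * (κ * #(indepRepresentatives t q)) := by ring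
    _ ≤ _ := Nat.mul_le_mul_left _ (mul_card_indepRepresentatives_le hκ q)

end Outcomes

section TotalVariation

theorem half_sum_abs_sub_le_one_sub_sum {Ω : Type*} [Fintype Ω] {μ η l : Ω → ℝ}
    (hμ : ∀ x, l x ≤ μ x) (hη : ∀ x, l x ≤ η x) (sum_μ : ∑ x, μ x = 1) (sum_η : ∑ x, η x = 1) :
    (1 / 2 : ℝ) * ∑ x, |μ x - η x| ≤ 1 - ∑ x, l x := by
  have pointwise : ∑ x, |μ x - η x| ≤ ∑ x, (μ x + η x - 2 * l x) :=
    sum_le_sum fun x _ => abs_le.2 ⟨by linarith [hμ x, hη x], by linarith [hμ x, hη x]⟩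
  rw [sum_sub_distrib, sum_add_distrib, sum_μ, sum_η, ← mul_sum] at pointwise
  linarith

theorem card_isRegClass_pos {n d : ℕ} (nonempty : (regularGraphs (Fin n) d).Nonempty) :
    0 < Nat.card {q : GraphClass n // IsRegClass q d} := by
  obtain ⟨G, hG⟩ := nonempty
  exact Nat.card_pos_iff.2 ⟨⟨⟨_, isRegClass_mk_iff.2 hG⟩⟩, inferInstance⟩

theorem sum_muD {n d : ℕ} (nonempty : (regularGraphs (Fin n) d).Nonempty) :
    ∑ x, muD n d x = 1 := by
  have card_ne_zero : (Nat.card {q : GraphClass n // IsRegClass q d} : ℝ) ≠ 0 :=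
    Nat.cast_ne_zero.2 (card_isRegClass_pos nonempty).ne'
  rw [Fintype.sum_option]
  simp only [muD]
  rw [← sum_filter, sum_const, nsmul_eq_mul, zero_add, ← Fintype.card_subtype,
    ← Nat.card_eq_fintype_card, mul_inv_cancel₀ card_ne_zero]

variable {m t : ℕ}

theorem card_edgeSet_of_mem_regularGraphs {L : SimpleGraph (Fin m)}
    (hL : L ∈ regularGraphs (Fin m) (2 * t)) : Nat.card L.edgeSet = m * t := by
  have handshake := two_mul_card_edgeSet hL
  rw [Fintype.card_fin] at handshake
  linarith

section Representatives

variable {d : ℕ} {rep : {q : GraphClass m // IsRegClass q d} → SimpleGraph (Fin m)}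

theorem rep_mem_regularGraphs
    (hrep : ∀ q, Quotient.mk (isoSetoid (Fin m)) (rep q) = q.1)
    (q : {q : GraphClass m // IsRegClass q d}) :
    rep q ∈ regularGraphs (Fin m) d := by
  rw [← isRegClass_mk_iff, hrep]
  exact q.2

theorem sum_outcomeCount_regularGraphs_le
    (hrep : ∀ q, Quotient.mk (isoSetoid (Fin m)) (rep q) = q.1)
    (t : ℕ) (x : Option (GraphClass (m + 1))) :
    ∑ L ∈ regularGraphs (Fin m) d, outcomeCount t L x ≤
      m.factorial * ∑ q, outcomeCount t (rep q) x := by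
  let toClass (L : regularGraphs (Fin m) d) : {q : GraphClass m // IsRegClass q d} :=
    ⟨Quotient.mk _ L.1, isRegClass_mk_iff.2 L.2⟩
  have card_fiber (q) : #{L | toClass L = q} ≤ m.factorial := by
    refine (card_le_card_of_injOn Subtype.val (fun L hL => ?_) fun L _ L' _ h =>
      Subtype.ext h).trans (card_filter_mk_eq_le q.1)
    exact mem_filter.2 ⟨mem_univ _, congrArg Subtype.val (mem_filter.1 hL).2⟩
  rw [← sum_coe_sort, ← sum_fiberwise_of_maps_to (t := univ) (g := toClass)
    (fun _ _ => mem_univ _), mul_sum]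
  refine sum_le_sum fun q _ => ?_
  calc ∑ L with toClass L = q, outcomeCount t L.1 x
      = ∑ L with toClass L = q, outcomeCount t (rep q) x := by
        refine sum_congr rfl fun L hL => outcomeCount_eq_of_mk_eq ?_ x
        rw [hrep, ← (mem_filter.1 hL).2]
    _ ≤ m.factorial * outcomeCount t (rep q) x := by
        rw [sum_const, smul_eq_mul]
        exact Nat.mul_le_mul_right _ (card_fiber q)

end Representatives

variable {rep : {q : GraphClass m // IsRegClass q (2 * t)} → SimpleGraph (Fin m)}

theorem etaD_eq
    (hrep : ∀ q, Quotient.mk (isoSetoid (Fin m)) (rep q) = q.1)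
    (x : Option (GraphClass (m + 1))) :
    etaD (m + 1) (2 * t) rep x =
      (∑ q, (outcomeCount t (rep q) x : ℝ)) /
        (Nat.card {q : GraphClass m // IsRegClass q (2 * t)} * (m * t : ℝ) ^ t) := by
  have half : 2 * t / 2 = t := Nat.mul_div_cancel_left t two_pos
  have eq_finsum : etaD (m + 1) (2 * t) rep x =
      (Nat.card {q : GraphClass m // IsRegClass q (2 * t)} : ℝ)⁻¹ *
        ∑ᶠ q, (outcomeCount t (rep q) x : ℝ) / (Nat.card (rep q).edgeSet : ℝ) ^ t := by
    unfold etaD outcomeCount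
    rw [half]
    rfl
  have card_edges (q) : (Nat.card (rep q).edgeSet : ℝ) = m * t := by
    exact_mod_cast card_edgeSet_of_mem_regularGraphs (rep_mem_regularGraphs hrep q)
  simp only [eq_finsum, card_edges]
  rw [finsum_eq_sum_of_fintype, ← sum_div, div_eq_inv_mul, div_eq_inv_mul, mul_inv, mul_assoc]

theorem sum_etaD
    (hrep : ∀ q, Quotient.mk (isoSetoid (Fin m)) (rep q) = q.1)
    (ht : 0 < t) (htm : 2 * t < m) : ∑ x, etaD (m + 1) (2 * t) rep x = 1 := by
  have classes_pos : (0 : ℝ) < Nat.card {q : GraphClass m // IsRegClass q (2 * t)} :=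
    Nat.cast_pos.2 (card_isRegClass_pos (regularGraphs_nonempty htm))
  have tuples_pos : 0 < (m * t : ℝ) ^ t := by
    have : 0 < m := by omega
    positivity
  have sum_outcomes (q) : ∑ x, (outcomeCount t (rep q) x : ℝ) = (m * t : ℝ) ^ t := by
    have total := sum_outcomeCount t (rep q)
    rw [card_edgeSet_of_mem_regularGraphs (rep_mem_regularGraphs hrep q)] at total
    exact_mod_cast total
  simp only [etaD_eq hrep]
  rw [← sum_div, sum_comm, sum_congr rfl fun q _ => sum_outcomes q, sum_const, card_univ,
    nsmul_eq_mul, ← Nat.card_eq_fintype_card]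
  exact div_self (mul_pos classes_pos tuples_pos).ne'

end TotalVariation

section CommonMinorant

variable {m t : ℕ}

/-- The measure giving the isomorphism class `q` a mass `c` times the proportion, among all
labelled `2t`-regular graphs, of the representatives of `q` whose last vertex has an independent
neighbourhood. For suitable `c` it lies below both `muD` and `etaD`. -/
noncomputable def commonMinorant (t : ℕ) (c : ℝ) : Option (GraphClass (m + 1)) → ℝ
  | none => 0
  | some q => c * #(indepRepresentatives t q) / #(regularGraphs (Fin (m + 1)) (2 * t))

theorem card_regularGraphs_pos (htm : 2 * t < m) :
    (0 : ℝ) < #(regularGraphs (Fin m) (2 * t)) :=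
  Nat.cast_pos.2 (regularGraphs_nonempty htm).card_pos

theorem card_indepRepresentatives_le (t : ℕ) (q : GraphClass (m + 1)) :
    #(indepRepresentatives t q) ≤ (m + 1).factorial :=
  (card_le_card fun _ hG => mem_filter.2
    ⟨mem_univ _, (mem_indepRepresentatives.1 hG).2.2⟩).trans (card_filter_mk_eq_le q)

theorem indepRepresentatives_eq_empty {q : GraphClass (m + 1)} (hq : ¬IsRegClass q (2 * t)) :
    indepRepresentatives t q = ∅ := by
  refine eq_empty_of_forall_notMem fun G hG => hq ?_
  obtain ⟨regular, -, rfl⟩ := mem_indepRepresentatives.1 hG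
  exact isRegClass_mk_iff.2 regular

theorem commonMinorant_le_muD {c δ : ℝ} (htm : 2 * t < m + 1) (hδ : 0 ≤ δ) (hc : c ≤ 1 / (1 + δ))
    (few_classes : Nat.card {q : GraphClass (m + 1) // IsRegClass q (2 * t)} *
      ((m + 1).factorial : ℝ) ≤ #(regularGraphs (Fin (m + 1)) (2 * t)) * (1 + δ))
    (x : Option (GraphClass (m + 1))) : commonMinorant t c x ≤ muD (m + 1) (2 * t) x := by
  rcases x with _ | q
  · exact le_rfl
  simp only [commonMinorant, muD]
  split_ifs with hq
  · have classes_pos : (0 : ℝ) < Nat.card {q : GraphClass (m + 1) // IsRegClass q (2 * t)} :=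
      Nat.cast_pos.2 (card_isRegClass_pos (regularGraphs_nonempty htm))
    have card_le : (#(indepRepresentatives t q) : ℝ) ≤ (m + 1).factorial :=
      Nat.cast_le.2 (card_indepRepresentatives_le t q)
    rw [div_le_iff₀ (card_regularGraphs_pos htm), inv_mul_eq_div, le_div_iff₀ classes_pos]
    set U : ℝ := (Nat.card {q : GraphClass (m + 1) // IsRegClass q (2 * t)} : ℝ)
    calc c * #(indepRepresentatives t q) * U
        ≤ 1 / (1 + δ) * (m + 1).factorial * U := by gcongr
      _ = U * (m + 1).factorial / (1 + δ) := by ring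
      _ ≤ #(regularGraphs (Fin (m + 1)) (2 * t)) := (div_le_iff₀ (by positivity)).2 few_classes
  · simp [indepRepresentatives_eq_empty hq]

theorem le_sum_commonMinorant {c δ : ℝ} (hc : 0 ≤ c) (htm : 2 * t < m + 1)
    (few_dependent : (#{G ∈ regularGraphs (Fin (m + 1)) (2 * t) |
      ¬IsLastNeighborhoodIndep G} : ℝ) ≤ #(regularGraphs (Fin (m + 1)) (2 * t)) * δ) :
    c * (1 - δ) ≤ ∑ x : Option (GraphClass (m + 1)), commonMinorant t c x := by
  have sum_card : ∑ q : GraphClass (m + 1), #(indepRepresentatives t q) =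
      #{G ∈ regularGraphs (Fin (m + 1)) (2 * t) | IsLastNeighborhoodIndep G} := by
    let toClass : SimpleGraph (Fin (m + 1)) → GraphClass (m + 1) := Quotient.mk _
    rw [card_eq_sum_card_fiberwise (f := toClass) (t := univ) fun _ _ => mem_coe.2 (mem_univ _)]
    refine sum_congr rfl fun q _ => ?_
    rw [filter_filter]
    rfl
  have split : (#{G ∈ regularGraphs (Fin (m + 1)) (2 * t) | IsLastNeighborhoodIndep G} : ℝ) +
      #{G ∈ regularGraphs (Fin (m + 1)) (2 * t) | ¬IsLastNeighborhoodIndep G} =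
      #(regularGraphs (Fin (m + 1)) (2 * t)) := by
    exact_mod_cast card_filter_add_card_filter_not IsLastNeighborhoodIndep
  rw [Fintype.sum_option]
  simp only [commonMinorant]
  rw [zero_add, ← sum_div, ← mul_sum, ← Nat.cast_sum, sum_card,
    le_div_iff₀ (card_regularGraphs_pos htm), mul_assoc]
  gcongr
  linarith

theorem le_sum_card_inducedMatchings {ε : ℝ}
    (many_matchings : ∀ L ∈ regularGraphs (Fin m) (2 * t),
      (1 - ε) * (m * t : ℝ) ^ t ≤ #(inducedMatchings t L)) :
    #(regularGraphs (Fin m) (2 * t)) * ((1 - ε) * (m * t : ℝ) ^ t) ≤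
      ((∑ L ∈ regularGraphs (Fin m) (2 * t), #(inducedMatchings t L) : ℕ) : ℝ) := by
  rw [← nsmul_eq_mul, Nat.cast_sum]
  exact card_nsmul_le_sum _ _ _ many_matchings

variable {rep : {q : GraphClass m // IsRegClass q (2 * t)} → SimpleGraph (Fin m)}

theorem card_indepRepresentatives_mul_le {δ ε : ℝ}
    (hrep : ∀ q, Quotient.mk (isoSetoid (Fin m)) (rep q) = q.1)
    (htm : 2 * t < m)
    (few_classes : Nat.card {q : GraphClass m // IsRegClass q (2 * t)} *
      (m.factorial : ℝ) ≤ #(regularGraphs (Fin m) (2 * t)) * (1 + δ))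
    (many_matchings : ∀ L ∈ regularGraphs (Fin m) (2 * t),
      (1 - ε) * (m * t : ℝ) ^ t ≤ #(inducedMatchings t L))
    (q : GraphClass (m + 1)) :
    (1 - ε) * #(indepRepresentatives t q) *
        (Nat.card {q : GraphClass m // IsRegClass q (2 * t)} * (m * t : ℝ) ^ t) ≤
      (1 + δ) * #(regularGraphs (Fin (m + 1)) (2 * t)) *
        ∑ q', (outcomeCount t (rep q') (some q) : ℝ) := by
  have double_count : (#(indepRepresentatives t q) : ℝ) *
      ((∑ L ∈ regularGraphs (Fin m) (2 * t), #(inducedMatchings t L) : ℕ) : ℝ) ≤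
      #(regularGraphs (Fin (m + 1)) (2 * t)) *
        (m.factorial * ∑ q', (outcomeCount t (rep q') (some q) : ℝ)) := by
    exact_mod_cast (card_indepRepresentatives_mul_sum_inducedMatchings_le t q).trans
      (Nat.mul_le_mul_left _ (sum_outcomeCount_regularGraphs_le hrep t (some q)))
  have weighted := (mul_le_mul_of_nonneg_left (le_sum_card_inducedMatchings many_matchings)
    (Nat.cast_nonneg _)).trans double_count
  refine le_of_mul_le_mul_left ?_ (card_regularGraphs_pos htm)
  set U : ℝ := (Nat.card {q : GraphClass m // IsRegClass q (2 * t)} : ℝ)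
  set R : ℝ := (#(regularGraphs (Fin m) (2 * t)) : ℝ)
  set R' : ℝ := (#(regularGraphs (Fin (m + 1)) (2 * t)) : ℝ)
  set a : ℝ := (#(indepRepresentatives t q) : ℝ)
  set F : ℝ := ∑ q', (outcomeCount t (rep q') (some q) : ℝ)
  calc R * ((1 - ε) * a * (U * (m * t : ℝ) ^ t))
      = U * (a * (R * ((1 - ε) * (m * t : ℝ) ^ t))) := by ring
    _ ≤ U * (R' * (m.factorial * F)) := mul_le_mul_of_nonneg_left weighted (by positivity)
    _ = R' * F * (U * m.factorial) := by ring
    _ ≤ R' * F * (R * (1 + δ)) := by gcongr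
    _ = R * ((1 + δ) * R' * F) := by ring

theorem commonMinorant_le_etaD {δ ε : ℝ}
    (hrep : ∀ q, Quotient.mk (isoSetoid (Fin m)) (rep q) = q.1)
    (ht : 0 < t) (htm : 2 * t < m) (hδ : 0 ≤ δ)
    (few_classes : Nat.card {q : GraphClass m // IsRegClass q (2 * t)} *
      (m.factorial : ℝ) ≤ #(regularGraphs (Fin m) (2 * t)) * (1 + δ))
    (many_matchings : ∀ L ∈ regularGraphs (Fin m) (2 * t),
      (1 - ε) * (m * t : ℝ) ^ t ≤ #(inducedMatchings t L))
    (x : Option (GraphClass (m + 1))) :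
    commonMinorant t ((1 - ε) / (1 + δ)) x ≤ etaD (m + 1) (2 * t) rep x := by
  rw [etaD_eq hrep]
  rcases x with _ | q
  · exact div_nonneg (sum_nonneg fun _ _ => Nat.cast_nonneg _) (by positivity)
  have classes_pos : (0 : ℝ) < Nat.card {q : GraphClass m // IsRegClass q (2 * t)} :=
    Nat.cast_pos.2 (card_isRegClass_pos (regularGraphs_nonempty htm))
  have tuples_pos : 0 < (m * t : ℝ) ^ t := by
    have : 0 < m := by omega
    positivity
  have card_pos : (0 : ℝ) < #(regularGraphs (Fin (m + 1)) (2 * t)) :=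
    card_regularGraphs_pos (htm.trans m.lt_succ_self)
  have bound := card_indepRepresentatives_mul_le hrep htm few_classes many_matchings q
  rw [commonMinorant, div_mul_eq_mul_div, div_div, div_le_div_iff₀ (by positivity) (by positivity)]
  exact bound.trans_eq (mul_comm _ _)

theorem totalVariation_le {δ ε ε' : ℝ}
    (hrep : ∀ q, Quotient.mk (isoSetoid (Fin m)) (rep q) = q.1)
    (ht : 0 < t) (htm : 2 * t < m) (hδ : 0 ≤ δ)
    (ε_nonneg : 0 ≤ ε) (ε_le_one : ε ≤ 1)
    (few_classes : Nat.card {q : GraphClass m // IsRegClass q (2 * t)} *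
      (m.factorial : ℝ) ≤ #(regularGraphs (Fin m) (2 * t)) * (1 + δ))
    (few_classes_succ : Nat.card {q : GraphClass (m + 1) // IsRegClass q (2 * t)} *
      ((m + 1).factorial : ℝ) ≤ #(regularGraphs (Fin (m + 1)) (2 * t)) * (1 + δ))
    (many_matchings : ∀ L ∈ regularGraphs (Fin m) (2 * t),
      (1 - ε) * (m * t : ℝ) ^ t ≤ #(inducedMatchings t L))
    (few_dependent : (#{G ∈ regularGraphs (Fin (m + 1)) (2 * t) |
      ¬IsLastNeighborhoodIndep G} : ℝ) ≤ #(regularGraphs (Fin (m + 1)) (2 * t)) * ε') :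
    (1 / 2 : ℝ) * ∑ᶠ x, |muD (m + 1) (2 * t) x - etaD (m + 1) (2 * t) rep x| ≤
      1 - (1 - ε) / (1 + δ) * (1 - ε') := by
  have htm' : 2 * t < m + 1 := htm.trans m.lt_succ_self
  have c_nonneg : 0 ≤ (1 - ε) / (1 + δ) := div_nonneg (by linarith) (by linarith)
  have c_le : (1 - ε) / (1 + δ) ≤ 1 / (1 + δ) := by
    gcongr
    linarith
  rw [finsum_eq_sum_of_fintype]
  refine (half_sum_abs_sub_le_one_sub_sum
    (commonMinorant_le_muD htm' hδ c_le few_classes_succ)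
    (commonMinorant_le_etaD hrep ht htm hδ few_classes many_matchings)
    (sum_muD (regularGraphs_nonempty htm')) (sum_etaD hrep ht htm)).trans ?_
  exact sub_le_sub_left (le_sum_commonMinorant c_nonneg htm' few_dependent) 1

end CommonMinorant

section SparseRegime

theorem div_le_rpow_neg_of_le_rpow {a x : ℝ} (hx : 0 < x) (h : a ≤ x ^ (1 / 100 : ℝ)) :
    a / x ≤ x ^ (-(99 / 100) : ℝ) := by
  calc a / x ≤ x ^ (1 / 100 : ℝ) / x := by gcongr
    _ = x ^ (-(99 / 100) : ℝ) := by
        rw [← Real.rpow_sub_one hx.ne']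
        norm_num

theorem card_isRegClass_mul_factorial_le_of_sparse {n d : ℕ} (hd : 4 ≤ d)
    (sparse : 36 * (d : ℝ) ≤ (n : ℝ) ^ (1 / 100 : ℝ))
    (large : Real.exp 3 * (n : ℝ) ^ (-(8 / 100) : ℝ) ≤ 1 / 2) :
    Nat.card {q : GraphClass n // IsRegClass q d} * (n.factorial : ℝ) ≤
      #(regularGraphs (Fin n) d) * (1 + automorphismError n) := by
  have n_ne_zero : n ≠ 0 := by
    rintro rfl
    have : (4 : ℝ) ≤ d := by exact_mod_cast hd
    norm_num at sparse
    linarith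
  have : NeZero n := ⟨n_ne_zero⟩
  have sum_fixed := sum_card_fixedRegularGraphs_le (V := Fin n) hd
    (by
      rw [Fintype.card_fin]
      exact div_le_rpow_neg_of_le_rpow (by positivity) sparse)
    (by rwa [Fintype.card_fin])
  rw [Fintype.card_fin] at sum_fixed
  exact le_trans (by exact_mod_cast card_isRegClass_mul_factorial_le n d) sum_fixed

variable {m t : ℕ}

theorem le_card_inducedMatchings_of_mem_regularGraphs (hm : 0 < m) (ht : 0 < t)
    {L : SimpleGraph (Fin m)} (hL : L ∈ regularGraphs (Fin m) (2 * t)) :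
    (1 - 2 * ((2 * t : ℕ) : ℝ) ^ 3 / m) * (m * t : ℝ) ^ t ≤ #(inducedMatchings t L) := by
  have card_edges := card_edgeSet_of_mem_regularGraphs hL
  have nonempty : L.edgeSet.Nonempty := by
    rw [← Set.ncard_pos, ← Nat.card_coe_set_eq, card_edges]
    exact Nat.mul_pos hm ht
  have one_le_t : (1 : ℝ) ≤ t := by exact_mod_cast ht
  have error_le : (t : ℝ) ^ 2 * (2 * (((2 * t : ℕ) + 1) * (2 * t : ℕ))) / (m * t : ℕ) ≤
      2 * ((2 * t : ℕ) : ℝ) ^ 3 / m := by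
    push_cast
    rw [div_le_div_iff₀ (by positivity) (by positivity)]
    have : 0 ≤ (t : ℝ) ^ 3 * m * (2 * t - 1) := mul_nonneg (by positivity) (by linarith)
    linear_combination 4 * this
  have bound := le_card_inducedMatchings t hL nonempty
  rw [card_edges] at bound
  refine le_trans ?_ bound
  push_cast at error_le ⊢
  gcongr

theorem card_not_isLastNeighborhoodIndep_le_of_pos (hm : 0 < m) (d : ℕ) :
    (#{G ∈ regularGraphs (Fin (m + 1)) d | ¬IsLastNeighborhoodIndep G} : ℝ) ≤
      #(regularGraphs (Fin (m + 1)) d) * (46656 * (d : ℝ) ^ 3 / m) := by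
  refine (card_not_isLastNeighborhoodIndep_le m d).trans ?_
  gcongr
  calc (m : ℝ) ^ 2 * (36 * d / (m + 1 : ℕ)) ^ 3 ≤ (m : ℝ) ^ 2 * (36 * d / m) ^ 3 := by
        gcongr
        exact m.le_succ
    _ = 46656 * (d : ℝ) ^ 3 / m := by
        field_simp
        norm_num [mul_comm]

theorem two_mul_pow_three_div_le_one {d x : ℝ} (hd : 0 ≤ d) (hx : 1 ≤ x)
    (sparse : 36 * d ≤ x ^ (1 / 100 : ℝ)) : 2 * d ^ 3 / x ≤ 1 := by
  rw [div_le_one (by positivity)]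
  calc 2 * d ^ 3 ≤ (36 * d) ^ 3 := by nlinarith [pow_nonneg hd 3]
    _ ≤ (x ^ (1 / 100 : ℝ)) ^ 3 := by gcongr
    _ = x ^ (3 / 100 : ℝ) := by
        rw [← Real.rpow_mul_natCast (by positivity)]
        norm_num
    _ ≤ x := Real.rpow_le_self_of_one_le hx (by norm_num)

theorem automorphismError_nonneg {N : ℝ} (hN : 0 ≤ N) : 0 ≤ automorphismError N := by
  unfold automorphismError
  positivity

theorem totalVariation_le_of_sparse (ht : 2 ≤ t)
    (sparse : 36 * ((2 * t : ℕ) : ℝ) ≤ (m : ℝ) ^ (1 / 100 : ℝ))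
    (large : Real.exp 3 * (m : ℝ) ^ (-(8 / 100) : ℝ) ≤ 1 / 2) (one_le : 1 ≤ m)
    {rep : {q : GraphClass m // IsRegClass q (2 * t)} → SimpleGraph (Fin m)}
    (hrep : ∀ q, Quotient.mk (isoSetoid (Fin m)) (rep q) = q.1) :
    (1 / 2 : ℝ) * ∑ᶠ x, |muD (m + 1) (2 * t) x - etaD (m + 1) (2 * t) rep x| ≤
      1 - (1 - 2 * ((2 * t : ℕ) : ℝ) ^ 3 / m) /
        (1 + (automorphismError m + automorphismError (m + 1 : ℕ))) *
        (1 - 46656 * ((2 * t : ℕ) : ℝ) ^ 3 / m) := by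
  have one_le_cast : (1 : ℝ) ≤ m := by exact_mod_cast one_le
  have error_nonneg := automorphismError_nonneg (Nat.cast_nonneg m)
  have error_succ_nonneg := automorphismError_nonneg (Nat.cast_nonneg (m + 1))
  have t_pos : 0 < t := by omega
  have four_le : 4 ≤ 2 * t := by omega
  have htm : 2 * t < m := by
    have : (m : ℝ) ^ (1 / 100 : ℝ) ≤ m := Real.rpow_le_self_of_one_le one_le_cast (by norm_num)
    have : (0 : ℝ) < (2 * t : ℕ) := by positivity
    exact_mod_cast (by linarith : ((2 * t : ℕ) : ℝ) < m)
  have le_succ : (m : ℝ) ≤ (m + 1 : ℕ) := Nat.cast_le.2 m.le_succ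
  have sparse_succ : 36 * ((2 * t : ℕ) : ℝ) ≤ ((m + 1 : ℕ) : ℝ) ^ (1 / 100 : ℝ) :=
    sparse.trans (Real.rpow_le_rpow (by positivity) le_succ (by norm_num))
  have large_succ : Real.exp 3 * ((m + 1 : ℕ) : ℝ) ^ (-(8 / 100) : ℝ) ≤ 1 / 2 :=
    (mul_le_mul_of_nonneg_left (Real.rpow_le_rpow_of_nonpos (by positivity) le_succ
      (by norm_num)) (by positivity)).trans large
  refine totalVariation_le hrep t_pos htm (by positivity) (by positivity)
    (two_mul_pow_three_div_le_one (by positivity) one_le_cast sparse) ?_ ?_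
    (fun L hL => le_card_inducedMatchings_of_mem_regularGraphs one_le t_pos hL)
    (card_not_isLastNeighborhoodIndep_le_of_pos one_le (2 * t))
  · refine (card_isRegClass_mul_factorial_le_of_sparse four_le sparse large).trans ?_
    gcongr
    linarith
  · refine (card_isRegClass_mul_factorial_le_of_sparse four_le sparse_succ large_succ).trans ?_
    gcongr
    linarith

end SparseRegime

section Limits

open Filter Asymptotics

theorem tendsto_automorphismError : Tendsto automorphismError atTop (nhds 0) := by
  have power_term : Tendsto (fun N : ℝ => 2 * (Real.exp 3 * N ^ (-(8 / 100) : ℝ))) atTop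
      (nhds 0) := by
    simpa using ((tendsto_rpow_neg_atTop (y := 8 / 100) (by norm_num)).const_mul
      (Real.exp 3)).const_mul 2
  have log_term : Tendsto (fun N : ℝ => Real.exp 6 - 1 / 20 * Real.log N) atTop atBot := by
    simpa only [sub_eq_add_neg, Function.comp_def] using
      tendsto_atBot_add_const_left atTop (Real.exp 6) (tendsto_neg_atTop_atBot.comp
        (Real.tendsto_log_atTop.const_mul_atTop (r := 1 / 20) (by norm_num)))
  have exponent : Tendsto (fun N : ℝ => Real.exp 6 * N ^ (9 / 10 : ℝ) -
      1 / 20 * N ^ (9 / 10 : ℝ) * Real.log N) atTop atBot :=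
    ((tendsto_rpow_atTop (y := 9 / 10) (by norm_num)).atTop_mul_atBot₀ log_term).congr
      fun N => by ring
  have limit := power_term.add (Real.tendsto_exp_comp_nhds_zero.2 exponent)
  rw [add_zero] at limit
  exact limit

theorem isLittleO_succ_of_isLittleO_rpow {f : ℕ → ℝ} {a : ℝ} (ha : 0 ≤ a)
    (hf : f =o[atTop] fun n : ℕ => (n : ℝ) ^ a) :
    (fun m => f (m + 1)) =o[atTop] fun m : ℕ => (m : ℝ) ^ a := by
  have succ_isBigO : (fun m : ℕ => ((m + 1 : ℕ) : ℝ)) =O[atTop] fun m : ℕ => (m : ℝ) := by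
    refine IsBigO.of_bound 2 ((eventually_ge_atTop 1).mono fun m hm => ?_)
    have : (1 : ℝ) ≤ m := by exact_mod_cast hm
    rw [Real.norm_natCast, Real.norm_natCast]
    push_cast
    linarith
  exact (hf.comp_tendsto (tendsto_add_atTop_nat 1)).trans_isBigO
    (succ_isBigO.rpow ha (Eventually.of_forall fun m => Nat.cast_nonneg m))

theorem tendsto_pow_three_div_of_isLittleO_rpow {f : ℕ → ℝ}
    (hf : f =o[atTop] fun m : ℕ => (m : ℝ) ^ (1 / 100 : ℝ)) :
    Tendsto (fun m => f m ^ 3 / m) atTop (nhds 0) := by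
  refine ((hf.pow three_pos).trans_isBigO (IsBigO.of_bound 1 ?_)).tendsto_div_nhds_zero
  refine (eventually_ge_atTop 1).mono fun m hm => ?_
  have one_le : (1 : ℝ) ≤ m := by exact_mod_cast hm
  rw [Real.norm_of_nonneg (by positivity), Real.norm_natCast, one_mul,
    ← Real.rpow_mul_natCast (by positivity)]
  exact Real.rpow_le_self_of_one_le one_le (by norm_num)

theorem eventually_exp_three_mul_rpow_le :
    ∀ᶠ x : ℝ in atTop, Real.exp 3 * x ^ (-(8 / 100) : ℝ) ≤ 1 / 2 := by
  have limit := (tendsto_rpow_neg_atTop (y := 8 / 100) (by norm_num)).const_mul (Real.exp 3)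
  rw [mul_zero] at limit
  exact limit.eventually_le_const (by norm_num)

theorem tendsto_totalVariationBound {f : ℕ → ℝ}
    (hf : f =o[atTop] fun m : ℕ => (m : ℝ) ^ (1 / 100 : ℝ)) :
    Tendsto (fun m : ℕ => 1 - (1 - 2 * f m ^ 3 / m) /
      (1 + (automorphismError m + automorphismError (m + 1 : ℕ))) *
      (1 - 46656 * f m ^ 3 / m)) atTop (nhds 0) := by
  have cube := tendsto_pow_three_div_of_isLittleO_rpow hf
  have automorphisms : Tendsto (fun m : ℕ => automorphismError m +
      automorphismError (m + 1 : ℕ)) atTop (nhds 0) := by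
    have along_nat := tendsto_automorphismError.comp tendsto_natCast_atTop_atTop
    simpa using along_nat.add (along_nat.comp (tendsto_add_atTop_nat 1))
  have limit := ((((cube.const_mul 2).const_sub 1).div (automorphisms.const_add 1)
    (by norm_num)).mul ((cube.const_mul 46656).const_sub 1)).const_sub 1
  simpa [mul_div_assoc] using limit

theorem isLittleO_rpow_of_eventually_le_log_sq {f : ℕ → ℝ} {a : ℝ} (ha : 0 < a)
    (hf : ∀ᶠ n : ℕ in atTop, |f n| ≤ Real.log n ^ 2) :
    f =o[atTop] fun n : ℕ => (n : ℝ) ^ a := by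
  have log_sq : (fun n : ℕ => Real.log n ^ 2) =o[atTop] fun n : ℕ => (n : ℝ) ^ a := by
    simpa [Function.comp_def] using
      (isLittleO_log_rpow_rpow_atTop 2 ha).comp_tendsto tendsto_natCast_atTop_atTop
  refine (IsBigO.of_bound 1 (hf.mono fun n hn => ?_)).trans_isLittleO log_sq
  rwa [one_mul, Real.norm_eq_abs, Real.norm_of_nonneg (sq_nonneg _)]

theorem eventually_totalVariation_le (d : ℕ → ℕ)
    (hd : ∀ᶠ n in atTop, Even (d n) ∧ 4 ≤ d n)
    (sparse : (fun n => (d n : ℝ)) =o[atTop] fun n : ℕ => (n : ℝ) ^ (1 / 100 : ℝ))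
    (rep : (n : ℕ) →
      {q : GraphClass (n - 1) // IsRegClass q (d n)} → SimpleGraph (Fin (n - 1)))
    (hrep : ∀ n q, Quotient.mk (isoSetoid (Fin (n - 1))) (rep n q) = q.1) :
    ∀ᶠ m : ℕ in atTop, (1 / 2 : ℝ) * ∑ᶠ x : Option (GraphClass (m + 1)),
        |muD (m + 1) (d (m + 1)) x - etaD (m + 1) (d (m + 1)) (rep (m + 1)) x| ≤
      1 - (1 - 2 * (d (m + 1) : ℝ) ^ 3 / m) /
        (1 + (automorphismError m + automorphismError (m + 1 : ℕ))) *
        (1 - 46656 * (d (m + 1) : ℝ) ^ 3 / m) := by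
  filter_upwards [(tendsto_add_atTop_nat 1).eventually hd,
    (isLittleO_succ_of_isLittleO_rpow (by norm_num) sparse).bound
      (show (0 : ℝ) < 1 / 36 by norm_num),
    tendsto_natCast_atTop_atTop.eventually eventually_exp_three_mul_rpow_le,
    eventually_ge_atTop 1] with m ⟨even, four_le⟩ sparse_m large one_le
  rw [Real.norm_natCast, Real.norm_of_nonneg (by positivity)] at sparse_m
  obtain ⟨t, ht⟩ := even.two_dvd
  have hrep_m := hrep (m + 1)
  generalize rep (m + 1) = rep_m at hrep_m ⊢
  generalize d (m + 1) = d_m at *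
  subst ht
  exact totalVariation_le_of_sparse (by omega) (by linarith) large one_le hrep_m

end Limits

end

theorem stmt16_general (d : ℕ → ℕ) (hd : ∀ᶠ n in Filter.atTop, Even (d n) ∧ 4 ≤ d n)
    (sparse : (fun n => (d n : ℝ)) =o[Filter.atTop] fun n : ℕ => (n : ℝ) ^ (1 / 100 : ℝ))
    (rep : (n : ℕ) →
      {q : GraphClass (n - 1) // IsRegClass q (d n)} → SimpleGraph (Fin (n - 1)))
    (hrep : ∀ n q, Quotient.mk (isoSetoid (Fin (n - 1))) (rep n q) = q.1) :
    Filter.Tendsto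
      (fun n : ℕ => (1 / 2 : ℝ) *
        ∑ᶠ x : Option (GraphClass n), |muD n (d n) x - etaD n (d n) (rep n) x|)
      Filter.atTop (nhds 0) := by
  rw [← Filter.tendsto_add_atTop_iff_nat 1]
  have sparse_succ := isLittleO_succ_of_isLittleO_rpow (by norm_num) sparse
  refine squeeze_zero' (Filter.Eventually.of_forall fun m => ?_)
    (eventually_totalVariation_le d hd sparse rep hrep) (tendsto_totalVariationBound sparse_succ)
  exact mul_nonneg (by norm_num) (finsum_nonneg fun _ => abs_nonneg _)

/-- For odd `n → ∞` and even `4 ≤ d(n) ≤ (log n)²`, the total variation distance between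
`μ_d` (uniform on isomorphism classes of `d`-regular graphs on `n` vertices, with null
outcome `L_∅` of probability `0`) and `η_d` (the distribution of `op(L,S)`) tends to
`0`; here `rep` is an arbitrary fixed choice of labelled representatives. -/
theorem stmt16 (d : ℕ → ℕ) (hde : ∀ n, Even (d n))
    (hd : ∀ᶠ n : ℕ in Filter.atTop, 4 ≤ d n ∧ (d n : ℝ) ≤ (Real.log n) ^ 2)
    (rep : (n : ℕ) →
      {q : GraphClass (n - 1) // IsRegClass q (d n)} → SimpleGraph (Fin (n - 1)))
    (hrep : ∀ n q, Quotient.mk (isoSetoid (Fin (n - 1))) (rep n q) = q.1) :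
    Filter.Tendsto
      (fun n : ℕ => (1 / 2 : ℝ) *
        ∑ᶠ x : Option (GraphClass n), |muD n (d n) x - etaD n (d n) (rep n) x|)
      (Filter.atTop ⊓ Filter.principal {n : ℕ | Odd n}) (nhds 0) := by
  have sparse := isLittleO_rpow_of_eventually_le_log_sq (f := fun n => d n) (a := 1 / 100)
    (by norm_num) (hd.mono fun n hn => by simpa using hn.2)
  exact (stmt16_general d (hd.mono fun n hn => ⟨hde n, hn.1⟩) sparse rep hrep).mono_left
    inf_le_left
end

section
/- Let n be odd, let d be an even integer with 4 ≤ d ≤ n-2, let L be a d-regular graph on n-1 vertices, let M be an induced d-matching of L, let r be a vertex of L, and let t ≥ 1. If L admits t strong independent spanning trees rooted at r with respect to M, then the d-regular graph op(L, M) on n vertices admits t independent spanning trees rooted at r. -/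
open Filter

/-- The spanning trees `T 0, …, T (t-1)` of `G` are independent spanning trees rooted at `r`:
each `T i` is a spanning tree of `G` (a tree on the whole vertex set, all of whose edges lie
in `G`), and for every vertex `v ≠ r`, the paths from `v` to `r` in any two distinct trees
share only the vertices `v` and `r`. -/
def IsIST {n : ℕ} (G : SimpleGraph (Fin n)) (r : Fin n) {t : ℕ}
    (T : Fin t → SimpleGraph (Fin n)) : Prop :=
  (∀ i, T i ≤ G ∧ (T i).IsTree) ∧
  ∀ v : Fin n, v ≠ r → ∀ i j : Fin t, i ≠ j →
    ∀ p : (T i).Walk v r, ∀ q : (T j).Walk v r, p.IsPath → q.IsPath →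
      ∀ x : Fin n, x ∈ p.support → x ∈ q.support → x = v ∨ x = r

/-- `G` contains (at least) `t` independent spanning trees rooted at `r`. -/
def HasISTs {n : ℕ} (G : SimpleGraph (Fin n)) (r : Fin n) (t : ℕ) : Prop :=
  ∃ T : Fin t → SimpleGraph (Fin n), IsIST G r T

/-- `M` is an induced `d`-matching of `L`: a subgraph of `L` in which every vertex has at
most one neighbour, consisting of `d/2` edges (hence spanning `d` vertices), and such
that the subgraph of `L` induced on the spanned vertices consists exactly of these
edges. -/
def IsInducedMatching {n : ℕ} (L M : SimpleGraph (Fin n)) (d : ℕ) : Prop :=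
  M ≤ L ∧
  (∀ v w x : Fin n, M.Adj v w → M.Adj v x → w = x) ∧
  Nat.card M.edgeSet = d / 2 ∧
  (∀ u v : Fin n, u ∈ M.support → v ∈ M.support → L.Adj u v → M.Adj u v)

/-- `L` admits `t` strong independent spanning trees rooted at `r` with respect to the
induced matching `M`: there are ISTs `T_1,…,T_t` of `L` rooted at `r` such that (P1) no
edge of any `T_i` lies in `M`, and (P2) for all distinct `i, j` and all `u, v ∈ V(M)`,
the paths from `u` to `r` in `T_i` and from `v` to `r` in `T_j` intersect exactly in
`{u, r}` if `u = v`, and exactly in `{r}` if `u ≠ v`. -/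
def HasStrongISTs {n : ℕ} (L M : SimpleGraph (Fin n)) (r : Fin n) (t : ℕ) : Prop :=
  ∃ T : Fin t → SimpleGraph (Fin n),
    IsIST L r T ∧
    (∀ i, Disjoint (T i) M) ∧
    (∀ i j : Fin t, i ≠ j → ∀ u v : Fin n, u ∈ M.support → v ∈ M.support →
      ∀ p : (T i).Walk u r, ∀ q : (T j).Walk v r, p.IsPath → q.IsPath →
        {x : Fin n | x ∈ p.support ∧ x ∈ q.support} =
          (if u = v then ({u, r} : Set (Fin n)) else {r}))

/-- The operation `op`: given a graph `L` on `n-1` vertices and a matching `M ⊆ L`, delete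
the edges of `M` from `L`, add the new vertex `⟨n-1⟩`, and join it to every vertex covered
by `M`.  Vertices of `L` are embedded into `Fin n` via `Fin.castLE`. -/
noncomputable def opGraphM (n : ℕ) (L M : SimpleGraph (Fin (n - 1))) :
    SimpleGraph (Fin n) :=
  if h : 1 ≤ n then
    SimpleGraph.fromEdgeSet
      ((Sym2.map (Fin.castLE (Nat.sub_le n 1))) '' (L.edgeSet \ M.edgeSet) ∪
       {f : Sym2 (Fin n) | ∃ x : Fin (n - 1), x ∈ M.support ∧
          f = s(Fin.castLE (Nat.sub_le n 1) x, (⟨n - 1, by omega⟩ : Fin n))})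
  else ⊥

/-!
A leaf attached to a tree `T i` at a vertex covered by `M` does not alter the paths between old
vertices, so in `op(L, M)` only the paths from the new vertex have to be checked. If the leaf is
attached to the trees at pairwise distinct covered vertices `u i`, property (P2) says that these
paths meet only at both ends. Hence the construction works as soon as `M` covers at least `t`
vertices.

Since `n` is odd and `d` is even, `d ≤ n - 2` forces `d + 1 < n - 1`, so the root has a
non-neighbour `v ≠ r`. The `t` paths from `v` to `r` enter `r` through distinct neighbours, and
therefore `t ≤ d`, the number of vertices covered by `M`.
-/

open SimpleGraph

section AttachLeaf

variable {V W : Type*} {T : SimpleGraph V} {e : V ↪ W} {w : W} {u : V}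

theorem isAcyclic_map (e : V ↪ W) (hT : T.IsAcyclic) : (T.map e).IsAcyclic := by
  rw [isAcyclic_iff_forall_adj_isBridge] at hT ⊢
  rintro _ _ ⟨-, a, b, hab, rfl, rfl⟩
  have : Nonempty V := ⟨a⟩
  have hinv : Function.LeftInverse (Function.invFun e) e := Function.leftInverse_invFun e.injective
  -- A detour around a copied edge would retract to a detour around the original one.
  let retract : (T.map e).deleteEdges {s(e a, e b)} →g T.deleteEdges {s(a, b)} :=
    { toFun := Function.invFun e
      map_rel' := by
        rintro _ _ h
        obtain ⟨⟨-, x, y, hxy, rfl, rfl⟩, hne⟩ := deleteEdges_adj.1 h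
        rw [hinv, hinv, deleteEdges_adj]
        exact ⟨hxy, fun heq => hne (congrArg (Sym2.map e) heq)⟩ }
  rw [isBridge_iff]
  intro hreach
  have hreach' := hreach.map retract
  rw [show retract (e a) = a from hinv a, show retract (e b) = b from hinv b] at hreach'
  exact isBridge_iff.1 (hT hab) hreach'

/-- The graph on `W` obtained from `T` by renaming its vertices along `e` and joining `w` to the
copy of `u`. For `w` outside the range of `e`, this attaches the leaf `w` to `T` at `u`; it is how
a spanning tree of `L` is extended to the new vertex of `op(L, M)`. -/
def attachLeaf (T : SimpleGraph V) (e : V ↪ W) (w : W) (u : V) : SimpleGraph W :=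
  T.map e ⊔ edge w (e u)

namespace attachLeaf

/-- The copy of `T` inside `attachLeaf T e w u`. -/
def hom (T : SimpleGraph V) (e : V ↪ W) (w : W) (u : V) : T →g attachLeaf T e w u :=
  (Hom.ofLE le_sup_left).comp (Embedding.map e T).toHom

theorem exists_isPath_lift (w : W) (u : V) {a b : V} {q : T.Walk a b} (hq : q.IsPath) :
    ∃ p : (attachLeaf T e w u).Walk (e a) (e b), p.IsPath ∧ p.support = q.support.map e :=
  ⟨q.map (hom T e w u), hq.map e.injective, q.support_map _⟩

theorem adj_leaf (hw : w ∉ Set.range e) : (attachLeaf T e w u).Adj w (e u) :=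
  Or.inr <| (edge_adj ..).2 ⟨Or.inl ⟨rfl, rfl⟩, fun h => hw ⟨u, h.symm⟩⟩

theorem isAcyclic (hw : w ∉ Set.range e) (hT : T.IsAcyclic) : (attachLeaf T e w u).IsAcyclic := by
  refine IsAcyclic.sup_edge_of_not_reachable ?_ (isAcyclic_map e hT)
  refine not_reachable_of_neighborSet_left_eq_empty (fun h => hw ⟨u, h.symm⟩) ?_
  refine Set.eq_empty_of_forall_notMem ?_
  rintro _ ⟨-, a, -, -, h, -⟩
  exact hw ⟨a, h⟩

theorem connected (hw : Set.range e = {w}ᶜ) (hT : T.Connected) :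
    (attachLeaf T e w u).Connected := by
  refine connected_iff_exists_forall_reachable _ |>.2 ⟨e u, fun y => ?_⟩
  by_cases hy : y = w
  · subst hy
    exact (adj_leaf (by simp [hw])).reachable.symm
  · obtain ⟨x, rfl⟩ : y ∈ Set.range e := by simpa [hw] using hy
    exact (hT.preconnected u x).map (hom T e w u)

theorem isTree (hw : Set.range e = {w}ᶜ) (hT : T.IsTree) : (attachLeaf T e w u).IsTree :=
  ⟨connected hw hT.connected, isAcyclic (by simp [hw]) hT.isAcyclic⟩

theorem exists_isPath_support_eq_map (hw : w ∉ Set.range e) (hT : T.IsTree) {a b : V}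
    {p : (attachLeaf T e w u).Walk (e a) (e b)} (hp : p.IsPath) :
    ∃ q : T.Walk a b, q.IsPath ∧ p.support = q.support.map e := by
  obtain ⟨q, hq⟩ := hT.connected.exists_isPath a b
  obtain ⟨p', hp', hsupport⟩ := exists_isPath_lift (e := e) w u hq
  obtain rfl : p = p' := congrArg Subtype.val <|
    ((isAcyclic hw hT.isAcyclic).subsingleton_path _ _).elim ⟨p, hp⟩ ⟨p', hp'⟩
  exact ⟨q, hq, hsupport⟩

theorem exists_isPath_support_eq_cons_map (hw : w ∉ Set.range e) (hT : T.IsTree) {b : V}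
    {p : (attachLeaf T e w u).Walk w (e b)} (hp : p.IsPath) :
    ∃ q : T.Walk u b, q.IsPath ∧ p.support = w :: q.support.map e := by
  obtain ⟨q, hq⟩ := hT.connected.exists_isPath u b
  obtain ⟨p', hp', hsupport⟩ := exists_isPath_lift (e := e) w u hq
  have hleaf : w ∉ p'.support := by
    rw [hsupport, List.mem_map]
    rintro ⟨y, -, hy⟩
    exact hw ⟨y, hy⟩
  obtain rfl : p = p'.cons (adj_leaf hw) := congrArg Subtype.val <|
    ((isAcyclic hw hT.isAcyclic).subsingleton_path _ _).elim ⟨p, hp⟩ ⟨_, hp'.cons hleaf⟩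
  exact ⟨q, hq, by rw [Walk.support_cons, hsupport]⟩

end attachLeaf

end AttachLeaf

theorem IsIST.attachLeaf {m n t : ℕ} {L : SimpleGraph (Fin m)} {G : SimpleGraph (Fin n)}
    {r : Fin m} {T : Fin t → SimpleGraph (Fin m)} (hT : IsIST L r T)
    {e : Fin m ↪ Fin n} {w : Fin n} (hw : Set.range e = {w}ᶜ) {u : Fin t → Fin m}
    (hle : ∀ i, attachLeaf (T i) e w (u i) ≤ G)
    (hu : ∀ i j, i ≠ j → ∀ (p : (T i).Walk (u i) r) (q : (T j).Walk (u j) r),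
      p.IsPath → q.IsPath → ∀ x, x ∈ p.support → x ∈ q.support → x = r) :
    IsIST G (e r) fun i => attachLeaf (T i) e w (u i) := by
  have hw' : w ∉ Set.range e := by simp [hw]
  refine ⟨fun i => ⟨hle i, attachLeaf.isTree hw (hT.1 i).2⟩, ?_⟩
  intro v hv i j hij p q hp hq x hxp hxq
  by_cases hvw : v = w
  · subst hvw
    obtain ⟨p', hp', hps⟩ := attachLeaf.exists_isPath_support_eq_cons_map hw' (hT.1 i).2 hp
    obtain ⟨q', hq', hqs⟩ := attachLeaf.exists_isPath_support_eq_cons_map hw' (hT.1 j).2 hq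
    rw [hps, List.mem_cons, List.mem_map] at hxp
    rw [hqs, List.mem_cons, List.mem_map] at hxq
    obtain rfl | ⟨y, hyp, rfl⟩ := hxp
    · exact Or.inl rfl
    obtain hy | ⟨z, hzq, hzy⟩ := hxq
    · exact Or.inl hy
    obtain rfl := e.injective hzy
    exact Or.inr (congrArg e (hu i j hij p' q' hp' hq' z hyp hzq))
  · obtain ⟨a, rfl⟩ : v ∈ Set.range e := by simpa [hw] using hvw
    obtain ⟨p', hp', hps⟩ := attachLeaf.exists_isPath_support_eq_map hw' (hT.1 i).2 hp
    obtain ⟨q', hq', hqs⟩ := attachLeaf.exists_isPath_support_eq_map hw' (hT.1 j).2 hq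
    obtain ⟨y, hyp, rfl⟩ := List.mem_map.1 (hps ▸ hxp)
    obtain ⟨z, hzq, hzy⟩ := List.mem_map.1 (hqs ▸ hxq)
    obtain rfl := e.injective hzy
    have har : a ≠ r := fun h => hv (congrArg e h)
    exact (hT.2 a har i j hij p' q' hp' hq' z hyp hzq).imp (congrArg e) (congrArg e)

section Degree

variable {V : Type*} {G : SimpleGraph V} {r v : V}

theorem exists_ne_not_adj_of_card_lt (h : Nat.card (G.neighborSet r) + 1 < Nat.card V) :
    ∃ v, v ≠ r ∧ ¬ G.Adj v r := by
  have : Finite V := Nat.finite_of_card_ne_zero (by omega)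
  by_contra! hadj
  have hcover : (Set.univ : Set V) ⊆ insert r (G.neighborSet r) := fun x _ =>
    or_iff_not_imp_left.2 fun hx => (hadj x hx).symm
  have hcard := (Set.ncard_le_ncard hcover).trans (Set.ncard_insert_le _ _)
  rw [Set.ncard_univ, ← Nat.card_coe_set_eq] at hcard
  omega

theorem injective_penultimate_of_internally_disjoint {ι : Type*} (hvr : v ≠ r)
    (hadj : ¬ G.Adj v r) (p : ι → G.Walk v r)
    (hdisj : ∀ i j, i ≠ j → ∀ x, x ∈ (p i).support → x ∈ (p j).support → x = v ∨ x = r) :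
    Function.Injective fun i => (p i).penultimate := by
  intro i j hij
  by_contra hne
  have hlast : G.Adj (p i).penultimate r := (p i).adj_penultimate (Walk.not_nil_of_ne hvr)
  have hmem : (p i).penultimate ∈ (p j).support := by
    rw [show (p i).penultimate = (p j).penultimate from hij]
    exact (p j).getVert_mem_support _
  rcases hdisj i j hne _ ((p i).getVert_mem_support _) hmem with h | h
  · exact hadj (h ▸ hlast)
  · exact hlast.ne h

theorem ncard_support_eq_two_mul_card_edgeSet [Finite V] {M : SimpleGraph V}
    (hM : ∀ v w x, M.Adj v w → M.Adj v x → w = x) :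
    M.support.ncard = 2 * Nat.card M.edgeSet := by
  classical
  have := Fintype.ofFinite V
  have hdegree : ∀ v ∈ M.support.toFinset, M.degree v = 1 := by
    intro v hv
    obtain ⟨w, hvw⟩ := M.mem_support.1 (Set.mem_toFinset.1 hv)
    exact degree_eq_one_iff_existsUnique_adj.2 ⟨w, hvw, fun x hvx => hM v x w hvx hvw⟩
  calc M.support.ncard = ∑ v ∈ M.support, M.degree v := by
        rw [Finset.sum_congr rfl hdegree, Finset.sum_const, smul_eq_mul, mul_one,
          Set.ncard_eq_toFinset_card']
    _ = 2 * Nat.card M.edgeSet := by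
        rw [M.sum_degrees_support_eq_twice_card_edges, edgeFinset_card, Nat.card_eq_fintype_card]

end Degree

theorem IsInducedMatching.ncard_support {m d : ℕ} {L M : SimpleGraph (Fin m)}
    (hM : IsInducedMatching L M d) (hd : Even d) : M.support.ncard = d := by
  obtain ⟨-, hmatching, hcard, -⟩ := hM
  rw [ncard_support_eq_two_mul_card_edgeSet hmatching, hcard, Nat.two_mul_div_two_of_even hd]

theorem HasISTs.le_card_neighborSet {m t : ℕ} {G : SimpleGraph (Fin m)} {r : Fin m}
    (h : HasISTs G r t) (hr : Nat.card (G.neighborSet r) + 1 < m) :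
    t ≤ Nat.card (G.neighborSet r) := by
  obtain ⟨T, hT, hdisj⟩ := h
  obtain ⟨v, hvr, hadj⟩ := exists_ne_not_adj_of_card_lt (G := G) (r := r) (by simpa using hr)
  choose p hp using fun i => (hT i).2.connected.exists_isPath v r
  have hinj := injective_penultimate_of_internally_disjoint hvr hadj
    (fun i => (p i).mapLe (hT i).1) fun i j hij x => by
      simpa using hdisj v hvr i j hij _ _ (hp i) (hp j) x
  let lastNeighbor : Fin t → G.neighborSet r := fun i =>
    ⟨((p i).mapLe (hT i).1).penultimate, (Walk.adj_penultimate (Walk.not_nil_of_ne hvr)).symm⟩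
  have hlast : Function.Injective lastNeighbor := fun i j hij => hinj (congrArg Subtype.val hij)
  simpa using Nat.card_le_card_of_injective lastNeighbor hlast

theorem HasStrongISTs.hasISTs {m t : ℕ} {L M : SimpleGraph (Fin m)} {r : Fin m}
    (h : HasStrongISTs L M r t) : HasISTs L r t :=
  h.imp fun _ hT => hT.1

theorem range_castLEEmb_sub_one {n : ℕ} (hn : n - 1 < n) :
    Set.range (Fin.castLEEmb (Nat.sub_le n 1)) = {⟨n - 1, hn⟩}ᶜ := by
  ext x
  refine ⟨?_, fun hx => ⟨⟨x, ?_⟩, rfl⟩⟩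
  · rintro ⟨y, rfl⟩ h
    exact y.isLt.ne (congrArg Fin.val h)
  · have hne : (x : ℕ) ≠ n - 1 := fun h => hx (Fin.ext h)
    omega

theorem attachLeaf_le_opGraphM {n : ℕ} {L M T : SimpleGraph (Fin (n - 1))} (hn : n - 1 < n)
    (hTL : T ≤ L) (hTM : Disjoint T M) {u : Fin (n - 1)} (hu : u ∈ M.support) :
    attachLeaf T (Fin.castLEEmb (Nat.sub_le n 1)) ⟨n - 1, hn⟩ u ≤ opGraphM n L M := by
  intro a b hab
  rw [opGraphM, dif_pos (by omega), fromEdgeSet_adj]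
  refine ⟨?_, hab.ne⟩
  rcases hab with ⟨-, x, y, hxy, rfl, rfl⟩ | hleaf
  · exact Or.inl ⟨s(x, y), ⟨hTL hxy, disjoint_left.1 hTM x y hxy⟩, rfl⟩
  · refine Or.inr ⟨u, hu, ?_⟩
    rcases ((edge_adj ..).1 hleaf).1 with ⟨rfl, rfl⟩ | ⟨rfl, rfl⟩
    · exact Sym2.eq_swap
    · rfl

theorem stmt17_general (n : ℕ) (L M : SimpleGraph (Fin (n - 1))) (r : Fin (n - 1)) (t : ℕ)
    (ht : t ≤ M.support.ncard) (hstrong : HasStrongISTs L M r t) :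
    HasISTs (opGraphM n L M) (Fin.castLE (Nat.sub_le n 1) r) t := by
  obtain ⟨T, hT, hTM, hdisj⟩ := hstrong
  have hn : n - 1 < n := by have := r.pos; omega
  obtain ⟨u⟩ : Nonempty (Fin t ↪ M.support) := by
    classical
    rw [Function.Embedding.nonempty_iff_card_le, Fintype.card_fin, ← Nat.card_eq_fintype_card]
    exact ht
  refine ⟨_, hT.attachLeaf (u := fun i => u i) (range_castLEEmb_sub_one hn)
    (fun i => attachLeaf_le_opGraphM hn (hT.1 i).1 (hTM i) (u i).2) ?_⟩
  intro i j hij p q hp hq x hxp hxq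
  have hne : (u i : Fin (n - 1)) ≠ u j := fun h => hij (u.injective (Subtype.ext h))
  have hmeet := hdisj i j hij _ _ (u i).2 (u j).2 p q hp hq
  rw [if_neg hne] at hmeet
  exact hmeet.subset ⟨hxp, hxq⟩

/-- If `L` is a `d`-regular graph on `n-1` vertices (`n` odd, `d` even,
`4 ≤ d ≤ n-2`) admitting `t ≥ 1` strong ISTs rooted at `r` with respect to an induced
`d`-matching `M`, then the `d`-regular graph `op(L,M)` on `n` vertices admits `t` ISTs
rooted at `r`. -/
theorem stmt17 (n d : ℕ) (hodd : Odd n) (hde : Even d) (hd4 : 4 ≤ d) (hdn : d ≤ n - 2)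
    (L M : SimpleGraph (Fin (n - 1)))
    (hreg : ∀ v, Nat.card (L.neighborSet v) = d)
    (hM : IsInducedMatching L M d)
    (r : Fin (n - 1)) (t : ℕ) (ht : 1 ≤ t)
    (hstrong : HasStrongISTs L M r t) :
    HasISTs (opGraphM n L M) (Fin.castLE (Nat.sub_le n 1) r) t := by
  have hlt : d + 1 < n - 1 := by grind
  have htd : t ≤ d := hreg r ▸ hstrong.hasISTs.le_card_neighborSet (hreg r ▸ hlt)
  exact stmt17_general n L M r t (htd.trans_eq (hM.ncard_support hde).symm) hstrong
end
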